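/- Suppose a real random variable X with E|X| = ∞ is transient and satisfies condition (Ha), i.e., A(x)/(xH(x)) → ∞ and (Hb): ∫^∞ H(t)/A²(t) dt < ∞, and F is non-arithmetic. Then with r₊(x) = ∫ₓ^∞ (1-F(t))/A²(t) dt, the renewal measure U of the walk satisfies U(x, x+h]/h = r₊(x)(1 + o(1)) as x → +∞, for each h > 0. -/

import Mathlib

/-!
The proof is Fourier-analytic. Let `φ` be the characteristic function of `μ` and let
`k_a(y) = (1 - cos ay)/(ay²) ≥ 0` be the Fejér-type kernel `∫₀^a (1 - θ/a) cos(θy) dθ`. Fourier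
inversion of `∑ rⁿ E k_a(S_n - x)` followed by `r ↑ 1` gives (`green_kf`)

  `∫ k_a(y - x) U(dy) = W_a(x) := ∫₀^a (1 - θ/a) Re[e^{-iθx} / (1 - φ(θ))] dθ`.

Transience makes `Re 1/(1 - φ)` integrable at `0`, and `A → ∞` removes a possible atom there.

Asymptotics of `W_a(x)` as `x → ∞`. By (Ha), `A` is slowly varying with Potter bounds
(`ratio_bounds`), and `1 - φ(θ) ~ -iθA(1/θ)` as `θ ↓ 0` (`charFun_near_zero`). Put
`M(x) = ∫ₓ^∞ H/A²` and `κ = ∫₀^∞ (1 - cos u)/u² du`.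
* Frequencies above `B/x` contribute `O(B^{-1/4})/A(x)`: shifting `θ` by `π/x` flips the sign of
  `e^{-iθx}`, so only the increments of `1/(1 - φ)` matter (`high_freq`).
* The sine part of the frequencies below `B/x` is `~ A(x)⁻¹ ∫₀^B sin u/u du` (`L2`), and the Dirichlet
  integral tends to `κ` (`sinc_lim`).
* The cosine part of those frequencies is `~ κ M(x)`: the integral of
  `E[1 - cos θX]/(θA(1/θ))²` over `(0, 1/x)` equals `E Φ_x(X)`, where `Φ_x(y)` is comparable with
  `κ ∫_x^{|y|} A⁻²`, whose expectation is `κ M(x)` (`Q_integral`, `L1`).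

Since `E|X| = ∞`, integrating the derivative `-K/A²` of `1/A` gives `r₊ = (M + 1/A)/2` and
`1/A ≤ M` (`Af_facts`), so `W_a(x) ~ 2κ r₊(x)` for every `a` (`W_lim`), where `2κ = ∫ k_a`.

Finally `r₊` is asymptotically constant on bounded windows (`rPlus_shift`), and for large `a` the
indicator of an interval is squeezed between smoothings of slightly larger and slightly smaller
indicators by `k_a/(2κ)`, up to small errors (`le_smooth`, `smooth_le`), which transfers the asymptotics to intervals.
-/

open MeasureTheory Filter Set Asymptotics Topology

/-- Tail of a distribution: `1 - F(x) = P[X > x]`. -/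
noncomputable def tailF (μ : Measure ℝ) (x : ℝ) : ℝ := (μ (Set.Ioi x)).toReal

/-- A function is slowly varying at infinity. -/
def SlowlyVarying (f : ℝ → ℝ) : Prop :=
  (∀ᶠ x in atTop, 0 < f x) ∧
    ∀ c : ℝ, 1 < c → Tendsto (fun x => f (c * x) / f x) atTop (𝓝 1)

/-- Two-sided tail `H(x) = P[|X| > x] = 1 - F(x) + F(-x-0)`. -/
noncomputable def Hf (μ : Measure ℝ) (x : ℝ) : ℝ := (μ {y : ℝ | x < |y|}).toReal

/-- `K(x) = P[X > x] - P[X < -x] = 1 - F(x) - F(-x-0)`. -/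
noncomputable def Kf (μ : Measure ℝ) (x : ℝ) : ℝ :=
  (μ (Set.Ioi x)).toReal - (μ (Set.Iio (-x))).toReal

/-- `A(x) = ∫₀ˣ K(t) dt`. -/
noncomputable def Af (μ : Measure ℝ) (x : ℝ) : ℝ := ∫ t in (0:ℝ)..x, Kf μ t

/-- `ℓ(x) = ∫₀ˣ H(t) dt`. -/
noncomputable def ellH (μ : Measure ℝ) (x : ℝ) : ℝ := ∫ t in (0:ℝ)..x, Hf μ t

/-- `m(x)`, defined by `1/m(x) = ∫ₓ^∞ H(t)/A²(t) dt`. -/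
noncomputable def mF (μ : Measure ℝ) (x : ℝ) : ℝ :=
  (∫ t in Set.Ioi x, Hf μ t / (Af μ t) ^ 2)⁻¹

/-- `r₊(x) = ∫ₓ^∞ (1-F(t))/A²(t) dt`. -/
noncomputable def rPlus (μ : Measure ℝ) (x : ℝ) : ℝ :=
  ∫ t in Set.Ioi x, tailF μ t / (Af μ t) ^ 2

/-- `r₋(x) = ∫ₓ^∞ F(-t)/A²(t) dt`. -/
noncomputable def rMinus (μ : Measure ℝ) (x : ℝ) : ℝ :=
  ∫ t in Set.Ioi x, (μ (Set.Iio (-t))).toReal / (Af μ t) ^ 2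

/-- Condition (Ha): `A(x)/(x H(x)) → ∞`, i.e. positive relative stability. -/
def HaCond (μ : Measure ℝ) : Prop :=
  Tendsto (fun x => Af μ x / (x * Hf μ x)) atTop atTop

/-- Condition (Hb): `∫_{x₀}^∞ H(x)/A²(x) dx < ∞` for some `x₀ > 0`
with `A` positive on `[x₀, ∞)`. -/
def HbCond (μ : Measure ℝ) : Prop :=
  ∃ x₀ : ℝ, 0 < x₀ ∧ (∀ x ≥ x₀, 0 < Af μ x) ∧
    IntegrableOn (fun x => Hf μ x / (Af μ x) ^ 2) (Set.Ioi x₀)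

/-- `X` is arithmetic: `X/h ∈ ℤ` almost surely for some `h > 0`. -/
def IsArith (μ : Measure ℝ) : Prop :=
  ∃ h : ℝ, 0 < h ∧ μ {x : ℝ | ∃ n : ℤ, x = n * h} = 1

/-- Characteristic function `φ(θ) = E[e^{iθX}]`. -/
noncomputable def charF (μ : Measure ℝ) (θ : ℝ) : ℂ :=
  ∫ x, Complex.exp (Complex.I * θ * x) ∂μ

/-- `n`-fold convolution power of `μ`: the law of `S_n`. -/
noncomputable def convPow (μ : Measure ℝ) : ℕ → Measure ℝ
  | 0 => Measure.dirac 0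
  | n + 1 => Measure.map (fun p : ℝ × ℝ => p.1 + p.2) ((convPow μ n).prod μ)

/-- The renewal (Green) measure `U{I} = Σ_{n≥0} P[S_n ∈ I]`. -/
noncomputable def renewal (μ : Measure ℝ) (s : Set ℝ) : ENNReal :=
  ∑' n : ℕ, convPow μ n s

/-! ### Tails, the function `A`, and Potter bounds -/

theorem tail_rcont (μ : Measure ℝ) [IsProbabilityMeasure μ] (x : ℝ) :
    ContinuousWithinAt (fun t => (μ (Ioi t)).toReal) (Ici x) x := by
  have h : ∀ t, (μ (Ioi t)).toReal = 1 - ProbabilityTheory.cdf μ t := by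
    intro t
    rw [ProbabilityTheory.cdf_eq_real]
    have := probReal_compl_eq_one_sub (μ := μ) (measurableSet_Iic (a := t))
    rw [compl_Iic] at this
    exact this
  simp_rw [h]
  exact continuousWithinAt_const.sub ((ProbabilityTheory.cdf μ).right_continuous x)

theorem Iio_neg_eq (μ : Measure ℝ) (t : ℝ) :
    μ (Iio (-t)) = (μ.map (fun y => -y)) (Ioi t) := by
  rw [Measure.map_apply measurable_neg measurableSet_Ioi]
  congr 1
  ext y
  simp

theorem Iio_rcont (μ : Measure ℝ) [IsProbabilityMeasure μ] (x : ℝ) :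
    ContinuousWithinAt (fun t => (μ (Iio (-t))).toReal) (Ici x) x := by
  simp_rw [Iio_neg_eq]
  have : IsProbabilityMeasure (μ.map (fun y : ℝ => -y)) :=
    Measure.isProbabilityMeasure_map measurable_neg.aemeasurable
  exact tail_rcont _ x

theorem Kf_rcont (μ : Measure ℝ) [IsProbabilityMeasure μ] (x : ℝ) :
    ContinuousWithinAt (Kf μ) (Ici x) x :=
  (tail_rcont μ x).sub (Iio_rcont μ x)

theorem tail_anti (μ : Measure ℝ) [IsProbabilityMeasure μ] :
    Antitone (fun t => (μ (Ioi t)).toReal) := fun _ _ h =>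
  ENNReal.toReal_mono (measure_ne_top _ _) (measure_mono (Ioi_subset_Ioi h))

theorem Iio_anti (μ : Measure ℝ) [IsProbabilityMeasure μ] :
    Antitone (fun t => (μ (Iio (-t))).toReal) := fun _ _ h =>
  ENNReal.toReal_mono (measure_ne_top _ _) (measure_mono (Iio_subset_Iio (neg_le_neg h)))

theorem Hf_anti (μ : Measure ℝ) [IsProbabilityMeasure μ] : Antitone (Hf μ) := fun _ _ h =>
  ENNReal.toReal_mono (measure_ne_top _ _) (measure_mono fun _ hy => lt_of_le_of_lt h hy)

theorem Hf_nonneg (μ : Measure ℝ) (x : ℝ) : 0 ≤ Hf μ x := ENNReal.toReal_nonneg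

theorem Hf_le_one (μ : Measure ℝ) [IsProbabilityMeasure μ] (x : ℝ) : Hf μ x ≤ 1 :=
  measureReal_le_one

theorem Hf_eq (μ : Measure ℝ) [IsProbabilityMeasure μ] {x : ℝ} (hx : 0 ≤ x) :
    Hf μ x = (μ (Ioi x)).toReal + (μ (Iio (-x))).toReal := by
  unfold Hf
  rw [← ENNReal.toReal_add (measure_ne_top _ _) (measure_ne_top _ _),
    ← measure_union _ measurableSet_Iio]
  · congr 2
    ext y
    simp only [mem_ofPred_eq, mem_union, mem_Ioi, mem_Iio, lt_abs, lt_neg]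
  · rw [Set.disjoint_left]
    intro y h1 h2
    simp only [mem_Ioi, mem_Iio] at h1 h2
    linarith

theorem Kf_abs_le (μ : Measure ℝ) [IsProbabilityMeasure μ] {x : ℝ} (hx : 0 ≤ x) :
    |Kf μ x| ≤ Hf μ x := by
  rw [Hf_eq μ hx, Kf]
  refine (abs_sub _ _).trans ?_
  rw [abs_of_nonneg ENNReal.toReal_nonneg, abs_of_nonneg ENNReal.toReal_nonneg]

theorem tailF_eq (μ : Measure ℝ) [IsProbabilityMeasure μ] {x : ℝ} (hx : 0 ≤ x) :
    tailF μ x = (Hf μ x + Kf μ x) / 2 := by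
  rw [Hf_eq μ hx, Kf, tailF]; ring

theorem Hf_meas (μ : Measure ℝ) [IsProbabilityMeasure μ] : Measurable (Hf μ) :=
  (Hf_anti μ).measurable

theorem Kf_meas (μ : Measure ℝ) [IsProbabilityMeasure μ] : Measurable (Kf μ) :=
  (tail_anti μ).measurable.sub (Iio_anti μ).measurable

theorem Kf_ii (μ : Measure ℝ) [IsProbabilityMeasure μ] (a b : ℝ) :
    IntervalIntegrable (Kf μ) volume a b :=
  ((tail_anti μ).intervalIntegrable).sub ((Iio_anti μ).intervalIntegrable)

theorem Af_cont (μ : Measure ℝ) [IsProbabilityMeasure μ] : Continuous (Af μ) :=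
  intervalIntegral.continuous_primitive (fun a b => Kf_ii μ a b) 0

/-- Both tails are right-continuous, so `A` has right derivative `K` at every point. -/
theorem Af_deriv (μ : Measure ℝ) [IsProbabilityMeasure μ] (x : ℝ) :
    HasDerivWithinAt (Af μ) (Kf μ x) (Ici x) x :=
  intervalIntegral.integral_hasDerivWithinAt_right (Kf_ii μ 0 x)
    ((Kf_meas μ).stronglyMeasurable.stronglyMeasurableAtFilter)
    ((Kf_rcont μ x).mono Ioi_subset_Ici_self)

/-- Quantitative (Ha). Positivity of `H` comes for free: since `0⁻¹ = 0`, the quotient in (Ha) would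
vanish wherever `H = 0`. -/
theorem Ha_bound {μ : Measure ℝ} (hHa : HaCond μ) {ε : ℝ} (hε : 0 < ε) :
    ∃ T : ℝ, 1 ≤ T ∧ ∀ x ≥ T, 0 < Af μ x ∧ 0 < Hf μ x ∧ x * Hf μ x ≤ ε * Af μ x := by
  have h1 := (tendsto_atTop.1 hHa) (1 / ε)
  obtain ⟨T, hT⟩ := (h1.and (eventually_ge_atTop 1)).exists_forall_of_atTop
  refine ⟨max T 1, le_max_right _ _, fun x hx => ?_⟩
  obtain ⟨h2, h3⟩ := hT x ((le_max_left _ _).trans hx)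
  have hpos : 0 < 1 / ε := by positivity
  have hH : 0 < Hf μ x := by
    rcases (Hf_nonneg μ x).eq_or_lt with h | h
    · rw [← h] at h2; simp at h2; linarith
    · exact h
  have hxH : 0 < x * Hf μ x := by positivity
  have h4 : x * Hf μ x * (1 / ε) ≤ Af μ x := by
    rw [le_div_iff₀ hxH] at h2; linarith
  refine ⟨lt_of_lt_of_le (by positivity) h4, hH, ?_⟩
  calc x * Hf μ x = ε * (x * Hf μ x * (1 / ε)) := by field_simp
    _ ≤ _ := by gcongr

/-- Potter bounds: the logarithmic derivative of `A` is `K / A`, which is at most `δ / t`. -/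
theorem potter {μ : Measure ℝ} [IsProbabilityMeasure μ] (hHa : HaCond μ) {δ : ℝ} (hδ : 0 < δ) :
    ∃ T : ℝ, 1 ≤ T ∧ ∀ s t : ℝ, T ≤ s → s ≤ t → 0 < Af μ s ∧ 0 < Af μ t ∧
      Af μ t ≤ Af μ s * (t / s) ^ δ ∧ Af μ s ≤ Af μ t * (t / s) ^ δ := by
  obtain ⟨T, hT1, hT⟩ := Ha_bound hHa hδ
  refine ⟨T, hT1, fun s t hs hst => ?_⟩
  have hs0 : 0 < s := by linarith
  have hA : ∀ u ≥ s, 0 < Af μ u := fun u hu => (hT u (hs.trans hu)).1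
  have key := image_norm_le_of_norm_deriv_right_le_deriv_boundary' (a := s) (b := t)
    (f := fun u => Real.log (Af μ u) - Real.log (Af μ s)) (f' := fun u => Kf μ u / Af μ u)
    (B := fun u => δ * (Real.log u - Real.log s)) (B' := fun u => δ * u⁻¹)
    ?_ ?_ ?_ ?_ ?_ ?_ (right_mem_Icc.2 hst)
  · have h1 := hA s le_rfl
    have h2 := hA t hst
    have ht0 : 0 < t := by linarith
    have hpow : Real.log ((t / s) ^ δ) = δ * (Real.log t - Real.log s) := by
      rw [Real.log_rpow (by positivity), Real.log_div ht0.ne' hs0.ne']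
    have hp : 0 < (t / s) ^ δ := by positivity
    rw [Real.norm_eq_abs, abs_le] at key
    refine ⟨h1, h2, ?_, ?_⟩
    · rw [← Real.log_le_log_iff h2 (by positivity), Real.log_mul h1.ne' hp.ne', hpow]
      linarith [key.2]
    · rw [← Real.log_le_log_iff h1 (by positivity), Real.log_mul h2.ne' hp.ne', hpow]
      linarith [key.1]
  · exact ((Af_cont μ).continuousOn.log fun u hu => (hA u hu.1).ne').sub continuousOn_const
  · intro u hu
    exact ((Af_deriv μ u).log (hA u hu.1).ne').sub_const _
  · simp
  · refine continuousOn_const.mul ((continuousOn_id.log ?_).sub continuousOn_const)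
    intro u hu; exact (lt_of_lt_of_le hs0 hu.1).ne'
  · intro u hu
    have hu0 : u ≠ 0 := (lt_of_lt_of_le hs0 hu.1).ne'
    exact (((Real.hasDerivAt_log hu0).sub_const _).const_mul δ).hasDerivWithinAt
  · intro u hu
    have hu0 : 0 < u := (lt_of_lt_of_le hs0 hu.1)
    obtain ⟨h1, -, h2⟩ := hT u (hs.trans hu.1)
    rw [Real.norm_eq_abs, abs_div, abs_of_pos h1, div_le_iff₀ h1]
    have h3 := Kf_abs_le μ hu0.le
    calc |Kf μ u| ≤ Hf μ u := h3
      _ = u⁻¹ * (u * Hf μ u) := by field_simp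
      _ ≤ u⁻¹ * (δ * Af μ u) := by gcongr
      _ = _ := by ring

/-- `M(x) = ∫ₓ^∞ H(t)/A²(t) dt`, the reciprocal of `m(x)`. -/
noncomputable def Mf (μ : Measure ℝ) (x : ℝ) : ℝ := ∫ t in Ioi x, Hf μ t / (Af μ t) ^ 2

theorem lint_H_top (μ : Measure ℝ) [IsProbabilityMeasure μ]
    (hmean : ∫⁻ x, ENNReal.ofReal |x| ∂μ = ⊤) : ∫⁻ t in Ioi 0, ENNReal.ofReal (Hf μ t) = ⊤ := by
  rw [← hmean, lintegral_eq_lintegral_meas_lt μ (ae_of_all _ fun x => abs_nonneg x)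
    measurable_id.abs.aemeasurable]
  refine lintegral_congr fun t => ?_
  exact ENNReal.ofReal_toReal (measure_ne_top _ _)

theorem not_int_H (μ : Measure ℝ) [IsProbabilityMeasure μ]
    (hmean : ∫⁻ x, ENNReal.ofReal |x| ∂μ = ⊤) (T : ℝ) : ¬ IntegrableOn (Hf μ) (Ioi T) := by
  intro h
  have h2 : IntegrableOn (Hf μ) (Ioi 0) := by
    refine IntegrableOn.mono_set (t := Ioc 0 T ∪ Ioi T) ?_ ?_
    · refine IntegrableOn.union ?_ h
      exact ((Hf_anti μ).intervalIntegrable (a := 0) (b := T)).1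
    · intro x hx
      rcases le_or_gt x T with h | h
      · exact Or.inl ⟨hx, h⟩
      · exact Or.inr h
  have h3 := h2.lintegral_lt_top
  rw [lint_H_top μ hmean] at h3
  exact lt_irrefl _ h3

/-- Consequences of `E|X| = ∞`, that is of `∫ H = ∞`, and (Hb). If `A` stayed bounded, (Hb) would make `H`
integrable; hence `A → ∞`. Integrating the derivative `-K/A²` of `1/A` over `(x, ∞)` gives `∫ₓ^∞ K/A² = 1/A(x)`, and
`1 - F = (H + K)/2` and `|K| ≤ H` yield the last line. -/
theorem Af_facts {μ : Measure ℝ} [IsProbabilityMeasure μ]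
    (hmean : ∫⁻ x, ENNReal.ofReal |x| ∂μ = ⊤) (hHb : HbCond μ) :
    Tendsto (Af μ) atTop atTop ∧ ∃ T : ℝ, 1 ≤ T ∧ (∀ x ≥ T, 0 < Af μ x) ∧
      IntegrableOn (fun t => Hf μ t / (Af μ t) ^ 2) (Ioi T) ∧
      ∀ x ≥ T, rPlus μ x = (Mf μ x + 1 / Af μ x) / 2 ∧ 1 / Af μ x ≤ Mf μ x := by
  obtain ⟨x₀, hx₀, hA0, hint0⟩ := hHb
  set T := max x₀ 1 with hT
  have hT0 : 0 < T := lt_of_lt_of_le one_pos (le_max_right _ _)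
  have hA : ∀ x ≥ T, 0 < Af μ x := fun x hx => hA0 x ((le_max_left _ _).trans hx)
  have hint : IntegrableOn (fun t => Hf μ t / (Af μ t) ^ 2) (Ioi T) :=
    hint0.mono_set (Ioi_subset_Ioi (le_max_left _ _))
  have hAm : Measurable (Af μ) := (Af_cont μ).measurable
  have hintK : IntegrableOn (fun t => Kf μ t / (Af μ t) ^ 2) (Ioi T) := by
    refine hint.mono' ((Kf_meas μ).div (hAm.pow_const 2)).aestronglyMeasurable ?_
    filter_upwards [ae_restrict_mem measurableSet_Ioi] with t ht
    rw [Real.norm_eq_abs, abs_div, abs_of_nonneg (sq_nonneg (Af μ t))]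
    gcongr
    exact Kf_abs_le μ (hT0.trans ht).le
  have hftc : ∀ x ≥ T, ∀ t ≥ x, ∫ u in x..t, Kf μ u / (Af μ u) ^ 2 = 1 / Af μ x - 1 / Af μ t := by
    intro x hx t ht
    have := intervalIntegral.integral_eq_sub_of_hasDeriv_right_of_le (a := x) (b := t)
      (f := fun u => -(Af μ u)⁻¹) (f' := fun u => Kf μ u / (Af μ u) ^ 2) ht ?_ ?_ ?_
    · rw [this]; ring
    · exact ((Af_cont μ).continuousOn.inv₀ fun u hu => (hA u (hx.trans hu.1)).ne').neg
    · intro u hu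
      have h := (((Af_deriv μ u).mono Ioi_subset_Ici_self).inv (hA u (hx.trans hu.1.le)).ne').neg
      convert! h using 1
      ring
    · rw [intervalIntegrable_iff_integrableOn_Ioc_of_le ht]
      exact hintK.mono_set fun u hu => lt_of_le_of_lt hx hu.1
  have hlim : ∀ x ≥ T, Tendsto (fun t => 1 / Af μ t) atTop
      (𝓝 (1 / Af μ x - ∫ u in Ioi x, Kf μ u / (Af μ u) ^ 2)) := by
    intro x hx
    have h1 := intervalIntegral_tendsto_integral_Ioi x
      (hintK.mono_set (Ioi_subset_Ioi hx)) tendsto_id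
    refine (tendsto_const_nhds.sub h1).congr' ?_
    filter_upwards [eventually_ge_atTop x] with t ht
    rw [id, hftc x hx t ht]; ring
  have hL0 : 1 / Af μ T - ∫ u in Ioi T, Kf μ u / (Af μ u) ^ 2 = 0 := by
    by_contra hne
    set L := 1 / Af μ T - ∫ u in Ioi T, Kf μ u / (Af μ u) ^ 2 with hL
    have hLnn : 0 ≤ L := ge_of_tendsto (hlim T le_rfl) (by
      filter_upwards [eventually_ge_atTop T] with t ht
      exact (one_div_pos.2 (hA t ht)).le)
    have hLpos : 0 < L := lt_of_le_of_ne hLnn (Ne.symm hne)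
    obtain ⟨T', hT'⟩ := (((hlim T le_rfl).eventually
      (lt_mem_nhds (half_lt_self hLpos))).and (eventually_ge_atTop T)).exists_forall_of_atTop
    refine not_int_H μ hmean (max T T') ?_
    refine ((hint.mono_set (Ioi_subset_Ioi (le_max_left T T'))).const_mul ((2 / L) ^ 2)).mono'
      (Hf_meas μ).aestronglyMeasurable ?_
    filter_upwards [ae_restrict_mem measurableSet_Ioi] with t ht
    obtain ⟨h1, h2⟩ := hT' t ((le_max_right _ _).trans (le_of_lt ht))
    have hAt := hA t h2
    rw [Real.norm_eq_abs, abs_of_nonneg (Hf_nonneg μ t)]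
    have h3 : Af μ t ≤ 2 / L := by
      rw [lt_div_iff₀ hAt] at h1
      rw [le_div_iff₀ hLpos]; linarith
    have h4 : (Af μ t) ^ 2 ≤ (2 / L) ^ 2 := by gcongr
    calc Hf μ t = (Af μ t) ^ 2 * (Hf μ t / (Af μ t) ^ 2) := by field_simp
      _ ≤ _ := by
        gcongr
        exact div_nonneg (Hf_nonneg μ t) (sq_nonneg _)
  have hlim0 : Tendsto (fun t => 1 / Af μ t) atTop (𝓝 0) := by
    have := hlim T le_rfl; rwa [hL0] at this
  have hinv : ∀ x ≥ T, ∫ u in Ioi x, Kf μ u / (Af μ u) ^ 2 = 1 / Af μ x := by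
    intro x hx
    have := tendsto_nhds_unique (hlim x hx) hlim0
    linarith
  refine ⟨?_, T, le_max_right _ _, hA, hint, fun x hx => ?_⟩
  · have h1 : Tendsto (fun t => 1 / Af μ t) atTop (𝓝[>] 0) :=
      tendsto_nhdsWithin_iff.2 ⟨hlim0, by
        filter_upwards [eventually_ge_atTop T] with t ht using one_div_pos.2 (hA t ht)⟩
    refine h1.inv_tendsto_nhdsGT_zero.congr fun t => ?_
    change (1 / Af μ t)⁻¹ = _
    rw [one_div, inv_inv]
  · have hi1 := hint.mono_set (Ioi_subset_Ioi hx)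
    have hi2 := hintK.mono_set (Ioi_subset_Ioi hx)
    constructor
    · rw [← hinv x hx, Mf, ← integral_add hi1 hi2, ← integral_div, rPlus]
      refine setIntegral_congr_fun measurableSet_Ioi fun t ht => ?_
      have ht0 : 0 ≤ t := (hT0.trans_le (hx.trans (le_of_lt ht))).le
      rw [tailF_eq μ ht0]; ring
    · rw [← hinv x hx, Mf]
      refine setIntegral_mono_on hi2 hi1 measurableSet_Ioi fun t ht => ?_
      have ht0 : 0 ≤ t := (hT0.trans_le (hx.trans (le_of_lt ht))).le
      gcongr
      exact (le_abs_self _).trans (Kf_abs_le μ ht0)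

/-! ### The truncated moment of order 3/2 -/

/-- The truncated moment `E[min(|X|/t, 1)^{3/2}]`, which controls all error terms. -/
noncomputable def Pf (μ : Measure ℝ) (t : ℝ) : ℝ := ∫ y, (min (|y| / t) 1) ^ (3 / 2 : ℝ) ∂μ

theorem Pf_integrand_meas (t : ℝ) :
    Measurable (fun y : ℝ => (min (|y| / t) 1) ^ (3 / 2 : ℝ)) :=
  ((measurable_id.abs.div_const t).min measurable_const).pow_const _

theorem Pf_integrand_nonneg {t : ℝ} (ht : 0 < t) (y : ℝ) :
    0 ≤ (min (|y| / t) 1) ^ (3 / 2 : ℝ) := by positivity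

theorem Pf_integrand_le {t : ℝ} (ht : 0 < t) (y : ℝ) :
    (min (|y| / t) 1) ^ (3 / 2 : ℝ) ≤ 1 :=
  Real.rpow_le_one (by positivity) (min_le_right _ _) (by norm_num)

theorem Pf_integrable (μ : Measure ℝ) [IsProbabilityMeasure μ] {t : ℝ} (ht : 0 < t) :
    Integrable (fun y : ℝ => (min (|y| / t) 1) ^ (3 / 2 : ℝ)) μ := by
  refine Integrable.of_bound (Pf_integrand_meas t).aestronglyMeasurable 1 (ae_of_all _ fun y => ?_)
  rw [Real.norm_eq_abs, abs_of_nonneg (Pf_integrand_nonneg ht y)]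
  exact Pf_integrand_le ht y

theorem Pf_nonneg (μ : Measure ℝ) {t : ℝ} (ht : 0 < t) : 0 ≤ Pf μ t :=
  integral_nonneg (Pf_integrand_nonneg ht)

/-- A bound on `H` below level `t` turns into a bound on `P(t)` through the layer-cake formula. -/
theorem Pf_le_of {μ : Measure ℝ} [IsProbabilityMeasure μ] {t C : ℝ} (ht : 0 < t)
    (hH : ∀ s ∈ Ioo (0 : ℝ) 1, Hf μ (s * t) * s ^ (1 / 2 : ℝ) ≤ C * s ^ (-(5 / 8) : ℝ)) :
    Pf μ t ≤ 4 * C := by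
  have hC : 0 ≤ C := by
    have := hH (1 / 2) (by norm_num)
    have h2 : 0 ≤ C * (1 / 2 : ℝ) ^ (-(5 / 8) : ℝ) :=
      le_trans (mul_nonneg (Hf_nonneg μ _) (by positivity)) this
    exact nonneg_of_mul_nonneg_left h2 (by positivity)
  have h1 := lintegral_rpow_eq_lintegral_meas_lt_mul μ (f := fun y => min (|y| / t) 1)
    (ae_of_all _ fun y => by simp only [Pi.zero_apply]; positivity)
    ((measurable_id.abs.div_const t).min measurable_const).aemeasurable
    (p := 3 / 2) (by norm_num)
  have hint : IntegrableOn (fun s : ℝ => C * s ^ (-(5 / 8) : ℝ)) (Ioo 0 1) := by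
    refine Integrable.const_mul ?_ C
    have := (intervalIntegral.integrableOn_Ioo_rpow_iff (s := -(5/8)) (t := 1) one_pos).2
      (by norm_num)
    exact this
  have h2 : ∫⁻ s in Ioi 0, μ {a : ℝ | s < min (|a| / t) 1} * ENNReal.ofReal (s ^ (3 / 2 - 1 : ℝ))
      ≤ ∫⁻ s in Ioo 0 1, ENNReal.ofReal (C * s ^ (-(5 / 8) : ℝ)) := by
    rw [← lintegral_indicator measurableSet_Ioi, ← lintegral_indicator measurableSet_Ioo]
    refine lintegral_mono fun s => ?_
    by_cases hs : s ∈ Ioo (0 : ℝ) 1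
    · rw [indicator_of_mem hs, indicator_of_mem (mem_Ioi.2 hs.1)]
      have e : {a : ℝ | s < min (|a| / t) 1} = {a : ℝ | s * t < |a|} := by
        ext a
        simp [lt_div_iff₀ ht, hs.2]
      rw [e, ← ENNReal.ofReal_toReal (measure_ne_top μ {a : ℝ | s * t < |a|}),
        ← ENNReal.ofReal_mul ENNReal.toReal_nonneg]
      refine ENNReal.ofReal_le_ofReal ?_
      have := hH s hs
      norm_num [Hf] at this ⊢
      exact this
    · rw [indicator_of_notMem hs]
      by_cases hs0 : 0 < s
      · have hs1 : 1 ≤ s := by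
          by_contra h; exact hs ⟨hs0, not_le.1 h⟩
        rw [indicator_of_mem (mem_Ioi.2 hs0)]
        have e : {a : ℝ | s < min (|a| / t) 1} = ∅ := by
          ext a
          simp only [lt_min_iff, mem_ofPred_eq, mem_empty_iff_false, iff_false]
          intro h; linarith [h.2]
        rw [e]; simp
      · rw [indicator_of_notMem (by simpa using hs0)]
  have h3 : ∫⁻ s in Ioo 0 1, ENNReal.ofReal (C * s ^ (-(5 / 8) : ℝ))
      = ENNReal.ofReal (8 / 3 * C) := by
    rw [← ofReal_integral_eq_lintegral_ofReal hint]
    · congr 1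
      rw [integral_const_mul, ← integral_Ioc_eq_integral_Ioo,
        ← intervalIntegral.integral_of_le zero_le_one, integral_rpow (Or.inl (by norm_num))]
      norm_num
      ring
    · filter_upwards [ae_restrict_mem measurableSet_Ioo] with s hs
      have := hs.1
      simp only [Pi.zero_apply]
      positivity
  have h4 : ENNReal.ofReal (Pf μ t) ≤ ENNReal.ofReal (4 * C) := by
    rw [Pf, ofReal_integral_eq_lintegral_ofReal (Pf_integrable μ ht)
      (ae_of_all _ (Pf_integrand_nonneg ht)), h1]
    refine (mul_le_mul_right h2 _).trans ?_
    rw [h3, ← ENNReal.ofReal_mul (by norm_num)]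
    apply le_of_eq
    congr 1; ring
  exact (ENNReal.ofReal_le_ofReal_iff (by positivity)).1 h4

/-- The truncated moment is negligible: `t P(t) = o(A(t))`. This follows from `t H(t) = o(A(t))`
and the Potter bounds by the layer-cake formula. -/
theorem P_small {μ : Measure ℝ} [IsProbabilityMeasure μ] (hHa : HaCond μ)
    (hA : Tendsto (Af μ) atTop atTop) {ε : ℝ} (hε : 0 < ε) :
    ∃ T : ℝ, 1 ≤ T ∧ ∀ t ≥ T, t * Pf μ t ≤ ε * Af μ t := by
  obtain ⟨T₁, hT₁, hb⟩ := Ha_bound hHa (ε := ε / 8) (by positivity)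
  obtain ⟨T₂, hT₂, hp⟩ := potter hHa (δ := 1 / 8) (by norm_num)
  set T := max T₁ T₂ with hT
  have hT1 : 1 ≤ T := hT₁.trans (le_max_left _ _)
  obtain ⟨T₃, hT₃⟩ := ((tendsto_atTop.1 hA (8 / ε * T ^ (9 / 8 : ℝ))).and
    (eventually_ge_atTop T)).exists_forall_of_atTop
  refine ⟨max T₃ 1, le_max_right _ _, fun t ht => ?_⟩
  obtain ⟨h1, h2⟩ := hT₃ t ((le_max_left _ _).trans ht)
  have ht0 : 0 < t := by linarith
  have ht1 : 1 ≤ t := hT1.trans h2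
  have key := Pf_le_of (μ := μ) (C := ε / 4 * Af μ t / t) ht0 ?_
  · calc t * Pf μ t ≤ t * (4 * (ε / 4 * Af μ t / t)) := by gcongr
      _ = _ := by field_simp
  intro s hs
  have hs0 := hs.1
  have hAt : 0 < Af μ t := (hp t t ((le_max_right _ _).trans h2) le_rfl).1
  have h1' : T ^ (9 / 8 : ℝ) ≤ ε / 8 * Af μ t := by
    rw [div_mul_eq_mul_div, div_le_iff₀ hε] at h1; linarith
  rcases le_or_gt T (s * t) with hst | hst
  · have hst0 : 0 < s * t := by positivity
    have e1 := (hb (s * t) ((le_max_left _ _).trans hst)).2.2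
    have e2 := (hp (s * t) t ((le_max_right _ _).trans hst) (by nlinarith [hs.2])).2.2.2
    have e3 : t / (s * t) = s⁻¹ := by field_simp
    rw [e3, Real.inv_rpow hs0.le, ← Real.rpow_neg hs0.le] at e2
    have e4 : Hf μ (s * t) ≤ ε / 8 * (Af μ t * s ^ (-(1 / 8) : ℝ)) / (s * t) := by
      rw [le_div_iff₀ hst0, mul_comm]
      exact e1.trans (by gcongr)
    have e5 : s ^ (-(1 / 8) : ℝ) / s * s ^ (1 / 2 : ℝ) = s ^ (-(5 / 8) : ℝ) := by
      rw [← Real.rpow_sub_one hs0.ne', ← Real.rpow_add hs0]; norm_num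
    calc Hf μ (s * t) * s ^ (1 / 2 : ℝ)
        ≤ ε / 8 * (Af μ t * s ^ (-(1 / 8) : ℝ)) / (s * t) * s ^ (1 / 2 : ℝ) := by gcongr
      _ = ε / 8 * Af μ t / t * (s ^ (-(1 / 8) : ℝ) / s * s ^ (1 / 2 : ℝ)) := by
        field_simp
      _ = ε / 8 * Af μ t / t * s ^ (-(5 / 8) : ℝ) := by rw [e5]
      _ ≤ _ := by gcongr; norm_num
  · have e1 : s ≤ T / t := by rw [le_div_iff₀ ht0]; exact hst.le
    have e2 : s ^ (9 / 8 : ℝ) ≤ T ^ (9 / 8 : ℝ) / t := by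
      calc s ^ (9 / 8 : ℝ) ≤ (T / t) ^ (9 / 8 : ℝ) := by gcongr
        _ = T ^ (9 / 8 : ℝ) / t ^ (9 / 8 : ℝ) := Real.div_rpow (by linarith) ht0.le _
        _ ≤ T ^ (9 / 8 : ℝ) / t := by
          gcongr
          exact Real.self_le_rpow_of_one_le ht1 (by norm_num)
    calc Hf μ (s * t) * s ^ (1 / 2 : ℝ) ≤ 1 * s ^ (1 / 2 : ℝ) := by
          gcongr; exact Hf_le_one μ _
      _ = s ^ (9 / 8 : ℝ) * s ^ (-(5 / 8) : ℝ) := by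
        rw [← Real.rpow_add hs0]; norm_num
      _ ≤ T ^ (9 / 8 : ℝ) / t * s ^ (-(5 / 8) : ℝ) := by gcongr
      _ ≤ (ε / 8 * Af μ t) / t * s ^ (-(5 / 8) : ℝ) := by gcongr
      _ ≤ _ := by gcongr; norm_num

theorem pos_part_integral (μ : Measure ℝ) [IsProbabilityMeasure μ] {t : ℝ} (ht : 0 ≤ t) :
    ∫ y, max (min y t) 0 ∂μ = ∫ s in Ioc 0 t, (μ (Ioi s)).toReal := by
  have hi : Integrable (fun y : ℝ => max (min y t) 0) μ := by
    refine Integrable.of_bound ((measurable_id.min measurable_const).max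
      measurable_const).aestronglyMeasurable t (ae_of_all _ fun y => ?_)
    rw [Real.norm_eq_abs, abs_of_nonneg (le_max_right _ _)]
    exact max_le (min_le_right _ _) ht
  rw [hi.integral_eq_integral_meas_lt (ae_of_all _ fun y => le_max_right _ _),
    integral_Ioc_eq_integral_Ioo,
    ← integral_indicator measurableSet_Ioi, ← integral_indicator measurableSet_Ioo]
  congr 1
  ext s
  by_cases hs : 0 < s
  · rw [indicator_of_mem (mem_Ioi.2 hs)]
    by_cases hst : s < t
    · rw [indicator_of_mem (show s ∈ Ioo 0 t from ⟨hs, hst⟩), Measure.real]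
      congr 2
      ext y
      simp [hst, hs.le]
    · rw [indicator_of_notMem (fun h => hst h.2), Measure.real]
      have : {a : ℝ | s < max (min a t) 0} = ∅ := by
        ext y
        simp only [lt_max_iff, lt_min_iff, mem_ofPred_eq, mem_empty_iff_false, iff_false]
        rintro (h | h)
        · exact hst h.2
        · exact lt_asymm h hs
      rw [this]; simp
  · rw [indicator_of_notMem (by simpa using hs), indicator_of_notMem (fun h => hs h.1)]

/-- `A(t)` is the mean of `X` clamped to `[-t, t]`. -/
theorem Af_eq_clamp (μ : Measure ℝ) [IsProbabilityMeasure μ] {t : ℝ} (ht : 0 ≤ t) :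
    Af μ t = ∫ y, max (min y t) (-t) ∂μ := by
  have hi : Integrable (fun y : ℝ => max (min y t) 0) μ := by
    refine Integrable.of_bound ((measurable_id.min measurable_const).max
      measurable_const).aestronglyMeasurable t (ae_of_all _ fun y => ?_)
    rw [Real.norm_eq_abs, abs_of_nonneg (le_max_right _ _)]
    exact max_le (min_le_right _ _) ht
  have hi2 : Integrable (fun y : ℝ => max (min (-y) t) 0) μ := by
    refine Integrable.of_bound ((measurable_neg.min measurable_const).max
      measurable_const).aestronglyMeasurable t (ae_of_all _ fun y => ?_)
    rw [Real.norm_eq_abs, abs_of_nonneg (le_max_right _ _)]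
    exact max_le (min_le_right _ _) ht
  have : IsProbabilityMeasure (μ.map (fun y : ℝ => -y)) :=
    Measure.isProbabilityMeasure_map measurable_neg.aemeasurable
  have h1 := pos_part_integral μ ht
  have h2 := pos_part_integral (μ.map (fun y : ℝ => -y)) ht
  have hm := integral_map (μ := μ) (φ := fun y : ℝ => -y) (f := fun y => max (min y t) 0)
    measurable_neg.aemeasurable ((measurable_id.min measurable_const).max
      measurable_const).aestronglyMeasurable
  rw [hm] at h2
  simp_rw [← Iio_neg_eq] at h2
  have e : ∀ y : ℝ, max (min y t) (-t) = max (min y t) 0 - max (min (-y) t) 0 := by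
    intro y
    rcases le_total y t with h | h <;> rcases le_total (-y) t with h' | h' <;>
      rcases le_total 0 y with h0 | h0 <;>
      simp [h, h', h0] <;> grind
  simp_rw [e]
  rw [integral_sub hi hi2, h1, h2, Af, intervalIntegral.integral_of_le ht]
  exact integral_sub (tail_anti μ).intervalIntegrable.1 (Iio_anti μ).intervalIntegrable.1

/-! ### The characteristic function near and away from zero -/

theorem exp_meas (θ : ℝ) : Measurable (fun y : ℝ => Complex.exp (θ * y * Complex.I)) := by
  fun_prop

theorem norm_exp_real (θ y : ℝ) : ‖Complex.exp (θ * y * Complex.I)‖ = 1 := by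
  rw [← Complex.ofReal_mul, Complex.norm_exp_ofReal_mul_I]

theorem exp_integrable (μ : Measure ℝ) [IsProbabilityMeasure μ] (θ : ℝ) :
    Integrable (fun y : ℝ => Complex.exp (θ * y * Complex.I)) μ :=
  Integrable.of_bound (exp_meas θ).aestronglyMeasurable 1
    (ae_of_all _ fun y => (norm_exp_real θ y).le)

theorem charFun_cont (μ : Measure ℝ) [IsProbabilityMeasure μ] : Continuous (charFun μ) := by
  have : charFun μ = fun θ : ℝ => ∫ y : ℝ, Complex.exp (θ * y * Complex.I) ∂μ := by
    ext θ; rw [charFun_apply_real]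
  rw [this]
  refine continuous_of_dominated (F := fun (θ : ℝ) (y : ℝ) => Complex.exp (θ * y * Complex.I))
    (bound := fun _ => 1) (fun θ => (exp_meas θ).aestronglyMeasurable)
    (fun θ => ae_of_all _ fun y => (norm_exp_real θ y).le) (integrable_const _)
    (ae_of_all _ fun y => by fun_prop)

theorem exp_sub_one_le (u : ℝ) : ‖Complex.exp (u * Complex.I) - 1‖ ≤ min |u| 2 := by
  refine le_min ?_ ?_
  · rw [mul_comm]; exact Real.norm_exp_I_mul_ofReal_sub_one_le
  · refine (norm_sub_le _ _).trans ?_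
    rw [Complex.norm_exp_ofReal_mul_I, norm_one]; norm_num

/-- The error is bounded for large `u` and quadratic for small `u`; the exponent `3/2` is a weaker common bound.
The clamped first-order term is what integrates to `A`. -/
theorem exp_clamp_le (u : ℝ) :
    ‖Complex.exp (u * Complex.I) - 1 - Complex.I * ((max (min u 1) (-1) : ℝ) : ℂ)‖
      ≤ 4 * (min |u| 1) ^ (3 / 2 : ℝ) := by
  rcases le_or_gt |u| 1 with h | h
  · rw [min_eq_left h]
    rw [abs_le] at h
    rw [min_eq_left h.2, max_eq_left h.1]
    have h1 : ‖(u * Complex.I : ℂ)‖ = |u| := by simp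
    have h2 := Complex.norm_exp_sub_one_sub_id_le (x := u * Complex.I) (by
      rw [h1]; exact abs_le.2 h)
    rw [h1] at h2
    rw [mul_comm Complex.I]
    have h3 : |u| ^ 2 ≤ |u| ^ (3 / 2 : ℝ) := by
      rw [← Real.rpow_natCast]
      exact Real.rpow_le_rpow_of_exponent_ge_of_imp (abs_nonneg u) (abs_le.2 h) (by norm_num)
        (by norm_num)
    have : 0 ≤ |u| ^ (3 / 2 : ℝ) := by positivity
    linarith
  · rw [min_eq_right h.le, Real.one_rpow]
    have h1 : |max (min u 1) (-1)| ≤ 1 :=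
      abs_le.2 ⟨le_max_right _ _, max_le (min_le_right _ _) (by norm_num)⟩
    calc _ ≤ ‖Complex.exp (u * Complex.I) - 1‖ + ‖Complex.I * ((max (min u 1) (-1) : ℝ) : ℂ)‖ :=
          norm_sub_le _ _
      _ ≤ 2 + 1 := by
        gcongr
        · exact (exp_sub_one_le u).trans (min_le_right _ _)
        · rw [norm_mul, Complex.norm_I, one_mul, Complex.norm_real]; exact h1
      _ ≤ _ := by norm_num

/-- `φ(1/t) = 1 + i A(t)/t + O(P(t))`. -/
theorem charFun_expand (μ : Measure ℝ) [IsProbabilityMeasure μ] {t : ℝ} (ht : 0 < t) :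
    ‖charFun μ (1 / t) - 1 - Complex.I * ((Af μ t / t : ℝ) : ℂ)‖ ≤ 4 * Pf μ t := by
  have hm : Measurable (fun y : ℝ => max (min (y / t) 1) (-1)) :=
    ((measurable_id.div_const t).min measurable_const).max measurable_const
  have h1 : Af μ t / t = ∫ y, max (min (y / t) 1) (-1) ∂μ := by
    rw [Af_eq_clamp μ ht.le, ← integral_div]
    congr 1; ext y
    rw [← max_div_div_right ht.le, ← min_div_div_right ht.le, neg_div, div_self ht.ne']
  have hci : Integrable (fun y : ℝ => max (min (y / t) 1) (-1)) μ := by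
    refine Integrable.of_bound hm.aestronglyMeasurable 1 (ae_of_all _ fun y => ?_)
    exact abs_le.2 ⟨le_max_right _ _, max_le (min_le_right _ _) (by norm_num)⟩
  have h2 : charFun μ (1 / t) - 1 - Complex.I * ((Af μ t / t : ℝ) : ℂ)
      = ∫ y : ℝ, (Complex.exp ((y / t : ℝ) * Complex.I) - 1
        - Complex.I * ((max (min (y / t) 1) (-1) : ℝ) : ℂ)) ∂μ := by
    have hE : Integrable (fun y : ℝ => Complex.exp ((y / t : ℝ) * Complex.I)) μ := by
      refine (exp_integrable μ (1 / t)).congr (ae_of_all _ fun y => ?_)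
      simp only; congr 2; push_cast; ring
    have hE1 : Integrable (fun y : ℝ => Complex.exp ((y / t : ℝ) * Complex.I) - 1) μ :=
      hE.sub (integrable_const (1 : ℂ))
    have hE2 : Integrable (fun y : ℝ =>
        Complex.I * ((max (min (y / t) 1) (-1) : ℝ) : ℂ)) μ :=
      Integrable.const_mul (hci.ofReal (𝕜 := ℂ)) Complex.I
    rw [integral_sub hE1 hE2,
      integral_sub hE (integrable_const (1 : ℂ)), integral_const_mul, integral_complex_ofReal, ← h1,
      charFun_apply_real]
    simp only [integral_const, probReal_univ, one_smul]
    congr 3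
    ext y; congr 2; push_cast; ring
  rw [h2, Pf, ← integral_const_mul]
  refine norm_integral_le_of_norm_le ((Pf_integrable μ ht).const_mul 4) (ae_of_all _ fun y => ?_)
  have := exp_clamp_le (y / t)
  rwa [abs_div, abs_of_pos ht] at this

/-- As `θ ↓ 0`, `1 - φ(θ) = -i θ A(1/θ) (1 + o(1))`. -/
theorem charFun_near_zero {μ : Measure ℝ} [IsProbabilityMeasure μ] (hHa : HaCond μ)
    (hA : Tendsto (Af μ) atTop atTop) {ε : ℝ} (hε : 0 < ε) :
    ∃ T : ℝ, 1 ≤ T ∧ ∀ t ≥ T, 0 < Af μ t ∧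
      ‖1 - charFun μ (1 / t) + Complex.I * ((Af μ t / t : ℝ) : ℂ)‖ ≤ ε * (Af μ t / t) := by
  obtain ⟨T, hT1, hT⟩ := P_small hHa hA (ε := ε / 4) (by positivity)
  obtain ⟨T', hT'⟩ := (tendsto_atTop.1 hA 1).exists_forall_of_atTop
  refine ⟨max T T', hT1.trans (le_max_left _ _), fun t ht => ?_⟩
  have h1 := hT t ((le_max_left _ _).trans ht)
  have h2 := hT' t ((le_max_right _ _).trans ht)
  have ht0 : 0 < t := by linarith [(le_max_left T T').trans ht]
  refine ⟨by linarith, ?_⟩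
  have h3 := charFun_expand μ ht0
  rw [← norm_neg] at h3
  have e : -(charFun μ (1 / t) - 1 - Complex.I * ((Af μ t / t : ℝ) : ℂ)) =
    1 - charFun μ (1 / t) + Complex.I * ((Af μ t / t : ℝ) : ℂ) := by ring
  rw [e] at h3
  refine h3.trans ?_
  rw [mul_div_assoc', le_div_iff₀ ht0]
  linarith

/-- `φ(θ) = 1` forces `cos θX = 1` a.s., so that `X` lives on the lattice `(2π/θ)ℤ`. -/
theorem nonarith_ne_one {μ : Measure ℝ} [IsProbabilityMeasure μ] (harith : ¬ IsArith μ)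
    {θ : ℝ} (hθ : 0 < θ) : charFun μ θ ≠ 1 := by
  intro h
  apply harith
  have hci : Integrable (fun y : ℝ => Real.cos (θ * y)) μ := by
    refine Integrable.of_bound (by fun_prop) 1 (ae_of_all _ fun y => Real.abs_cos_le_one _)
  have h1 : ∫ y : ℝ, Real.cos (θ * y) ∂μ = 1 := by
    have h2 : (charFun μ θ).re = ∫ y : ℝ, Real.cos (θ * y) ∂μ := by
      rw [charFun_apply_real]
      have := integral_re (𝕜 := ℂ) (exp_integrable μ θ)
      rw [RCLike.re_eq_complex_re] at this
      rw [← this]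
      congr 1; ext y
      rw [← Complex.ofReal_mul]
      exact Complex.exp_ofReal_mul_I_re _
    rw [← h2, h]; simp
  have h3 : ∫ y : ℝ, (1 - Real.cos (θ * y)) ∂μ = 0 := by
    rw [integral_sub (integrable_const (1 : ℝ)) hci, h1]; simp
  have hci' : Integrable (fun y : ℝ => 1 - Real.cos (θ * y)) μ :=
    (integrable_const (1 : ℝ)).sub hci
  rw [integral_eq_zero_iff_of_nonneg (fun y => by
    simp only [Pi.zero_apply]; linarith [Real.cos_le_one (θ * y)])
    hci'] at h3
  refine ⟨2 * Real.pi / θ, by positivity, ?_⟩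
  rw [← prob_compl_eq_zero_iff₀]
  · change ∀ᵐ y ∂μ, y ∈ {x : ℝ | ∃ n : ℤ, x = n * (2 * Real.pi / θ)}
    filter_upwards [h3] with y hy
    simp only [Pi.zero_apply] at hy
    obtain ⟨n, hn⟩ := (Real.cos_eq_one_iff (θ * y)).1 (by linarith)
    exact ⟨n, by field_simp; linarith⟩
  · have : {x : ℝ | ∃ n : ℤ, x = n * (2 * Real.pi / θ)}
        = Set.range (fun n : ℤ => (n : ℝ) * (2 * Real.pi / θ)) := by
      ext x; simp [eq_comm]
    rw [this]
    exact (Set.countable_range _).measurableSet.nullMeasurableSet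

/-- Lower bound on `|1 - φ|` in scaled form. -/
theorem lower_bound {μ : Measure ℝ} [IsProbabilityMeasure μ] (harith : ¬ IsArith μ)
    (hHa : HaCond μ) (hA : Tendsto (Af μ) atTop atTop) {a : ℝ} (ha : 0 < a) :
    ∃ c T : ℝ, 0 < c ∧ 1 ≤ T ∧ ∀ x ≥ T, 0 < Af μ x ∧ ∀ θ : ℝ, 1 / x ≤ θ → θ ≤ a →
      c * (Af μ x / x) * (θ * x) ^ (7 / 8 : ℝ) ≤ ‖1 - charFun μ θ‖ := by
  obtain ⟨T₁, hT₁, h0⟩ := charFun_near_zero hHa hA (ε := 1 / 2) (by norm_num)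
  obtain ⟨T₂, hT₂, hp⟩ := potter hHa (δ := 1 / 8) (by norm_num)
  set T := max T₁ T₂ with hT
  have hT1 : 1 ≤ T := hT₁.trans (le_max_left _ _)
  have hT0 : 0 < T := by linarith
  obtain ⟨c₁, hc₁, hmin⟩ : ∃ c₁ > 0, ∀ θ ∈ Icc (1 / T) a, c₁ ≤ ‖1 - charFun μ θ‖ := by
    rcases (Icc (1 / T) a).eq_empty_or_nonempty with he | hne
    · exact ⟨1, one_pos, fun θ hθ => by rw [he] at hθ; exact hθ.elim⟩
    · obtain ⟨θ₀, hθ₀, hm⟩ := isCompact_Icc.exists_isMinOn hne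
        (continuous_const.sub (charFun_cont μ)).norm.continuousOn
      refine ⟨‖1 - charFun μ θ₀‖, ?_, fun θ hθ => hm hθ⟩
      rw [gt_iff_lt, norm_pos_iff, sub_ne_zero]
      exact (nonarith_ne_one harith (lt_of_lt_of_le (by positivity) hθ₀.1)).symm
  have hAT : 0 < Af μ T := (hp T T (le_max_right _ _) le_rfl).1
  set c₂ := c₁ / (Af μ T * a ^ (7 / 8 : ℝ)) with hc₂
  have hc₂0 : 0 < c₂ := by positivity
  refine ⟨min (1 / 2) c₂, T, by positivity, hT1, fun x hx => ?_⟩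
  have hx0 : 0 < x := by linarith
  have hAx : 0 < Af μ x := (hp x x ((le_max_right _ _).trans hx) le_rfl).1
  refine ⟨hAx, fun θ hθ1 hθ2 => ?_⟩
  have hθ0 : 0 < θ := lt_of_lt_of_le (by positivity) hθ1
  have hθx : 1 ≤ θ * x := by rwa [div_le_iff₀ hx0] at hθ1
  rcases le_or_gt θ (1 / T) with h | h
  · have hTθ : T ≤ 1 / θ := by rw [le_div_iff₀ hθ0]; rwa [le_div_iff₀ hT0, mul_comm] at h
    obtain ⟨g1, g2⟩ := h0 (1 / θ) ((le_max_left _ _).trans hTθ)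
    rw [one_div_one_div] at g2
    have g3 := (hp (1 / θ) x ((le_max_right _ _).trans hTθ)
      (by rw [div_le_iff₀ hθ0]; linarith)).2.2.1
    have g4 : x / (1 / θ) = θ * x := by field_simp
    rw [g4] at g3
    have g5 : Af μ (1 / θ) / (1 / θ) / 2 ≤ ‖1 - charFun μ θ‖ := by
      have := norm_sub_norm_le (Complex.I * ((Af μ (1 / θ) / (1 / θ) : ℝ) : ℂ))
        (-(1 - charFun μ θ))
      rw [norm_mul, Complex.norm_I, one_mul, Complex.norm_real, Real.norm_eq_abs,
        abs_of_pos (by positivity), norm_neg, sub_neg_eq_add, add_comm _ (1 - charFun μ θ)] at this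
      linarith
    refine le_trans ?_ g5
    have e : (θ * x) ^ (7 / 8 : ℝ) * (θ * x) ^ (1 / 8 : ℝ) = θ * x := by
      rw [← Real.rpow_add (by positivity)]; norm_num
    calc min (1 / 2) c₂ * (Af μ x / x) * (θ * x) ^ (7 / 8 : ℝ)
        ≤ 1 / 2 * (Af μ (1 / θ) * (θ * x) ^ (1 / 8 : ℝ) / x) * (θ * x) ^ (7 / 8 : ℝ) := by
          gcongr; exact min_le_left _ _
      _ = 1 / 2 * Af μ (1 / θ) / x * ((θ * x) ^ (7 / 8 : ℝ) * (θ * x) ^ (1 / 8 : ℝ)) := by ring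
      _ = Af μ (1 / θ) / (1 / θ) / 2 := by rw [e]; field_simp
  · refine le_trans ?_ (hmin θ ⟨h.le, hθ2⟩)
    have g1 := (hp T x (le_max_right _ _) hx).2.2.1
    have g2 : Af μ x ≤ Af μ T * x ^ (1 / 8 : ℝ) := by
      refine g1.trans ?_
      gcongr
      exact div_le_self hx0.le hT1
    have e : x ^ (1 / 8 : ℝ) * x ^ (7 / 8 : ℝ) = x := by
      rw [← Real.rpow_add hx0]; norm_num
    calc min (1 / 2) c₂ * (Af μ x / x) * (θ * x) ^ (7 / 8 : ℝ)
        ≤ c₂ * ((Af μ T * x ^ (1 / 8 : ℝ)) / x) * (a * x) ^ (7 / 8 : ℝ) := by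
          gcongr; exact min_le_right _ _
      _ = c₂ * Af μ T * a ^ (7 / 8 : ℝ) * (x ^ (1 / 8 : ℝ) * x ^ (7 / 8 : ℝ)) / x := by
        rw [Real.mul_rpow ha.le hx0.le]; ring
      _ = c₁ := by rw [e, hc₂]; field_simp

/-- Modulus of continuity of `φ` at scale `1/x`; the factor `(θx)^{1/2}` comes from interpolating
`min(ρv, 1) ≤ ρ^{1/2} min(v, 1)^{1/2}` for `ρ ≥ 1`. -/
theorem increment_bound {μ : Measure ℝ} [IsProbabilityMeasure μ]
    (hHa : HaCond μ) (hA : Tendsto (Af μ) atTop atTop) :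
    ∃ C T : ℝ, 0 < C ∧ 1 ≤ T ∧ ∀ x ≥ T, ∀ θ : ℝ, 1 / x ≤ θ →
      ‖charFun μ (θ + Real.pi / x) - charFun μ θ‖ ≤ C * (Af μ x / x) * (θ * x) ^ (1 / 2 : ℝ) := by
  obtain ⟨T₁, hT₁, h0⟩ := charFun_near_zero hHa hA (ε := 1) (by norm_num)
  obtain ⟨T₂, hT₂, hp⟩ := potter hHa (δ := 1) (by norm_num)
  obtain ⟨T₃, hT₃, hs⟩ := P_small hHa hA (ε := 1) (by norm_num)
  have hpi := Real.pi_pos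
  have hpi3 := Real.pi_gt_three
  set T := max (max T₁ T₂) T₃ * Real.pi with hT
  have hT' : max (max T₁ T₂) T₃ ≤ T := by
    rw [hT]
    have : 0 ≤ max (max T₁ T₂) T₃ := le_trans (by linarith) (le_max_right _ _)
    nlinarith
  have a1 : T₁ ≤ max (max T₁ T₂) T₃ := (le_max_left _ _).trans (le_max_left _ _)
  have a2 : T₂ ≤ max (max T₁ T₂) T₃ := (le_max_right _ _).trans (le_max_left _ _)
  have a3 : T₃ ≤ max (max T₁ T₂) T₃ := le_max_right _ _
  refine ⟨2 * Real.pi ^ 2 + 2 * Real.pi, T, by positivity, by linarith, fun x hx θ hθ => ?_⟩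
  have hx0 : 0 < x := by linarith
  have hxp : max (max T₁ T₂) T₃ ≤ x / Real.pi := by rw [le_div_iff₀ hpi]; exact hx
  have hρ : 1 ≤ θ * x := by rwa [div_le_iff₀ hx0] at hθ
  have hAx : 0 < Af μ x := (hp x x (a2.trans (hT'.trans hx)) le_rfl).1
  have hθ0 : 0 < θ := lt_of_lt_of_le (by positivity) hθ
  have hρh : 1 ≤ (θ * x) ^ (1 / 2 : ℝ) := Real.one_le_rpow hρ (by norm_num)
  -- the increment at zero
  have b1 : ‖charFun μ (Real.pi / x) - 1‖ ≤ 2 * Real.pi ^ 2 * (Af μ x / x) := by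
    obtain ⟨g1, g2⟩ := h0 (x / Real.pi) (a1.trans hxp)
    rw [one_div_div] at g2
    have g3 := (hp (x / Real.pi) x (a2.trans hxp)
      (by rw [div_le_iff₀ hpi]; nlinarith)).2.2.2
    have g4 : x / (x / Real.pi) = Real.pi := by field_simp
    rw [g4, Real.rpow_one] at g3
    have g5 := norm_sub_norm_le (1 - charFun μ (Real.pi / x))
        (-(Complex.I * ((Af μ (x / Real.pi) / (x / Real.pi) : ℝ) : ℂ)))
    rw [norm_neg, sub_neg_eq_add, norm_mul, Complex.norm_I, one_mul, Complex.norm_real,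
      Real.norm_eq_abs, abs_of_pos (by positivity), norm_sub_rev] at g5
    calc ‖charFun μ (Real.pi / x) - 1‖ ≤ 2 * (Af μ (x / Real.pi) / (x / Real.pi)) := by linarith
      _ ≤ 2 * ((Af μ x * Real.pi) / (x / Real.pi)) := by gcongr
      _ = _ := by field_simp
  have hPi := Pf_integrable μ hx0
  have b2 : Pf μ x ≤ Af μ x / x := by
    rw [le_div_iff₀ hx0]
    have := hs x (a3.trans (hT'.trans hx)); linarith
  have e1 : charFun μ (θ + Real.pi / x) - charFun μ θ = (charFun μ (Real.pi / x) - 1) +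
      ∫ y : ℝ, (Complex.exp ((θ * y : ℝ) * Complex.I) - 1) *
        (Complex.exp ((Real.pi / x * y : ℝ) * Complex.I) - 1) ∂μ := by
    have i1 := exp_integrable μ (θ + Real.pi / x)
    have i2 := exp_integrable μ θ
    have i3 := exp_integrable μ (Real.pi / x)
    have : ∀ y : ℝ, (Complex.exp ((θ * y : ℝ) * Complex.I) - 1) *
        (Complex.exp ((Real.pi / x * y : ℝ) * Complex.I) - 1)
        = Complex.exp ((θ + Real.pi / x : ℝ) * y * Complex.I) - Complex.exp (θ * y * Complex.I)
          - (Complex.exp ((Real.pi / x : ℝ) * y * Complex.I) - 1) := by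
      intro y
      have : Complex.exp ((θ + Real.pi / x : ℝ) * y * Complex.I)
        = Complex.exp (θ * y * Complex.I) * Complex.exp ((Real.pi / x : ℝ) * y * Complex.I) := by
        rw [← Complex.exp_add]; congr 1; push_cast; ring
      rw [this]; push_cast; ring
    simp_rw [this]
    have i12 : Integrable (fun y : ℝ => Complex.exp ((θ + Real.pi / x : ℝ) * y * Complex.I)
      - Complex.exp (θ * y * Complex.I)) μ := i1.sub i2
    have i31 : Integrable (fun y : ℝ => Complex.exp ((Real.pi / x : ℝ) * y * Complex.I) - 1) μ :=
      i3.sub (integrable_const (1 : ℂ))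
    rw [integral_sub i12 i31, integral_sub i1 i2,
      integral_sub i3 (integrable_const (1 : ℂ)), charFun_apply_real, charFun_apply_real,
      charFun_apply_real]
    simp only [integral_const, probReal_univ, one_smul]
    ring
  have b3 : ‖∫ y : ℝ, (Complex.exp ((θ * y : ℝ) * Complex.I) - 1) *
        (Complex.exp ((Real.pi / x * y : ℝ) * Complex.I) - 1) ∂μ‖
      ≤ ∫ y : ℝ, 2 * Real.pi * (θ * x) ^ (1 / 2 : ℝ) * (min (|y| / x) 1) ^ (3 / 2 : ℝ) ∂μ := by
    refine norm_integral_le_of_norm_le (hPi.const_mul _) (ae_of_all _ fun y => ?_)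
    set v := |y| / x with hv
    have hv0 : 0 ≤ v := by positivity
    have c1 : ‖Complex.exp ((Real.pi / x * y : ℝ) * Complex.I) - 1‖ ≤ Real.pi * min v 1 := by
      refine (exp_sub_one_le _).trans ?_
      rw [abs_mul, abs_of_pos (by positivity : 0 < Real.pi / x)]
      rcases le_total v 1 with h | h
      · rw [min_eq_left h]; refine (min_le_left _ _).trans (le_of_eq ?_); rw [hv]; ring
      · rw [min_eq_right h]; refine (min_le_right _ _).trans ?_; linarith
    have c2 : ‖Complex.exp ((θ * y : ℝ) * Complex.I) - 1‖
        ≤ 2 * ((θ * x) ^ (1 / 2 : ℝ) * (min v 1) ^ (1 / 2 : ℝ)) := by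
      refine (exp_sub_one_le _).trans ?_
      rw [abs_mul, abs_of_pos hθ0]
      have e : θ * |y| = θ * x * v := by rw [hv]; field_simp
      rw [e]
      rcases le_total v 1 with h | h
      · rw [min_eq_left h, ← Real.mul_rpow (by positivity) hv0]
        rcases le_total (θ * x * v) 1 with h' | h'
        · refine (min_le_left _ _).trans ?_
          have := Real.rpow_le_rpow_of_exponent_ge_of_imp (by positivity : 0 ≤ θ * x * v) h'
            (by norm_num : (1 / 2 : ℝ) ≤ 1) (by norm_num)
          rw [Real.rpow_one] at this
          have : 0 ≤ (θ * x * v) ^ (1 / 2 : ℝ) := by positivity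
          linarith
        · refine (min_le_right _ _).trans ?_
          have := Real.one_le_rpow h' (by norm_num : (0 : ℝ) ≤ 1 / 2)
          linarith
      · rw [min_eq_right h, Real.one_rpow]
        refine (min_le_right _ _).trans ?_
        linarith
    have hm0 : 0 ≤ min v 1 := by positivity
    rw [norm_mul]
    calc _ ≤ (2 * ((θ * x) ^ (1 / 2 : ℝ) * (min v 1) ^ (1 / 2 : ℝ))) * (Real.pi * min v 1) := by
          gcongr
      _ = 2 * Real.pi * (θ * x) ^ (1 / 2 : ℝ) * ((min v 1) ^ (1 / 2 : ℝ) * (min v 1)) := by ring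
      _ = _ := by
        congr 1
        rw [← Real.rpow_add_one' hm0 (by norm_num)]; norm_num
  rw [integral_const_mul, ← Pf] at b3
  rw [e1]
  refine (norm_add_le _ _).trans ?_
  have hn : 0 ≤ Af μ x / x := by positivity
  calc _ ≤ 2 * Real.pi ^ 2 * (Af μ x / x) * (θ * x) ^ (1 / 2 : ℝ)
      + 2 * Real.pi * (θ * x) ^ (1 / 2 : ℝ) * (Af μ x / x) := by
        refine add_le_add (b1.trans ?_) (b3.trans ?_)
        · exact le_mul_of_one_le_right (by positivity) hρh
        · gcongr
    _ = _ := by ring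

/-! ### High frequencies -/

/-- The triangular weight `(1 - θ/a)⁺` on the half-line. -/
noncomputable def tri (a θ : ℝ) : ℝ := max (1 - θ / a) 0

theorem tri_nonneg (a θ : ℝ) : 0 ≤ tri a θ := le_max_right _ _

theorem tri_le_one {a θ : ℝ} (ha : 0 < a) (hθ : 0 ≤ θ) : tri a θ ≤ 1 := by
  have : 0 ≤ θ / a := by positivity
  exact max_le (by linarith) zero_le_one

theorem tri_eq_zero {a θ : ℝ} (ha : 0 < a) (hθ : a ≤ θ) : tri a θ = 0 := by
  refine max_eq_right ?_
  rw [sub_nonpos, le_div_iff₀ ha]; linarith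

theorem tri_cont (a : ℝ) : Continuous (tri a) := by unfold tri; fun_prop

theorem tri_lip {a : ℝ} (ha : 0 < a) {θ s : ℝ} (hs : 0 ≤ s) :
    |tri a θ - tri a (θ + s)| ≤ s / a := by
  have h := abs_max_sub_max_le_abs (1 - θ / a) (1 - (θ + s) / a) 0
  refine h.trans (le_of_eq ?_)
  have : 1 - θ / a - (1 - (θ + s) / a) = s / a := by ring
  rw [this, abs_of_nonneg (by positivity)]

/-- The integrand `(1 - θ/a)⁺ e^{-iθx} / (1 - φ(θ))` of the inversion formula. -/
noncomputable def gf (μ : Measure ℝ) (a x θ : ℝ) : ℂ :=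
  (tri a θ : ℂ) / (1 - charFun μ θ) * Complex.exp (-(θ * x : ℝ) * Complex.I)

theorem norm_exp_neg (u : ℝ) : ‖Complex.exp (-(u : ℂ) * Complex.I)‖ = 1 := by
  rw [← Complex.ofReal_neg, Complex.norm_exp_ofReal_mul_I]

theorem norm_gf (μ : Measure ℝ) (a x θ : ℝ) : ‖gf μ a x θ‖ = tri a θ / ‖1 - charFun μ θ‖ := by
  rw [gf, norm_mul, norm_exp_neg, mul_one, norm_div, Complex.norm_real, Real.norm_eq_abs,
    abs_of_nonneg (tri_nonneg _ _)]

theorem gf_cont {μ : Measure ℝ} [IsProbabilityMeasure μ] (harith : ¬ IsArith μ) (a x : ℝ) :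
    ContinuousOn (gf μ a x) (Ioi 0) := by
  unfold gf
  refine ContinuousOn.mul (ContinuousOn.div ?_ ?_ fun θ hθ => ?_) ?_
  · exact (Complex.continuous_ofReal.comp (tri_cont a)).continuousOn
  · exact (continuous_const.sub (charFun_cont μ)).continuousOn
  · rw [sub_ne_zero]; exact (nonarith_ne_one harith hθ).symm
  · fun_prop

theorem gf_ii {μ : Measure ℝ} [IsProbabilityMeasure μ] (harith : ¬ IsArith μ) (a x : ℝ)
    {u v : ℝ} (hu : 0 < u) (hv : 0 < v) : IntervalIntegrable (gf μ a x) volume u v := by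
  refine ((gf_cont harith a x).mono fun θ hθ => ?_).intervalIntegrable
  exact lt_of_lt_of_le (lt_min hu hv) hθ.1

theorem gf_shift (μ : Measure ℝ) {a x θ : ℝ} (hx : 0 < x) :
    gf μ a x (θ + Real.pi / x) = -((tri a (θ + Real.pi / x) : ℂ) /
      (1 - charFun μ (θ + Real.pi / x)) * Complex.exp (-(θ * x : ℝ) * Complex.I)) := by
  have : Complex.exp (-((θ + Real.pi / x) * x : ℝ) * Complex.I)
      = - Complex.exp (-(θ * x : ℝ) * Complex.I) := by
    have e : (θ + Real.pi / x) * x = θ * x + Real.pi := by field_simp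
    rw [e]
    have : -((θ * x + Real.pi : ℝ) : ℂ) * Complex.I = -(θ * x : ℝ) * Complex.I
      - Real.pi * Complex.I := by push_cast; ring
    rw [this, Complex.exp_sub, Complex.exp_pi_mul_I]; ring
  rw [gf, this]; ring

theorem rpow_scaled_integral {x p u v : ℝ} (hx : 0 < x) (hu : 0 < u) (hv : 0 < v) (hp : p ≠ -1) :
    ∫ θ in u..v, (θ * x) ^ p = ((v * x) ^ (p + 1) - (u * x) ^ (p + 1)) / (p + 1) / x := by
  rw [intervalIntegral.integral_comp_mul_right (fun t => t ^ p) hx.ne', integral_rpow]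
  · rw [smul_eq_mul]; ring
  · right; refine ⟨hp, fun h => ?_⟩
    have := lt_of_lt_of_le (lt_min (mul_pos hu hx) (mul_pos hv hx)) h.1
    exact lt_irrefl _ this

theorem rpow_scaled_ii {x p u v : ℝ} (hx : 0 < x) (hu : 0 < u) (hv : 0 < v) :
    IntervalIntegrable (fun θ : ℝ => (θ * x) ^ p) volume u v := by
  refine ContinuousOn.intervalIntegrable (ContinuousOn.rpow_const (by fun_prop) fun θ hθ => ?_)
  left
  exact (mul_pos (lt_of_lt_of_le (lt_min hu hv) hθ.1) hx |> ne_of_gt)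

/-- Frequencies above `B/x` contribute `O(B^{-1/4})/A(x)`: shifting `θ` by `π/x` reverses the sign
of `e^{-iθx}`, so that only the increments of `(1 - θ/a)⁺/(1 - φ)` at scale `π/x` matter. -/
theorem high_freq {μ : Measure ℝ} [IsProbabilityMeasure μ] (harith : ¬ IsArith μ)
    (hHa : HaCond μ) (hA : Tendsto (Af μ) atTop atTop) {a : ℝ} (ha : 0 < a) :
    ∃ C : ℝ, 0 < C ∧ ∀ B : ℝ, 1 ≤ B → ∃ T : ℝ, 1 ≤ T ∧ ∀ x ≥ T, 0 < Af μ x ∧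
      ‖∫ θ in (B / x)..a, gf μ a x θ‖ ≤ C * B ^ (-(1 / 4) : ℝ) / Af μ x := by
  obtain ⟨c₀, T₁, hc₀, hT₁, hlow⟩ := lower_bound harith hHa hA (a := a + 2) (by positivity)
  obtain ⟨C₁, T₂, hC₁, hT₂, hinc⟩ := increment_bound hHa hA
  have hpi := Real.pi_pos
  set C := 1 + 4 * C₁ / c₀ ^ 2 + Real.pi / c₀ with hC
  refine ⟨C, by positivity, fun B hB => ?_⟩
  have hB0 : 0 < B := by linarith
  have hB4 : 0 < B ^ (-(1 / 4) : ℝ) := by positivity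
  -- the Lipschitz part of the weight is negligible as `x → ∞`
  obtain ⟨T₃, hT₃⟩ : ∃ T₃ : ℝ, ∀ x ≥ T₃,
      8 * Real.pi / (a * c₀) * (a + 1) ^ (1 / 8 : ℝ) * x ^ (-(7 / 8) : ℝ) ≤ B ^ (-(1 / 4) : ℝ) := by
    have : Tendsto (fun x : ℝ => 8 * Real.pi / (a * c₀) * (a + 1) ^ (1 / 8 : ℝ) *
        x ^ (-(7 / 8) : ℝ)) atTop (𝓝 (8 * Real.pi / (a * c₀) * (a + 1) ^ (1 / 8 : ℝ) * 0)) :=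
      (tendsto_rpow_neg_atTop (by norm_num : (0 : ℝ) < 7 / 8)).const_mul _
    rw [mul_zero] at this
    exact (this.eventually (eventually_le_nhds hB4)).exists_forall_of_atTop
  set T := T₁ + T₂ + max T₃ 0 + 4 + B / a with hT
  have hm0 : 0 ≤ max T₃ 0 := le_max_right _ _
  have hm3 : T₃ ≤ max T₃ 0 := le_max_left _ _
  have hBa : 0 < B / a := by positivity
  refine ⟨T, by linarith, fun x hx => ?_⟩
  have hx0 : 0 < x := by linarith
  obtain ⟨hAx, hlow⟩ := hlow x (by linarith)
  have hinc := hinc x (by linarith)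
  refine ⟨hAx, ?_⟩
  set n := Af μ x / x with hn
  have hn0 : 0 < n := by positivity
  set s := Real.pi / x with hs
  have hs0 : 0 < s := by positivity
  have hs1 : s ≤ 1 := by
    rw [hs, div_le_one hx0]; linarith [Real.pi_le_four]
  set c := B / x with hc
  have hc0 : 0 < c := by positivity
  have hca : c ≤ a := by
    rw [hc, div_le_iff₀ hx0]
    have : B / a ≤ x := by linarith
    rwa [div_le_iff₀ ha, mul_comm] at this
  have hcx : 1 / x ≤ c := by rw [hc]; gcongr
  have hcB : c * x = B := by rw [hc]; field_simp
  -- extending the range of integration beyond the support of the weight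
  have hz : ∀ v, a ≤ v → ∫ θ in c..v, gf μ a x θ = ∫ θ in c..a, gf μ a x θ := by
    intro v hv
    rw [← intervalIntegral.integral_add_adjacent_intervals (gf_ii harith a x hc0 ha)
      (gf_ii harith a x ha (by linarith : 0 < v))]
    have : ∫ θ in a..v, gf μ a x θ = ∫ θ in a..v, (0 : ℂ) := by
      refine intervalIntegral.integral_congr fun θ hθ => ?_
      rw [uIcc_of_le hv] at hθ
      simp only [gf, tri_eq_zero ha hθ.1]; simp
    rw [this]; simp
  set I := ∫ θ in c..a, gf μ a x θ with hI
  have hsh : ∫ θ in c..(a + 1), gf μ a x (θ + s) = I - ∫ θ in c..(c + s), gf μ a x θ := by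
    rw [intervalIntegral.integral_comp_add_right (fun θ => gf μ a x θ)]
    rw [← hz (a + 1 + s) (by linarith), ← intervalIntegral.integral_add_adjacent_intervals
      (gf_ii harith a x hc0 (by linarith : 0 < c + s)) (gf_ii harith a x
      (by linarith : 0 < c + s) (by linarith : 0 < a + 1 + s))]
    ring
  have hcs := (gf_cont harith a x)
  have hshi : IntervalIntegrable (fun θ => gf μ a x (θ + s)) volume c (a + 1) := by
    refine ContinuousOn.intervalIntegrable (hcs.comp (by fun_prop) fun θ hθ => ?_)
    rw [uIcc_of_le (by linarith)] at hθ
    simp only [mem_Ioi]; linarith [hθ.1]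
  have h2I : 2 * I = (∫ θ in c..(a + 1), (gf μ a x θ + gf μ a x (θ + s)))
      + ∫ θ in c..(c + s), gf μ a x θ := by
    rw [intervalIntegral.integral_add (gf_ii harith a x hc0 (by linarith)) hshi, hsh,
      hz (a + 1) (by linarith)]
    ring
  have hbd : ∀ θ, c ≤ θ → θ ≤ a + 1 → c₀ * n * (θ * x) ^ (7 / 8 : ℝ) ≤ ‖1 - charFun μ θ‖ :=
    fun θ h1 h2 => hlow θ (hcx.trans h1) (by linarith)
  -- pointwise bound on the increments
  have hpt : ∀ θ ∈ Ioc c (a + 1), ‖gf μ a x θ + gf μ a x (θ + s)‖ ≤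
      s / a / (c₀ * n) * (θ * x) ^ (-(7 / 8) : ℝ)
        + C₁ / (c₀ ^ 2 * n) * (θ * x) ^ (-(5 / 4) : ℝ) := by
    intro θ hθ
    have hθ0 : 0 < θ := hc0.trans hθ.1
    have hr : 0 < θ * x := by positivity
    have d1 := hbd θ hθ.1.le hθ.2
    have d2 : c₀ * n * (θ * x) ^ (7 / 8 : ℝ) ≤ ‖1 - charFun μ (θ + s)‖ := by
      refine le_trans ?_ (hlow (θ + s) (by linarith [hθ.1]) (by linarith [hθ.2]))
      gcongr; linarith
    have d3 := hinc θ (hcx.trans hθ.1.le)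
    set q := c₀ * n * (θ * x) ^ (7 / 8 : ℝ) with hq
    have hq0 : 0 < q := by positivity
    have n1 : 1 - charFun μ θ ≠ 0 := norm_pos_iff.1 (lt_of_lt_of_le hq0 d1)
    have n2 : 1 - charFun μ (θ + s) ≠ 0 := norm_pos_iff.1 (lt_of_lt_of_le hq0 d2)
    have e : gf μ a x θ + gf μ a x (θ + s) =
        (((tri a θ - tri a (θ + s) : ℝ) : ℂ) / (1 - charFun μ θ)
          + (tri a (θ + s) : ℂ) * ((charFun μ θ - charFun μ (θ + s)) /
            ((1 - charFun μ θ) * (1 - charFun μ (θ + s))))) *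
          Complex.exp (-(θ * x : ℝ) * Complex.I) := by
      rw [hs, gf_shift μ hx0, gf, ← hs]
      push_cast
      field_simp
      ring
    rw [e, norm_mul, norm_exp_neg, mul_one]
    refine (norm_add_le _ _).trans (add_le_add ?_ ?_)
    · rw [norm_div, Complex.norm_real, Real.norm_eq_abs]
      calc _ ≤ (s / a) / q := by
            gcongr; exact tri_lip ha hs0.le
        _ = _ := by rw [hq, Real.rpow_neg hr.le]; field_simp
    · rw [norm_mul, norm_div, norm_mul, Complex.norm_real, Real.norm_eq_abs,
        abs_of_nonneg (tri_nonneg _ _)]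
      calc _ ≤ 1 * ((C₁ * n * (θ * x) ^ (1 / 2 : ℝ)) / (q * q)) := by
            gcongr
            · exact tri_le_one ha (by positivity)
            · rw [norm_sub_rev]; exact d3
        _ = C₁ / (c₀ ^ 2 * n) * ((θ * x) ^ (1 / 2 : ℝ) /
              ((θ * x) ^ (7 / 8 : ℝ) * (θ * x) ^ (7 / 8 : ℝ))) := by
            rw [hq]; field_simp
        _ = _ := by
            rw [← Real.rpow_add hr, ← Real.rpow_sub hr]; norm_num
  have hca1 : c ≤ a + 1 := by linarith
  have I1 : ‖∫ θ in c..(a + 1), (gf μ a x θ + gf μ a x (θ + s))‖ ≤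
      (1 + 4 * C₁ / c₀ ^ 2) * B ^ (-(1 / 4) : ℝ) / Af μ x := by
    have i1 := (rpow_scaled_ii (p := -(7 / 8)) hx0 hc0 (by linarith : 0 < a + 1)).const_mul
      (s / a / (c₀ * n))
    have i2 := (rpow_scaled_ii (p := -(5 / 4)) hx0 hc0 (by linarith : 0 < a + 1)).const_mul
      (C₁ / (c₀ ^ 2 * n))
    refine (intervalIntegral.norm_integral_le_of_norm_le hca1 (ae_of_all _ hpt)
      (i1.add i2)).trans ?_
    rw [intervalIntegral.integral_add i1 i2, intervalIntegral.integral_const_mul,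
      intervalIntegral.integral_const_mul, rpow_scaled_integral hx0 hc0 (by linarith) (by norm_num),
      rpow_scaled_integral hx0 hc0 (by linarith) (by norm_num), hcB]
    have g1 : s / a / (c₀ * n) * ((((a + 1) * x) ^ (-(7 / 8) + 1 : ℝ) - B ^ (-(7 / 8) + 1 : ℝ))
        / (-(7 / 8) + 1) / x) ≤ B ^ (-(1 / 4) : ℝ) / Af μ x := by
      have : (0 : ℝ) ≤ B ^ (-(7 / 8) + 1 : ℝ) := by positivity
      have e8 : (-(7 / 8) + 1 : ℝ) = 1 / 8 := by norm_num
      rw [e8] at this ⊢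
      have e9 : x ^ (1 / 8 : ℝ) = x ^ (-(7 / 8) : ℝ) * x := by
        rw [← Real.rpow_add_one hx0.ne']; norm_num
      calc _ ≤ s / a / (c₀ * n) * ((((a + 1) * x) ^ (1 / 8 : ℝ)) / (1 / 8) / x) := by
            gcongr; linarith
        _ = (8 * Real.pi / (a * c₀) * (a + 1) ^ (1 / 8 : ℝ) * x ^ (-(7 / 8) : ℝ)) / Af μ x := by
            rw [Real.mul_rpow (by positivity) hx0.le, hs, hn, e9]; field_simp
        _ ≤ _ := by gcongr; exact hT₃ x (by linarith)
    have g2 : C₁ / (c₀ ^ 2 * n) * ((((a + 1) * x) ^ (-(5 / 4) + 1 : ℝ) - B ^ (-(5 / 4) + 1 : ℝ))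
        / (-(5 / 4) + 1) / x) ≤ 4 * C₁ / c₀ ^ 2 * B ^ (-(1 / 4) : ℝ) / Af μ x := by
      have e8 : (-(5 / 4) + 1 : ℝ) = -(1 / 4) := by norm_num
      rw [e8]
      have : (0 : ℝ) ≤ ((a + 1) * x) ^ (-(1 / 4) : ℝ) := by positivity
      calc _ = C₁ / (c₀ ^ 2 * n) * (4 * (B ^ (-(1 / 4) : ℝ) - ((a + 1) * x) ^ (-(1 / 4) : ℝ)) / x)
          := by ring
        _ ≤ C₁ / (c₀ ^ 2 * n) * (4 * B ^ (-(1 / 4) : ℝ) / x) := by gcongr; linarith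
        _ = _ := by rw [hn]; field_simp
    calc _ ≤ _ := add_le_add g1 g2
      _ = _ := by ring
  have I2 : ‖∫ θ in c..(c + s), gf μ a x θ‖ ≤ Real.pi / c₀ * B ^ (-(1 / 4) : ℝ) / Af μ x := by
    have hpt2 : ∀ θ ∈ uIoc c (c + s), ‖gf μ a x θ‖ ≤ B ^ (-(1 / 4) : ℝ) / (c₀ * n) := by
      intro θ hθ
      rw [uIoc_of_le (by linarith)] at hθ
      have hθ0 : 0 < θ := hc0.trans hθ.1
      rw [norm_gf]
      have d1 := hbd θ hθ.1.le (by linarith [hθ.2])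
      have d2 : c₀ * n * B ^ (1 / 4 : ℝ) ≤ c₀ * n * (θ * x) ^ (7 / 8 : ℝ) := by
        gcongr
        calc B ^ (1 / 4 : ℝ) ≤ B ^ (7 / 8 : ℝ) :=
              Real.rpow_le_rpow_of_exponent_le hB (by norm_num)
          _ ≤ _ := by
            rw [← hcB]; gcongr; exact hθ.1.le
      calc tri a θ / ‖1 - charFun μ θ‖ ≤ 1 / (c₀ * n * B ^ (1 / 4 : ℝ)) := by
            gcongr
            · exact tri_le_one ha hθ0.le
            · exact d2.trans d1
        _ = _ := by rw [Real.rpow_neg hB0.le]; field_simp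
    refine (intervalIntegral.norm_integral_le_of_norm_le_const hpt2).trans (le_of_eq ?_)
    rw [add_sub_cancel_left, abs_of_pos hs0, hs, hn]
    field_simp
  have h3 : 2 * ‖I‖ ≤ C * B ^ (-(1 / 4) : ℝ) / Af μ x := by
    have : ‖2 * I‖ = 2 * ‖I‖ := by simp
    rw [← this, h2I]
    refine (norm_add_le _ _).trans ((add_le_add I1 I2).trans (le_of_eq ?_))
    rw [hC]; ring
  linarith [norm_nonneg I]

/-! ### Slow variation and the constant κ -/

/-- Potter bounds in two-sided scaled form. -/
theorem ratio_bounds {μ : Measure ℝ} [IsProbabilityMeasure μ] (hHa : HaCond μ) {δ : ℝ}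
    (hδ : 0 < δ) : ∃ T : ℝ, 1 ≤ T ∧ ∀ y u : ℝ, T ≤ y → 0 < u → T ≤ y * u →
      0 < Af μ y ∧ 0 < Af μ (y * u) ∧
      ((max u u⁻¹) ^ δ)⁻¹ ≤ Af μ y / Af μ (y * u) ∧ Af μ y / Af μ (y * u) ≤ (max u u⁻¹) ^ δ := by
  obtain ⟨T, hT, hp⟩ := potter hHa hδ
  refine ⟨T, hT, fun y u hy hu hyu => ?_⟩
  have hy0 : 0 < y := by linarith
  rcases le_total 1 u with h | h
  · have hm : max u u⁻¹ = u := max_eq_left ((inv_le_one_of_one_le₀ h).trans h)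
    obtain ⟨h1, h2, h3, h4⟩ := hp y (y * u) hy (le_mul_of_one_le_right hy0.le h)
    have e : y * u / y = u := by field_simp
    rw [e] at h3 h4
    refine ⟨h1, h2, ?_, ?_⟩
    · rw [hm, inv_le_comm₀ (by positivity) (by positivity), inv_div, div_le_iff₀ h1]; linarith
    · rw [hm, div_le_iff₀ h2]; linarith
  · have hm : max u u⁻¹ = u⁻¹ := max_eq_right (h.trans ((one_le_inv₀ hu).2 h))
    obtain ⟨h1, h2, h3, h4⟩ := hp (y * u) y hyu (mul_le_of_le_one_right hy0.le h)
    have e : y / (y * u) = u⁻¹ := by field_simp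
    rw [e] at h3 h4
    refine ⟨h2, h1, ?_, ?_⟩
    · rw [hm, inv_le_comm₀ (by positivity) (by positivity), inv_div, div_le_iff₀ h2]; linarith
    · rw [hm, div_le_iff₀ h1]; linarith

/-- `A` is slowly varying. -/
theorem slow {μ : Measure ℝ} [IsProbabilityMeasure μ] (hHa : HaCond μ) {u : ℝ} (hu : 0 < u) :
    Tendsto (fun y => Af μ y / Af μ (y * u)) atTop (𝓝 1) := by
  have hm0 : 0 < max u u⁻¹ := lt_max_of_lt_left hu
  have hc : Tendsto (fun δ : ℝ => (max u u⁻¹) ^ δ) (𝓝[>] 0) (𝓝 1) := by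
    have : ContinuousAt (fun δ : ℝ => (max u u⁻¹) ^ δ) 0 :=
      Real.continuousAt_const_rpow hm0.ne'
    have := this.tendsto
    rw [Real.rpow_zero] at this
    exact this.mono_left nhdsWithin_le_nhds
  have hci : Tendsto (fun δ : ℝ => ((max u u⁻¹) ^ δ)⁻¹) (𝓝[>] 0) (𝓝 1) := by
    have := hc.inv₀ one_ne_zero; rwa [inv_one] at this
  have key : ∀ δ : ℝ, 0 < δ → ∀ᶠ y in atTop, ((max u u⁻¹) ^ δ)⁻¹ ≤ Af μ y / Af μ (y * u) ∧
      Af μ y / Af μ (y * u) ≤ (max u u⁻¹) ^ δ := by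
    intro δ hδ
    obtain ⟨T, hT, h⟩ := ratio_bounds hHa hδ
    filter_upwards [eventually_ge_atTop T, eventually_ge_atTop (T / u)] with y h1 h2
    rw [div_le_iff₀ hu] at h2
    exact (h y u h1 hu h2).2.2
  rw [tendsto_order]
  constructor
  · intro b hb
    obtain ⟨δ, h1, h2⟩ := ((hci.eventually (lt_mem_nhds hb)).and self_mem_nhdsWithin).exists
    filter_upwards [key δ h2] with y hy using h1.trans_le hy.1
  · intro b hb
    obtain ⟨δ, h1, h2⟩ := ((hc.eventually (gt_mem_nhds hb)).and self_mem_nhdsWithin).exists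
    filter_upwards [key δ h2] with y hy using hy.2.trans_lt h1

/-- The constant `∫₀^∞ (1 - cos u)/u² du`; its value `π/2` plays no role. -/
noncomputable def kap : ℝ := ∫ u in Ioi (0 : ℝ), (1 - Real.cos u) / u ^ 2

theorem one_sub_cos_le (u : ℝ) : 1 - Real.cos u ≤ u ^ 2 / 2 := by
  linarith [Real.one_sub_sq_div_two_le_cos (x := u)]

theorem one_sub_cos_nonneg (u : ℝ) : 0 ≤ 1 - Real.cos u := by linarith [Real.cos_le_one u]

theorem one_sub_cos_le_two (u : ℝ) : 1 - Real.cos u ≤ 2 := by linarith [Real.neg_one_le_cos u]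

theorem kap_int_weight :
    IntegrableOn (fun u : ℝ => (1 - Real.cos u) / u ^ 2 * (max u u⁻¹) ^ (1 / 4 : ℝ)) (Ioi 0) := by
  have hm : Measurable (fun u : ℝ => (1 - Real.cos u) / u ^ 2 * (max u u⁻¹) ^ (1 / 4 : ℝ)) := by
    fun_prop
  rw [← Ioc_union_Ioi_eq_Ioi (zero_le_one' ℝ)]
  refine IntegrableOn.union ?_ ?_
  · have h1 : IntegrableOn (fun u : ℝ => u ^ (-(1 / 4) : ℝ)) (Ioc 0 1) :=
      (intervalIntegral.intervalIntegrable_rpow' (by norm_num)).1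
    refine Integrable.mono' h1 hm.aestronglyMeasurable ?_
    filter_upwards [ae_restrict_mem measurableSet_Ioc] with u hu
    have hmx : max u u⁻¹ = u⁻¹ := max_eq_right (hu.2.trans ((one_le_inv₀ hu.1).2 hu.2))
    rw [hmx, Real.norm_eq_abs, abs_of_nonneg (mul_nonneg (div_nonneg (one_sub_cos_nonneg u)
      (by positivity)) (by have := hu.1; positivity)), Real.inv_rpow hu.1.le, ← Real.rpow_neg hu.1.le]
    have : (1 - Real.cos u) / u ^ 2 ≤ 1 := by
      rw [div_le_one (by have := hu.1; positivity)]
      linarith [one_sub_cos_le u, sq_nonneg u]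
    exact mul_le_of_le_one_left (by have := hu.1; positivity) this
  · have h1 : IntegrableOn (fun u : ℝ => 2 * u ^ (-(7 / 4) : ℝ)) (Ioi 1) :=
      (integrableOn_Ioi_rpow_of_lt (by norm_num) zero_lt_one).const_mul 2
    refine Integrable.mono' h1 hm.aestronglyMeasurable ?_
    filter_upwards [ae_restrict_mem measurableSet_Ioi] with u hu
    have hu1 : 1 ≤ u := le_of_lt hu
    have hu0 : 0 < u := by linarith
    have hmx : max u u⁻¹ = u := max_eq_left ((inv_le_one_of_one_le₀ hu1).trans hu1)
    rw [hmx, Real.norm_eq_abs, abs_of_nonneg (mul_nonneg (div_nonneg (one_sub_cos_nonneg u)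
      (by positivity)) (by positivity))]
    calc (1 - Real.cos u) / u ^ 2 * u ^ (1 / 4 : ℝ) ≤ 2 / u ^ 2 * u ^ (1 / 4 : ℝ) := by
          gcongr; exact one_sub_cos_le_two u
      _ = 2 * (u ^ (1 / 4 : ℝ) / u ^ (2 : ℝ)) := by rw [Real.rpow_two]; ring
      _ = _ := by rw [← Real.rpow_sub hu0]; norm_num

theorem one_le_max_inv {u : ℝ} (hu : 0 < u) : 1 ≤ max u u⁻¹ := by
  rcases le_total 1 u with h | h
  · exact le_max_of_le_left h
  · exact le_max_of_le_right ((one_le_inv₀ hu).2 h)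

theorem kap_int : IntegrableOn (fun u : ℝ => (1 - Real.cos u) / u ^ 2) (Ioi 0) := by
  refine Integrable.mono' kap_int_weight (by fun_prop : Measurable _).aestronglyMeasurable ?_
  filter_upwards [ae_restrict_mem measurableSet_Ioi] with u hu
  rw [Real.norm_eq_abs, abs_of_nonneg (div_nonneg (one_sub_cos_nonneg u) (by positivity))]
  exact le_mul_of_one_le_right (div_nonneg (one_sub_cos_nonneg u) (by positivity))
    (Real.one_le_rpow (one_le_max_inv hu) (by norm_num))

theorem kap_pos : 0 < kap := by
  unfold kap
  rw [setIntegral_pos_iff_support_of_nonneg_ae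
    (ae_of_all _ fun u => div_nonneg (one_sub_cos_nonneg u) (by positivity)) kap_int]
  refine lt_of_lt_of_le (b := volume (Ioo (0 : ℝ) 1)) (by simp) (measure_mono fun u hu => ?_)
  refine ⟨?_, hu.1⟩
  have : Real.cos u < 1 := by
    have := Real.cos_lt_cos_of_nonneg_of_le_pi le_rfl (by linarith [Real.pi_gt_three, hu.2]) hu.1
    rwa [Real.cos_zero] at this
  have h2 := hu.1
  simp only [Function.mem_support]
  have : 0 < (1 - Real.cos u) / u ^ 2 := by
    apply div_pos (by linarith); positivity
  exact ne_of_gt this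

/-- Dominated convergence along `A(y)/A(yw(u))`, where `w(u)` is `u` or `1/u`. -/
theorem slow_dct {μ : Measure ℝ} [IsProbabilityMeasure μ] (hHa : HaCond μ) {T₀ : ℝ}
    (hb : ∀ y u : ℝ, T₀ ≤ y → 0 < u → T₀ ≤ y * u →
      0 < Af μ y ∧ 0 < Af μ (y * u) ∧ Af μ y / Af μ (y * u) ≤ (max u u⁻¹) ^ (1 / 8 : ℝ))
    {g w : ℝ → ℝ} (hw : ∀ u > 0, w u = u ∨ w u = u⁻¹) (hwm : Measurable w) (hgm : Measurable g)
    (hg : IntegrableOn (fun u => g u * (max u u⁻¹) ^ (1 / 4 : ℝ)) (Ioi 0)) :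
    Tendsto (fun y => ∫ u in Ioi 0, {u | T₀ ≤ y * w u}.indicator
        (fun u => g u * (Af μ y / Af μ (y * w u)) ^ 2) u) atTop (𝓝 (∫ u in Ioi 0, g u)) := by
  have hAm : Measurable (Af μ) := (Af_cont μ).measurable
  have hwp : ∀ u > 0, 0 < w u ∧ max (w u) (w u)⁻¹ = max u u⁻¹ := by
    intro u hu
    rcases hw u hu with h | h
    · rw [h]; exact ⟨hu, rfl⟩
    · rw [h, inv_inv, max_comm]; exact ⟨by positivity, rfl⟩
  have hms : ∀ y, MeasurableSet {u | T₀ ≤ y * w u} := fun y =>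
    measurableSet_le measurable_const (hwm.const_mul y)
  refine tendsto_integral_filter_of_dominated_convergence
    (fun u => ‖g u * (max u u⁻¹) ^ (1 / 4 : ℝ)‖) (Eventually.of_forall fun y => ?_) ?_ hg.norm ?_
  · refine Measurable.aestronglyMeasurable (Measurable.indicator ?_ (hms y))
    exact hgm.mul ((measurable_const.div (hAm.comp (hwm.const_mul y))).pow_const 2)
  · filter_upwards [eventually_ge_atTop T₀] with y hy
    filter_upwards [ae_restrict_mem measurableSet_Ioi] with u hu
    by_cases h : T₀ ≤ y * w u
    · rw [indicator_of_mem (by exact h), norm_mul, norm_mul]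
      obtain ⟨h0, h1, h2⟩ := hb y (w u) hy (hwp u hu).1 h
      rw [(hwp u hu).2] at h2
      gcongr
      have hu0 : (0 : ℝ) < u := hu
      have hmm := one_le_max_inv hu0
      rw [norm_pow, Real.norm_of_nonneg (by positivity), Real.norm_of_nonneg (by positivity)]
      calc _ ≤ ((max u u⁻¹) ^ (1 / 8 : ℝ)) ^ 2 := by gcongr
        _ = _ := by
          rw [← Real.rpow_natCast, ← Real.rpow_mul (by positivity)]; norm_num
    · rw [indicator_of_notMem (by exact h), norm_zero]; exact norm_nonneg _
  · filter_upwards [ae_restrict_mem measurableSet_Ioi] with u hu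
    have hs := slow hHa (hwp u hu).1
    have h2 : Tendsto (fun y => g u * (Af μ y / Af μ (y * w u)) ^ 2) atTop (𝓝 (g u * 1 ^ 2)) :=
      (hs.pow 2).const_mul _
    rw [one_pow, mul_one] at h2
    refine h2.congr' ?_
    filter_upwards [eventually_ge_atTop (T₀ / w u)] with y hy
    rw [div_le_iff₀ (hwp u hu).1] at hy
    rw [indicator_of_mem (by exact hy)]

/-! ### The functions Φ and Ψ -/

/-- `Φ_x(y) = ∫₀^{1/x} (1 - cos θy)/(θA(1/θ))² dθ`. -/
noncomputable def Phf (μ : Measure ℝ) (x y : ℝ) : ℝ :=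
  ∫ θ in Ioc 0 (1 / x), (1 - Real.cos (θ * y)) / (θ * Af μ (1 / θ)) ^ 2

/-- `Ψ_x(y) = ∫_x^y dt/A(t)²`, and `0` for `y ≤ x`. -/
noncomputable def Psf (μ : Measure ℝ) (x y : ℝ) : ℝ := ∫ t in Ioc x y, 1 / (Af μ t) ^ 2

/-- Positivity of `A` and the Potter bound with exponent `1/8` beyond `T₀`. -/
def PotterAt (μ : Measure ℝ) (T₀ : ℝ) : Prop :=
  1 ≤ T₀ ∧ ∀ y u : ℝ, T₀ ≤ y → 0 < u → T₀ ≤ y * u →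
      0 < Af μ y ∧ 0 < Af μ (y * u) ∧ Af μ y / Af μ (y * u) ≤ (max u u⁻¹) ^ (1 / 8 : ℝ)

theorem exists_potterAt {μ : Measure ℝ} [IsProbabilityMeasure μ] (hHa : HaCond μ) :
    ∃ T₀, PotterAt μ T₀ := by
  obtain ⟨T, hT, h⟩ := ratio_bounds hHa (δ := 1 / 8) (by norm_num)
  exact ⟨T, hT, fun y u h1 h2 h3 => ⟨(h y u h1 h2 h3).1, (h y u h1 h2 h3).2.1,
    (h y u h1 h2 h3).2.2.2⟩⟩

theorem PotterAt.pos {μ : Measure ℝ} {T₀ : ℝ} (h : PotterAt μ T₀) {x : ℝ} (hx : T₀ ≤ x) :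
    0 < Af μ x := (h.2 x 1 hx one_pos (by linarith)).1

theorem PotterAt.ratio {μ : Measure ℝ} {T₀ : ℝ} (h : PotterAt μ T₀) {x θ : ℝ} (hx : T₀ ≤ x)
    (hθ : 0 < θ) (hθ2 : θ ≤ 1 / T₀) :
    0 < Af μ (1 / θ) ∧ Af μ x / Af μ (1 / θ) ≤ (max (θ * x) (θ * x)⁻¹) ^ (1 / 8 : ℝ) := by
  have hT0 : 0 < T₀ := by linarith [h.1]
  have hx0 : 0 < x := by linarith
  have e : x * (θ * x)⁻¹ = 1 / θ := by field_simp
  have := h.2 x (θ * x)⁻¹ hx (by positivity) (by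
    rw [e, le_div_iff₀ hθ]; rwa [le_div_iff₀ hT0, mul_comm] at hθ2)
  rw [e, inv_inv, max_comm] at this
  exact this.2

theorem PotterAt.inv_sq {μ : Measure ℝ} {T₀ : ℝ} (h : PotterAt μ T₀) {x θ : ℝ} (hx : T₀ ≤ x)
    (hθ : 0 < θ) (hθ2 : θ ≤ 1 / T₀) :
    1 / (Af μ (1 / θ)) ^ 2 ≤ (max (θ * x) (θ * x)⁻¹) ^ (1 / 4 : ℝ) / (Af μ x) ^ 2 := by
  have hx0 : 0 < x := by linarith [h.1]
  obtain ⟨h1, h2⟩ := h.ratio hx hθ hθ2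
  have h0 := h.pos hx
  have hm : 0 ≤ max (θ * x) (θ * x)⁻¹ := le_max_of_le_left (by positivity)
  have e : (max (θ * x) (θ * x)⁻¹) ^ (1 / 4 : ℝ) = ((max (θ * x) (θ * x)⁻¹) ^ (1 / 8 : ℝ)) ^ 2 := by
    rw [← Real.rpow_natCast, ← Real.rpow_mul hm]; norm_num
  rw [e, le_div_iff₀ (by positivity)]
  calc 1 / Af μ (1 / θ) ^ 2 * Af μ x ^ 2 = (Af μ x / Af μ (1 / θ)) ^ 2 := by ring
    _ ≤ _ := by gcongr

theorem Phf_meas (μ : Measure ℝ) [IsProbabilityMeasure μ] :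
    Measurable (fun p : ℝ × ℝ => (1 - Real.cos (p.2 * p.1)) / (p.2 * Af μ (1 / p.2)) ^ 2) := by
  have hAm : Measurable (Af μ) := (Af_cont μ).measurable
  have : Measurable (fun p : ℝ × ℝ => Af μ (1 / p.2)) := hAm.comp (measurable_snd.const_div 1)
  exact (by fun_prop : Measurable (fun p : ℝ × ℝ => 1 - Real.cos (p.2 * p.1))).div
    ((measurable_snd.mul this).pow_const 2)

theorem Phf_integrand_nonneg (μ : Measure ℝ) (y θ : ℝ) :
    0 ≤ (1 - Real.cos (θ * y)) / (θ * Af μ (1 / θ)) ^ 2 :=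
  div_nonneg (one_sub_cos_nonneg _) (sq_nonneg _)

theorem scaled_rpow_Ioc {x p : ℝ} (hx : 0 < x) (hp : -1 < p) :
    IntegrableOn (fun θ : ℝ => (θ * x) ^ p) (Ioc 0 (1 / x)) ∧
      ∫ θ in Ioc 0 (1 / x), (θ * x) ^ p = 1 / (p + 1) / x := by
  have h1 : (0 : ℝ) ≤ 1 / x := by positivity
  constructor
  · have := (intervalIntegral.intervalIntegrable_rpow' (a := 0) (b := 1) hp).comp_mul_right (c := x)
    rw [zero_div] at this
    exact this.1
  · rw [← intervalIntegral.integral_of_le h1,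
      intervalIntegral.integral_comp_mul_right (fun t => t ^ p) hx.ne', integral_rpow (Or.inl hp)]
    rw [zero_mul, one_div_mul_cancel hx.ne', Real.one_rpow, Real.zero_rpow (by linarith),
      smul_eq_mul]
    ring

/-- Uniform bound on the integrand near zero. -/
theorem Phf_integrand_le {μ : Measure ℝ} {T₀ : ℝ} (h : PotterAt μ T₀) {x θ : ℝ} (hx : T₀ ≤ x)
    (hθ : θ ∈ Ioc 0 (1 / x)) (y : ℝ) :
    (1 - Real.cos (θ * y)) / (θ * Af μ (1 / θ)) ^ 2 ≤
      y ^ 2 / 2 / (Af μ x) ^ 2 * (θ * x) ^ (-(1 / 4) : ℝ) := by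
  have hT0 : 0 < T₀ := by linarith [h.1]
  have hx0 : 0 < x := by linarith
  have hθ0 := hθ.1
  have h1 := h.inv_sq hx hθ.1 (hθ.2.trans (by gcongr))
  have hr : θ * x ≤ 1 := by have := hθ.2; rwa [le_div_iff₀ hx0] at this
  have hr0 : 0 < θ * x := by positivity
  rw [max_eq_right (hr.trans ((one_le_inv₀ hr0).2 hr)), Real.inv_rpow hr0.le,
    ← Real.rpow_neg hr0.le] at h1
  calc (1 - Real.cos (θ * y)) / (θ * Af μ (1 / θ)) ^ 2
      ≤ ((θ * y) ^ 2 / 2) / (θ * Af μ (1 / θ)) ^ 2 := by gcongr; exact one_sub_cos_le _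
    _ = y ^ 2 / 2 * (1 / (Af μ (1 / θ)) ^ 2) := by
      rw [mul_pow, mul_pow]; field_simp
    _ ≤ y ^ 2 / 2 * ((θ * x) ^ (-(1 / 4) : ℝ) / (Af μ x) ^ 2) := by gcongr
    _ = _ := by ring

theorem Phf_integrable {μ : Measure ℝ} [IsProbabilityMeasure μ] {T₀ : ℝ} (h : PotterAt μ T₀)
    {x : ℝ} (hx : T₀ ≤ x) (y : ℝ) :
    IntegrableOn (fun θ => (1 - Real.cos (θ * y)) / (θ * Af μ (1 / θ)) ^ 2) (Ioc 0 (1 / x)) := by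
  have hx0 : 0 < x := by linarith [h.1]
  refine Integrable.mono' ((scaled_rpow_Ioc hx0 (by norm_num : (-1 : ℝ) < -(1 / 4))).1.const_mul
    (y ^ 2 / 2 / (Af μ x) ^ 2))
    ((Phf_meas μ).comp (measurable_const.prodMk measurable_id :
      Measurable fun θ : ℝ => (y, θ))).aestronglyMeasurable ?_
  filter_upwards [ae_restrict_mem measurableSet_Ioc] with θ hθ
  rw [Real.norm_eq_abs, abs_of_nonneg (Phf_integrand_nonneg μ y θ)]
  exact Phf_integrand_le h hx hθ y

/-- Quadratic bound on `Φ_x`, efficient for `|y| ≤ x`. -/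
theorem Phf_le {μ : Measure ℝ} [IsProbabilityMeasure μ] {T₀ : ℝ} (h : PotterAt μ T₀)
    {x : ℝ} (hx : T₀ ≤ x) (y : ℝ) : Phf μ x y ≤ x / (Af μ x) ^ 2 * (y / x) ^ 2 := by
  have hx0 : 0 < x := by linarith [h.1]
  have hA := h.pos hx
  obtain ⟨h1, h2⟩ := scaled_rpow_Ioc hx0 (by norm_num : (-1 : ℝ) < -(1 / 4))
  have h3 : Phf μ x y ≤ ∫ θ in Ioc 0 (1 / x), y ^ 2 / 2 / (Af μ x) ^ 2 * (θ * x) ^ (-(1 / 4) : ℝ) :=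
    setIntegral_mono_on (Phf_integrable h hx y) (h1.const_mul _) measurableSet_Ioc
      fun θ hθ => Phf_integrand_le h hx hθ y
  refine h3.trans ?_
  rw [integral_const_mul, h2]
  have : y ^ 2 / 2 / Af μ x ^ 2 * (1 / (-(1 / 4) + 1) / x)
    = 2 / 3 * (x / (Af μ x) ^ 2 * (y / x) ^ 2) := by field_simp; norm_num
  rw [this]
  have : 0 ≤ x / (Af μ x) ^ 2 * (y / x) ^ 2 := by positivity
  linarith

theorem Phf_nonneg (μ : Measure ℝ) (x y : ℝ) : 0 ≤ Phf μ x y :=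
  integral_nonneg fun θ => Phf_integrand_nonneg μ y θ

/-- `Φ(y) ~ κ y/A(y)²`, by the substitution `θ = u/y` and slow variation. -/
theorem Phf_lim {μ : Measure ℝ} [IsProbabilityMeasure μ] (hHa : HaCond μ) {T₀ : ℝ}
    (h : PotterAt μ T₀) :
    Tendsto (fun y => (Af μ y) ^ 2 / y * Phf μ T₀ y) atTop (𝓝 kap) := by
  have hT0 : 0 < T₀ := by linarith [h.1]
  have h1 := slow_dct hHa h.2 (g := fun u => (1 - Real.cos u) / u ^ 2) (w := fun u => u⁻¹)
    (fun u _ => Or.inr rfl) measurable_inv (by fun_prop) kap_int_weight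
  refine h1.congr' ?_
  filter_upwards [eventually_gt_atTop 0] with y hy
  set f : ℝ → ℝ := fun θ => (1 - Real.cos (θ * y)) / (θ * Af μ (1 / θ)) ^ 2 with hf
  have e1 : Phf μ T₀ y = ∫ θ in Ioi 0, (Ioc 0 (1 / T₀)).indicator f θ := by
    rw [Phf, setIntegral_indicator measurableSet_Ioc]
    congr 2
    rw [inter_eq_right.2 Ioc_subset_Ioi_self]
  have e2 := integral_comp_mul_left_Ioi (fun θ => (Ioc 0 (1 / T₀)).indicator f θ) 0
    (inv_pos.2 hy)
  rw [mul_zero, inv_inv, ← e1, smul_eq_mul] at e2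
  have e3 : Phf μ T₀ y = y⁻¹ * ∫ u in Ioi 0, (Ioc 0 (1 / T₀)).indicator f (y⁻¹ * u) := by
    rw [e2]; field_simp
  rw [e3, ← mul_assoc, ← integral_const_mul]
  refine setIntegral_congr_fun measurableSet_Ioi fun u hu => ?_
  have hu0 : (0 : ℝ) < u := hu
  have hiff : y⁻¹ * u ∈ Ioc 0 (1 / T₀) ↔ u ∈ {u | T₀ ≤ y * u⁻¹} := by
    simp only [mem_Ioc, mem_ofPred_eq]
    rw [le_div_iff₀ hT0, ← div_eq_mul_inv, le_div_iff₀ hu0, inv_mul_eq_div, div_mul_eq_mul_div,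
      div_le_one hy, mul_comm u]
    exact ⟨fun h => h.2, fun h => ⟨by positivity, h⟩⟩
  by_cases hc : u ∈ {u | T₀ ≤ y * u⁻¹}
  · simp only [indicator_of_mem hc, indicator_of_mem (hiff.2 hc), hf]
    have q1 : y⁻¹ * u * y = u := by field_simp
    have q2 : 1 / (y⁻¹ * u) = y * u⁻¹ := by field_simp
    rw [q1, q2]
    field_simp
  · simp only [indicator_of_notMem hc, indicator_of_notMem (fun h => hc (hiff.1 h)), mul_zero]

/-- `Ψ(y) ~ y/A(y)²`, by the substitution `t = yu` and slow variation. -/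
theorem Psf_lim {μ : Measure ℝ} [IsProbabilityMeasure μ] (hHa : HaCond μ) {T₀ : ℝ}
    (h : PotterAt μ T₀) :
    Tendsto (fun y => (Af μ y) ^ 2 / y * Psf μ T₀ y) atTop (𝓝 1) := by
  have hT0 : 0 < T₀ := by linarith [h.1]
  have hgi : IntegrableOn (fun u : ℝ => (Ioc (0 : ℝ) 1).indicator (fun _ => (1 : ℝ)) u *
      (max u u⁻¹) ^ (1 / 4 : ℝ)) (Ioi 0) := by
    have h1 : IntegrableOn (fun u : ℝ => u ^ (-(1 / 4) : ℝ)) (Ioc 0 1) :=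
      (intervalIntegral.intervalIntegrable_rpow' (by norm_num)).1
    rw [← integrable_indicator_iff measurableSet_Ioc] at h1
    refine h1.integrableOn.congr_fun (fun u hu => ?_) measurableSet_Ioi
    by_cases hc : u ∈ Ioc (0 : ℝ) 1
    · simp only [indicator_of_mem hc, one_mul]
      rw [max_eq_right (hc.2.trans ((one_le_inv₀ hc.1).2 hc.2)), Real.inv_rpow hc.1.le,
        Real.rpow_neg hc.1.le]
    · simp only [indicator_of_notMem hc, zero_mul]
  have h1 := slow_dct hHa h.2 (g := (Ioc (0 : ℝ) 1).indicator (fun _ => (1 : ℝ))) (w := fun u => u)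
    (fun u _ => Or.inl rfl) measurable_id (measurable_const.indicator measurableSet_Ioc) hgi
  have hone : ∫ u in Ioi 0, (Ioc (0 : ℝ) 1).indicator (fun _ => (1 : ℝ)) u = 1 := by
    rw [setIntegral_indicator measurableSet_Ioc, inter_eq_right.2 Ioc_subset_Ioi_self]; simp
  rw [hone] at h1
  refine h1.congr' ?_
  filter_upwards [eventually_gt_atTop 0] with y hy
  set f : ℝ → ℝ := fun t => 1 / (Af μ t) ^ 2 with hf
  have e1 : Psf μ T₀ y = ∫ θ in Ioi 0, (Icc T₀ y).indicator f θ := by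
    rw [Psf, setIntegral_indicator measurableSet_Icc, ← integral_Icc_eq_integral_Ioc]
    congr 2
    ext θ
    simp only [mem_Icc, mem_inter_iff, mem_Ioi]
    exact ⟨fun h => ⟨by linarith [h.1], h⟩, fun h => h.2⟩
  have e2 := integral_comp_mul_left_Ioi (fun θ => (Icc T₀ y).indicator f θ) 0 hy
  rw [mul_zero, ← e1, smul_eq_mul] at e2
  have e3 : Psf μ T₀ y = y * ∫ u in Ioi 0, (Icc T₀ y).indicator f (y * u) := by
    rw [e2]; field_simp
  rw [e3, ← mul_assoc, ← integral_const_mul]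
  refine setIntegral_congr_fun measurableSet_Ioi fun u hu => ?_
  have hu0 : (0 : ℝ) < u := hu
  by_cases hc : u ∈ {u | T₀ ≤ y * u}
  · by_cases h1 : u ≤ 1
    · have hm : y * u ∈ Icc T₀ y := ⟨hc, by nlinarith⟩
      simp only [indicator_of_mem hc, indicator_of_mem hm, hf,
        indicator_of_mem (show u ∈ Ioc (0 : ℝ) 1 from ⟨hu0, h1⟩)]
      field_simp
    · have hm : y * u ∉ Icc T₀ y := fun h => h1 (by have := h.2; nlinarith)
      simp only [indicator_of_mem hc, indicator_of_notMem hm,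
        indicator_of_notMem (show u ∉ Ioc (0 : ℝ) 1 from fun h => h1 h.2)]
      simp
  · have hm : y * u ∉ Icc T₀ y := fun h => hc h.1
    simp only [indicator_of_notMem hc, indicator_of_notMem hm, mul_zero]

/-! ### The integral of the real part of `1 - φ` -/

theorem Phf_abs (μ : Measure ℝ) (x y : ℝ) : Phf μ x |y| = Phf μ x y := by
  rcases abs_choice y with h | h
  · rw [h]
  · rw [h]; unfold Phf; simp only [mul_neg, Real.cos_neg]

theorem Psf_nonneg (μ : Measure ℝ) (x y : ℝ) : 0 ≤ Psf μ x y :=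
  integral_nonneg fun t => by positivity

/-- Pointwise in `y`, `Φ_x(y) = κΨ_x(y)` up to a small multiple of `Ψ_x(y)` and the integrand of
`P(x)`. -/
theorem Phi_Psi {μ : Measure ℝ} [IsProbabilityMeasure μ] (hHa : HaCond μ) {T₀ : ℝ}
    (h : PotterAt μ T₀) : ∃ C : ℝ, 0 < C ∧ ∀ ε : ℝ, 0 < ε → ε ≤ 1 → ∃ T : ℝ, T₀ ≤ T ∧
      ∀ x ≥ T, ∀ y : ℝ, 0 ≤ y → |Phf μ x y - kap * Psf μ x y| ≤
        ε * Psf μ x y + C * (x / (Af μ x) ^ 2) * (min (y / x) 1) ^ (3 / 2 : ℝ) := by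
  have hk := kap_pos
  have hT0 : 0 < T₀ := by linarith [h.1]
  refine ⟨8 / 3 + 3 / 2 * (kap + 1), by positivity, fun ε hε hε1 => ?_⟩
  set ε' := ε / (2 * (1 + kap)) with hε'
  have hε'0 : 0 < ε' := by positivity
  have hε'2 : ε' ≤ 1 / 2 := by
    rw [hε', div_le_iff₀ (by positivity)]; nlinarith
  have he' : 2 * (1 + kap) * ε' = ε := by rw [hε']; field_simp
  obtain ⟨Y, hY⟩ := (((Phf_lim hHa h).eventually (Metric.closedBall_mem_nhds _ hε'0)).and
    ((Psf_lim hHa h).eventually (Metric.closedBall_mem_nhds _ hε'0))).exists_forall_of_atTop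
  -- consequences at a single large point
  have hpt : ∀ y, max Y T₀ ≤ y → |Phf μ T₀ y - kap * Psf μ T₀ y| ≤ ε * Psf μ T₀ y ∧
      Psf μ T₀ y ≤ 3 / 2 * (y / (Af μ y) ^ 2) := by
    intro y hy
    obtain ⟨h1, h2⟩ := hY y ((le_max_left _ _).trans hy)
    rw [Real.dist_eq] at h1 h2
    have hy0 : 0 < y := hT0.trans_le ((le_max_right _ _).trans hy)
    have hA := h.pos ((le_max_right _ _).trans hy)
    set q := y / (Af μ y) ^ 2 with hq
    have hq0 : 0 < q := by positivity
    have eq1 : Af μ y ^ 2 / y = q⁻¹ := by rw [hq, inv_div]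
    rw [eq1, abs_le] at h1 h2
    have a1 : Phf μ T₀ y = q * (q⁻¹ * Phf μ T₀ y) := by field_simp
    have a2 : Psf μ T₀ y = q * (q⁻¹ * Psf μ T₀ y) := by field_simp
    set u := q⁻¹ * Phf μ T₀ y
    set v := q⁻¹ * Psf μ T₀ y
    rw [a1, a2]
    have hv : 1 / 2 ≤ v := by linarith
    refine ⟨?_, by nlinarith⟩
    have e : q * u - kap * (q * v) = q * (u - kap * v) := by ring
    have e2 : ε * (q * v) = q * (ε * v) := by ring
    rw [e, e2, abs_mul, abs_of_pos hq0]
    gcongr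
    have : |u - kap * v| ≤ ε' + kap * ε' := by rw [abs_le]; constructor <;> nlinarith
    nlinarith
  refine ⟨max Y T₀, le_max_right _ _, fun x hx y hy => ?_⟩
  have hxT : T₀ ≤ x := (le_max_right _ _).trans hx
  have hx0 : 0 < x := by linarith
  have hA := h.pos hxT
  set q := x / (Af μ x) ^ 2 with hq
  have hq0 : 0 < q := by positivity
  rcases lt_or_ge y x with hyx | hyx
  · have hP : Psf μ x y = 0 := by unfold Psf; rw [Ioc_eq_empty (by linarith)]; simp
    rw [hP, mul_zero, sub_zero, mul_zero, zero_add, abs_of_nonneg (Phf_nonneg _ _ _)]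
    have hr0 : 0 ≤ y / x := by positivity
    have hr1 : y / x ≤ 1 := by rw [div_le_one hx0]; linarith
    rw [min_eq_left hr1]
    refine (Phf_le h hxT y).trans ?_
    have : (y / x) ^ 2 ≤ (y / x) ^ (3 / 2 : ℝ) := by
      rw [← Real.rpow_natCast]
      exact Real.rpow_le_rpow_of_exponent_ge_of_imp hr0 hr1 (by norm_num) (by norm_num)
    have h32 : 0 ≤ (y / x) ^ (3 / 2 : ℝ) := by positivity
    calc q * (y / x) ^ 2 ≤ q * (y / x) ^ (3 / 2 : ℝ) := by gcongr
      _ = 1 * q * (y / x) ^ (3 / 2 : ℝ) := by ring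
      _ ≤ _ := by gcongr; linarith
  · have hr1 : 1 ≤ y / x := by rwa [one_le_div hx0]
    rw [min_eq_right hr1, Real.one_rpow, mul_one]
    have h1x : 1 / x ≤ 1 / T₀ := by gcongr
    -- splitting at `x`
    have s1 : Psf μ T₀ y = Psf μ T₀ x + Psf μ x y := by
      unfold Psf
      rw [← Ioc_union_Ioc_eq_Ioc hxT hyx, setIntegral_union (Ioc_disjoint_Ioc_of_le le_rfl)
        measurableSet_Ioc]
      all_goals
        refine (ContinuousOn.integrableOn_Icc (fun t ht => ?_)).mono_set Ioc_subset_Icc_self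
        refine ContinuousAt.continuousWithinAt (ContinuousAt.div continuousAt_const
          ((Af_cont μ).continuousAt.pow 2) (pow_pos (h.pos ?_) 2).ne')
        linarith [ht.1]
    set D := ∫ θ in Ioc (1 / x) (1 / T₀), (1 - Real.cos (θ * y)) / (θ * Af μ (1 / θ)) ^ 2 with hD
    have hint := Phf_integrable h le_rfl y
    have s2 : Phf μ T₀ y = Phf μ x y + D := by
      unfold Phf
      rw [← Ioc_union_Ioc_eq_Ioc (by positivity : 0 ≤ 1 / x) h1x,
        setIntegral_union (Ioc_disjoint_Ioc_of_le le_rfl) measurableSet_Ioc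
        (hint.mono_set (Ioc_subset_Ioc_right h1x))
        (hint.mono_set (Ioc_subset_Ioc_left (by positivity)))]
    have hD0 : 0 ≤ D := integral_nonneg fun θ => Phf_integrand_nonneg μ y θ
    have hD1 : D ≤ 8 / 3 * q := by
      have hii := rpow_scaled_ii (p := -(7 / 4)) hx0 (by positivity : 0 < 1 / x)
        (by positivity : 0 < 1 / T₀)
      have : D ≤ ∫ θ in Ioc (1 / x) (1 / T₀), 2 * x ^ 2 / (Af μ x) ^ 2 * (θ * x) ^ (-(7 / 4) : ℝ) := by
        refine setIntegral_mono_on (hint.mono_set (Ioc_subset_Ioc_left (by positivity)))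
          (hii.1.const_mul _) measurableSet_Ioc fun θ hθ => ?_
        have hθ0 : 0 < θ := lt_trans (by positivity) hθ.1
        have hr : 1 ≤ θ * x := by have := hθ.1.le; rwa [div_le_iff₀ hx0] at this
        have hr0 : 0 < θ * x := by positivity
        have hb := h.inv_sq hxT hθ0 hθ.2
        rw [max_eq_left ((inv_le_one_of_one_le₀ hr).trans hr)] at hb
        calc _ ≤ 2 / (θ * Af μ (1 / θ)) ^ 2 := by gcongr; exact one_sub_cos_le_two _
          _ = 2 / θ ^ 2 * (1 / (Af μ (1 / θ)) ^ 2) := by rw [mul_pow]; field_simp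
          _ ≤ 2 / θ ^ 2 * ((θ * x) ^ (1 / 4 : ℝ) / (Af μ x) ^ 2) := by gcongr
          _ = 2 * x ^ 2 / (Af μ x) ^ 2 * ((θ * x) ^ (1 / 4 : ℝ) / (θ * x) ^ (2 : ℝ)) := by
            rw [Real.rpow_two]; field_simp
          _ = _ := by rw [← Real.rpow_sub hr0]; norm_num
      refine this.trans ?_
      rw [integral_const_mul, ← intervalIntegral.integral_of_le h1x,
        rpow_scaled_integral hx0 (by positivity) (by positivity) (by norm_num)]
      have e : (-(7 / 4) + 1 : ℝ) = -(3 / 4) := by norm_num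
      rw [e, one_div_mul_cancel hx0.ne', Real.one_rpow]
      have : (0 : ℝ) ≤ (1 / T₀ * x) ^ (-(3 / 4) : ℝ) := by positivity
      calc _ = 2 * x ^ 2 / Af μ x ^ 2 * (4 / 3 * (1 - (1 / T₀ * x) ^ (-(3 / 4) : ℝ)) / x) := by ring
        _ ≤ 2 * x ^ 2 / Af μ x ^ 2 * (4 / 3 * 1 / x) := by gcongr; linarith
        _ = _ := by rw [hq]; field_simp; norm_num
    obtain ⟨b1, _⟩ := hpt y (hx.trans hyx)
    obtain ⟨_, b2⟩ := hpt x hx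
    have hP1 := Psf_nonneg μ T₀ x
    rw [s1, s2, abs_le] at b1
    have hkP : kap * Psf μ T₀ x ≤ kap * (3 / 2 * q) := by gcongr
    have hkP0 : 0 ≤ kap * Psf μ T₀ x := by positivity
    have hεP : ε * Psf μ T₀ x ≤ 1 * (3 / 2 * q) := by gcongr
    rw [abs_le]
    constructor <;> nlinarith

/-- `Q(θ) = E[1 - cos θX] = Re (1 - φ(θ))`. -/
noncomputable def Qf (μ : Measure ℝ) (θ : ℝ) : ℝ := ∫ y, (1 - Real.cos (θ * y)) ∂μ

theorem Qf_nonneg (μ : Measure ℝ) (θ : ℝ) : 0 ≤ Qf μ θ :=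
  integral_nonneg fun _ => one_sub_cos_nonneg _

theorem Qf_eq (μ : Measure ℝ) [IsProbabilityMeasure μ] (θ : ℝ) :
    Qf μ θ = (1 - charFun μ θ).re := by
  have hci : Integrable (fun y : ℝ => Real.cos (θ * y)) μ := by
    refine Integrable.of_bound (by fun_prop) 1 (ae_of_all _ fun y => Real.abs_cos_le_one _)
  have h2 : (charFun μ θ).re = ∫ y : ℝ, Real.cos (θ * y) ∂μ := by
    rw [charFun_apply_real]
    have := integral_re (𝕜 := ℂ) (exp_integrable μ θ)
    rw [RCLike.re_eq_complex_re] at this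
    rw [← this]
    congr 1; ext y
    rw [← Complex.ofReal_mul]
    exact Complex.exp_ofReal_mul_I_re _
  rw [Qf, integral_sub (integrable_const (1 : ℝ)) hci, Complex.sub_re, h2]
  simp

/-- `E Ψ_x(|X|) = M(x)`, by Fubini. -/
theorem Psf_integral {μ : Measure ℝ} [IsProbabilityMeasure μ] {x : ℝ}
    (hint : IntegrableOn (fun t => Hf μ t / (Af μ t) ^ 2) (Ioi x)) :
    Integrable (fun y => Psf μ x |y|) μ ∧ ∫ y, Psf μ x |y| ∂μ = Mf μ x := by
  set G : ℝ → ℝ → ℝ := fun y t => {p : ℝ × ℝ | p.2 < |p.1|}.indicator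
    (fun p => 1 / (Af μ p.2) ^ 2) (y, t) with hG
  have hset : MeasurableSet {p : ℝ × ℝ | p.2 < |p.1|} :=
    measurableSet_lt measurable_snd measurable_fst.abs
  have hAm : Measurable (Af μ) := (Af_cont μ).measurable
  have hm : Measurable (Function.uncurry G) :=
    Measurable.indicator (((hAm.comp measurable_snd).pow_const 2).const_div 1) hset
  have hy : ∀ t, (fun y => G y t) = {y : ℝ | t < |y|}.indicator (fun _ => 1 / (Af μ t) ^ 2) := by
    intro t; ext y; simp only [hG, indicator_apply, mem_ofPred_eq]
  have hms : ∀ t : ℝ, MeasurableSet {y : ℝ | t < |y|} := fun t =>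
    measurableSet_lt measurable_const measurable_id.abs
  have hval : ∀ t, ∫ y, G y t ∂μ = Hf μ t / (Af μ t) ^ 2 := by
    intro t
    rw [hy t, integral_indicator_const _ (hms t), Hf, smul_eq_mul, measureReal_def]; ring
  have hGn : ∀ y t, 0 ≤ G y t := fun y t => indicator_nonneg (fun p _ => by positivity) _
  have hprod : Integrable (Function.uncurry G) (μ.prod (volume.restrict (Ioi x))) := by
    rw [integrable_prod_iff' hm.aestronglyMeasurable]
    refine ⟨ae_of_all _ fun t => ?_, ?_⟩
    · change Integrable (fun y => G y t) μ
      rw [hy t]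
      exact (integrable_const _).indicator (hms t)
    · refine hint.congr (ae_of_all _ fun t => ?_)
      simp only [Function.uncurry, Real.norm_of_nonneg (hGn _ _)]
      exact (hval t).symm
  have hP : ∀ y, ∫ t in Ioi x, G y t = Psf μ x |y| := by
    intro y
    have : (fun t => G y t) = (Iio |y|).indicator (fun t => 1 / (Af μ t) ^ 2) := by
      ext t; simp only [hG, indicator_apply, mem_ofPred_eq, mem_Iio]
    rw [this, setIntegral_indicator measurableSet_Iio, Ioi_inter_Iio, ← integral_Ioc_eq_integral_Ioo,
      Psf]
  constructor
  · refine hprod.integral_prod_left.congr (ae_of_all _ fun y => hP y)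
  · have := integral_integral_swap (f := G) hprod
    simp_rw [hval, hP] at this
    exact this

/-- `∫₀^{1/x} Q(θ)/(θA(1/θ))² dθ ~ κ M(x)`. -/
theorem Q_integral {μ : Measure ℝ} [IsProbabilityMeasure μ] (hHa : HaCond μ)
    (hA : Tendsto (Af μ) atTop atTop) {T₀ : ℝ} (h : PotterAt μ T₀)
    (hint : IntegrableOn (fun t => Hf μ t / (Af μ t) ^ 2) (Ioi T₀))
    (hM : ∀ x ≥ T₀, 1 / Af μ x ≤ Mf μ x) {ε : ℝ} (hε : 0 < ε) :
    ∃ T : ℝ, T₀ ≤ T ∧ ∀ x ≥ T,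
      IntegrableOn (fun θ => Qf μ θ / (θ * Af μ (1 / θ)) ^ 2) (Ioc 0 (1 / x)) ∧
      |(∫ θ in Ioc 0 (1 / x), Qf μ θ / (θ * Af μ (1 / θ)) ^ 2) - kap * Mf μ x| ≤ ε * Mf μ x := by
  obtain ⟨C, hC, hPP⟩ := Phi_Psi hHa h
  obtain ⟨T₁, hT₁, hPP⟩ := hPP (min (ε / 2) 1) (by positivity) (min_le_right _ _)
  obtain ⟨T₂, hT₂, hPs⟩ := P_small hHa hA (ε := ε / (2 * C)) (by positivity)
  refine ⟨max T₁ T₂, hT₁.trans (le_max_left _ _), fun x hx => ?_⟩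
  have hx1 : T₁ ≤ x := (le_max_left _ _).trans hx
  have hxT : T₀ ≤ x := hT₁.trans hx1
  have hx0 : 0 < x := by linarith [h.1]
  have hAx := h.pos hxT
  have hPPx := hPP x hx1
  obtain ⟨hPi, hPv⟩ := Psf_integral (hint.mono_set (Ioi_subset_Ioi hxT))
  set q := x / (Af μ x) ^ 2 with hq
  have hq0 : 0 < q := by positivity
  have hPfi := Pf_integrable μ hx0
  have hb : ∀ y, |Phf μ x y - kap * (Psf μ x |y|)| ≤
      ε / 2 * Psf μ x |y| + C * q * (min (|y| / x) 1) ^ (3 / 2 : ℝ) := by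
    intro y
    have := hPPx |y| (abs_nonneg y)
    rw [Phf_abs] at this
    refine this.trans ?_
    gcongr
    · exact Psf_nonneg _ _ _
    · exact min_le_left _ _
  have hbi : Integrable (fun y => ε / 2 * Psf μ x |y| + C * q * (min (|y| / x) 1) ^ (3 / 2 : ℝ)) μ :=
    (hPi.const_mul _).add (hPfi.const_mul _)
  set F : ℝ → ℝ → ℝ := fun y θ => (1 - Real.cos (θ * y)) / (θ * Af μ (1 / θ)) ^ 2 with hF
  have hPhm : AEStronglyMeasurable (fun y => Phf μ x y) μ := by
    have : StronglyMeasurable (Function.uncurry F) := (Phf_meas μ).stronglyMeasurable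
    exact (this.integral_prod_right (ν := volume.restrict (Ioc 0 (1 / x)))).aestronglyMeasurable
  have hPhi : Integrable (fun y => Phf μ x y) μ := by
    have h1 : Integrable (fun y => Phf μ x y - kap * Psf μ x |y|) μ :=
      Integrable.mono' hbi (hPhm.sub (hPi.const_mul _).aestronglyMeasurable) (ae_of_all _ hb)
    refine (h1.add (hPi.const_mul kap)).congr (ae_of_all _ fun y => ?_)
    simp
  have hprod : Integrable (Function.uncurry F) (μ.prod (volume.restrict (Ioc 0 (1 / x)))) := by
    have hFm : Measurable (Function.uncurry F) := Phf_meas μ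
    rw [integrable_prod_iff hFm.aestronglyMeasurable]
    refine ⟨ae_of_all _ fun y => Phf_integrable h hxT y, ?_⟩
    refine hPhi.congr (ae_of_all _ fun y => ?_)
    simp only [Phf, Function.uncurry]
    refine integral_congr_ae (ae_of_all _ fun θ => ?_)
    exact (Real.norm_of_nonneg (Phf_integrand_nonneg μ y θ)).symm
  have hQv : ∀ θ, ∫ y, F y θ ∂μ = Qf μ θ / (θ * Af μ (1 / θ)) ^ 2 := by
    intro θ; simp only [hF]; rw [integral_div, Qf]
  refine ⟨hprod.integral_prod_right.congr (ae_of_all _ fun θ => hQv θ), ?_⟩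
  have hsw := integral_integral_swap (f := F) hprod
  simp_rw [hQv] at hsw
  rw [← hsw, ← hPv, ← integral_const_mul kap]
  have e : ∀ y, ∫ θ in Ioc 0 (1 / x), F y θ = Phf μ x y := fun y => rfl
  simp_rw [e]
  rw [← integral_sub hPhi (hPi.const_mul kap)]
  have h1 := norm_integral_le_of_norm_le (f := fun y => Phf μ x y - kap * Psf μ x |y|) hbi
    (ae_of_all μ hb)
  rw [Real.norm_eq_abs] at h1
  refine h1.trans ?_
  rw [integral_add (hPi.const_mul _) (hPfi.const_mul _), integral_const_mul, integral_const_mul,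
    ← Pf, hPv]
  have h2 := hPs x ((le_max_right _ _).trans hx)
  have h3 : C * q * Pf μ x ≤ ε / 2 * (1 / Af μ x) := by
    calc C * q * Pf μ x = C / (Af μ x) ^ 2 * (x * Pf μ x) := by rw [hq]; ring
      _ ≤ C / (Af μ x) ^ 2 * (ε / (2 * C) * Af μ x) := by gcongr
      _ = _ := by field_simp
  have h4 : ε / 2 * (1 / Af μ x) ≤ ε / 2 * Mf μ x := by gcongr; exact hM x hxT
  linarith

/-! ### Real and imaginary parts of `1/(1 - φ)` -/

/-- Behaviour of `1 - φ` at zero in terms of `N(θ) = θA(1/θ)`. -/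
theorem near_zero {μ : Measure ℝ} [IsProbabilityMeasure μ] (hHa : HaCond μ)
    (hA : Tendsto (Af μ) atTop atTop) {η : ℝ} (hη : 0 < η) :
    ∃ T : ℝ, 1 ≤ T ∧ ∀ θ : ℝ, 0 < θ → θ ≤ 1 / T → 0 < θ * Af μ (1 / θ) ∧ 1 ≤ Af μ (1 / θ) ∧
      Qf μ θ ≤ η * (θ * Af μ (1 / θ)) ∧
      |(charFun μ θ).im - θ * Af μ (1 / θ)| ≤ η * (θ * Af μ (1 / θ)) ∧
      |‖1 - charFun μ θ‖ - θ * Af μ (1 / θ)| ≤ η * (θ * Af μ (1 / θ)) := by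
  obtain ⟨T₁, hT₁, h1⟩ := charFun_near_zero hHa hA hη
  obtain ⟨T₂, hT₂⟩ := (tendsto_atTop.1 hA 1).exists_forall_of_atTop
  have hT0 : 0 < max T₁ T₂ := lt_of_lt_of_le (by linarith) (le_max_left _ _)
  refine ⟨max T₁ T₂, hT₁.trans (le_max_left _ _), fun θ hθ hθ2 => ?_⟩
  have hT : max T₁ T₂ ≤ 1 / θ := by rw [le_div_iff₀ hθ]; rwa [le_div_iff₀ hT0, mul_comm] at hθ2
  obtain ⟨g1, g2⟩ := h1 (1 / θ) ((le_max_left _ _).trans hT)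
  have hN : Af μ (1 / θ) / (1 / θ) = θ * Af μ (1 / θ) := by field_simp
  rw [one_div_one_div, hN] at g2
  set N := θ * Af μ (1 / θ) with hNd
  have hN0 : 0 < N := by positivity
  refine ⟨hN0, hT₂ _ ((le_max_right _ _).trans hT), ?_, ?_, ?_⟩
  · have := (Complex.re_le_norm _).trans g2
    rw [Complex.add_re, ← Qf_eq] at this
    simpa using this
  · have := (Complex.abs_im_le_norm _).trans g2
    rw [abs_sub_comm]
    have e : (1 - charFun μ θ + Complex.I * (N : ℂ)).im = N - (charFun μ θ).im := by
      simp; ring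
    rwa [e] at this
  · have := abs_norm_sub_norm_le (1 - charFun μ θ) (-(Complex.I * (N : ℂ)))
    rw [sub_neg_eq_add, norm_neg, norm_mul, Complex.norm_I, one_mul, Complex.norm_real,
      Real.norm_of_nonneg hN0.le] at this
    exact this.trans g2

/-- The real part of `1/(1-φ)`. -/
noncomputable def Rf (μ : Measure ℝ) (θ : ℝ) : ℝ := Qf μ θ / ‖1 - charFun μ θ‖ ^ 2

/-- The imaginary part of `1/(1-φ)`. -/
noncomputable def Jf (μ : Measure ℝ) (θ : ℝ) : ℝ := (charFun μ θ).im / ‖1 - charFun μ θ‖ ^ 2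

/-- Splitting of the inversion integrand into its cosine and sine parts. -/
theorem gf_re (μ : Measure ℝ) [IsProbabilityMeasure μ] (a x θ : ℝ) :
    (gf μ a x θ).re = tri a θ * Real.cos (θ * x) * Rf μ θ + tri a θ * Real.sin (θ * x) * Jf μ θ := by
  have e1 : Complex.exp (-(θ * x : ℝ) * Complex.I) = (Real.cos (θ * x) : ℂ)
      - (Real.sin (θ * x) : ℂ) * Complex.I := by
    rw [← Complex.ofReal_neg, Complex.exp_mul_I, ← Complex.ofReal_cos, ← Complex.ofReal_sin,
      Real.cos_neg, Real.sin_neg]; push_cast; ring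
  rw [gf, e1, div_eq_mul_inv, Complex.inv_def, Rf, Jf, Qf_eq, ← Complex.normSq_eq_norm_sq]
  simp only [Complex.mul_re, Complex.mul_im, Complex.sub_re, Complex.sub_im, Complex.ofReal_re,
    Complex.ofReal_im, Complex.I_re, Complex.I_im, Complex.conj_re, Complex.conj_im,
    Complex.one_re, Complex.one_im]
  ring

theorem Rf_nonneg (μ : Measure ℝ) (θ : ℝ) : 0 ≤ Rf μ θ :=
  div_nonneg (Qf_nonneg μ θ) (by positivity)

theorem Qf_cont (μ : Measure ℝ) [IsProbabilityMeasure μ] : Continuous (Qf μ) := by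
  have : Qf μ = fun θ => (1 - charFun μ θ).re := funext fun θ => Qf_eq μ θ
  rw [this]
  exact Complex.continuous_re.comp (continuous_const.sub (charFun_cont μ))

theorem Rf_meas (μ : Measure ℝ) [IsProbabilityMeasure μ] : Measurable (Rf μ) :=
  (Qf_cont μ).measurable.div ((continuous_const.sub (charFun_cont μ)).norm.pow 2).measurable

theorem Jf_meas (μ : Measure ℝ) [IsProbabilityMeasure μ] : Measurable (Jf μ) :=
  (Complex.continuous_im.comp (charFun_cont μ)).measurable.div
    ((continuous_const.sub (charFun_cont μ)).norm.pow 2).measurable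

/-- `θ/|1 - φ(θ)|` is bounded on `(0, a]`: near zero since `A(1/θ) ≥ 1`, and elsewhere since `φ ≠ 1`. -/
theorem theta_le {μ : Measure ℝ} [IsProbabilityMeasure μ] (harith : ¬ IsArith μ)
    (hHa : HaCond μ) (hA : Tendsto (Af μ) atTop atTop) (a : ℝ) :
    ∃ C : ℝ, 0 < C ∧ ∀ θ : ℝ, 0 < θ → θ ≤ a → θ ≤ C * ‖1 - charFun μ θ‖ := by
  obtain ⟨T, hT, h⟩ := near_zero hHa hA (η := 1 / 2) (by norm_num)
  obtain ⟨c₁, hc₁, hmin⟩ : ∃ c₁ > 0, ∀ θ ∈ Icc (1 / T) a, c₁ ≤ ‖1 - charFun μ θ‖ := by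
    rcases (Icc (1 / T) a).eq_empty_or_nonempty with he | hne
    · exact ⟨1, one_pos, fun θ hθ => by rw [he] at hθ; exact hθ.elim⟩
    · obtain ⟨θ₀, hθ₀, hm⟩ := isCompact_Icc.exists_isMinOn hne
        (continuous_const.sub (charFun_cont μ)).norm.continuousOn
      refine ⟨‖1 - charFun μ θ₀‖, ?_, fun θ hθ => hm hθ⟩
      rw [gt_iff_lt, norm_pos_iff, sub_ne_zero]
      exact (nonarith_ne_one harith (lt_of_lt_of_le (by positivity) hθ₀.1)).symm
  refine ⟨2 + |a| / c₁, by positivity, fun θ h0 ha => ?_⟩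
  have hn := norm_nonneg (1 - charFun μ θ)
  have haa : 0 ≤ |a| / c₁ := by positivity
  rcases le_total θ (1 / T) with hθ | hθ
  · obtain ⟨_, h2, _, _, h5⟩ := h θ h0 hθ
    rw [abs_le] at h5
    have : θ ≤ θ * Af μ (1 / θ) := le_mul_of_one_le_right h0.le h2
    nlinarith
  · have h1 := hmin θ ⟨hθ, ha⟩
    have h2 : |a| ≤ |a| / c₁ * ‖1 - charFun μ θ‖ := by
      rw [div_mul_eq_mul_div, le_div_iff₀ hc₁]; gcongr
    have := le_abs_self a
    nlinarith

theorem Jf_le (μ : Measure ℝ) (θ : ℝ) : |Jf μ θ| ≤ 1 / ‖1 - charFun μ θ‖ := by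
  have h : |(charFun μ θ).im| ≤ ‖1 - charFun μ θ‖ := by
    have := Complex.abs_im_le_norm (1 - charFun μ θ)
    simpa using this
  rw [Jf, abs_div, abs_of_nonneg (by positivity : 0 ≤ ‖1 - charFun μ θ‖ ^ 2)]
  rcases (norm_nonneg (1 - charFun μ θ)).eq_or_lt with h0 | h0
  · rw [← h0]; simp
  · rw [div_le_div_iff₀ (by positivity) h0]; nlinarith

theorem sin_Jf_le {μ : Measure ℝ} {a x C θ : ℝ} (ha : 0 < a) (hθ : 0 < θ)
    (h : θ ≤ C * ‖1 - charFun μ θ‖) : |tri a θ * Real.sin (θ * x) * Jf μ θ| ≤ C * |x| := by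
  have hn : 0 < ‖1 - charFun μ θ‖ := by
    by_contra h0
    have := norm_nonneg (1 - charFun μ θ)
    have e : ‖1 - charFun μ θ‖ = 0 := by linarith
    rw [e] at h; linarith
  rw [abs_mul, abs_mul, abs_of_nonneg (tri_nonneg _ _)]
  calc _ ≤ 1 * |θ * x| * (1 / ‖1 - charFun μ θ‖) := by
        exact mul_le_mul (mul_le_mul (tri_le_one ha hθ.le) Real.abs_sin_le_abs (abs_nonneg _)
          zero_le_one) (Jf_le μ θ) (abs_nonneg _) (by positivity)
    _ = θ / ‖1 - charFun μ θ‖ * |x| := by rw [abs_mul, abs_of_pos hθ]; ring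
    _ ≤ C * |x| := by
        gcongr; rwa [div_le_iff₀ hn]

theorem sin_Jf_int {μ : Measure ℝ} [IsProbabilityMeasure μ] (harith : ¬ IsArith μ)
    (hHa : HaCond μ) (hA : Tendsto (Af μ) atTop atTop) {a : ℝ} (ha : 0 < a) (x b : ℝ) :
    IntegrableOn (fun θ => tri a θ * Real.sin (θ * x) * Jf μ θ) (Ioc 0 b) := by
  obtain ⟨C, hC, h⟩ := theta_le harith hHa hA b
  refine Integrable.mono' (g := fun _ => C * |x|) (integrable_const _) ?_ ?_
  · exact (((tri_cont a).measurable.mul (by fun_prop)).mul (Jf_meas μ)).aestronglyMeasurable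
  · filter_upwards [ae_restrict_mem measurableSet_Ioc] with θ hθ
    exact sin_Jf_le ha hθ.1 (h θ hθ.1 hθ.2)

/-- Standing facts about `A` and `M` beyond a threshold `T₀`. -/
structure Setup (μ : Measure ℝ) (T₀ : ℝ) : Prop where
  arith : ¬ IsArith μ
  ha : HaCond μ
  top : Tendsto (Af μ) atTop atTop
  pot : PotterAt μ T₀
  int : IntegrableOn (fun t => Hf μ t / (Af μ t) ^ 2) (Ioi T₀)
  inv_le : ∀ x ≥ T₀, 1 / Af μ x ≤ Mf μ x

/-- Transience in analytic form: `Re 1/(1 - φ)` is integrable at zero. -/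
theorem Rf_int {μ : Measure ℝ} [IsProbabilityMeasure μ] {T₀ : ℝ} (S : Setup μ T₀) (b : ℝ) :
    IntegrableOn (Rf μ) (Ioc 0 b) := by
  obtain ⟨T₁, hT₁, h1⟩ := Q_integral S.ha S.top S.pot S.int S.inv_le one_pos
  obtain ⟨T₂, hT₂, h2⟩ := near_zero S.ha S.top (η := 1 / 2) (by norm_num)
  set T := max T₁ T₂ with hT
  have hT0 : 0 < T := lt_of_lt_of_le (by linarith) (le_max_right _ _)
  have hT20 : 0 < T₂ := by linarith
  have h3 := (h1 T (le_max_left _ _)).1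
  have A1 : IntegrableOn (Rf μ) (Ioc 0 (1 / T)) := by
    refine Integrable.mono' (h3.const_mul 4) (Rf_meas μ).aestronglyMeasurable ?_
    filter_upwards [ae_restrict_mem measurableSet_Ioc] with θ hθ
    obtain ⟨g1, _, _, _, g5⟩ := h2 θ hθ.1 (hθ.2.trans (by gcongr; exact le_max_right _ _))
    rw [Real.norm_of_nonneg (Rf_nonneg μ θ), Rf]
    rw [abs_le] at g5
    have : θ * Af μ (1 / θ) / 2 ≤ ‖1 - charFun μ θ‖ := by linarith
    calc Qf μ θ / ‖1 - charFun μ θ‖ ^ 2 ≤ Qf μ θ / (θ * Af μ (1 / θ) / 2) ^ 2 := by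
          gcongr; exact Qf_nonneg _ _
      _ = _ := by field_simp; norm_num
  have A2 : IntegrableOn (Rf μ) (Icc (1 / T) b) := by
    refine ContinuousOn.integrableOn_Icc ?_
    refine ContinuousOn.div (Qf_cont μ).continuousOn
      ((continuous_const.sub (charFun_cont μ)).norm.pow 2).continuousOn fun θ hθ => ?_
    have : 0 < θ := lt_of_lt_of_le (by positivity) hθ.1
    have := norm_pos_iff.2 (sub_ne_zero.2 (nonarith_ne_one S.arith this).symm)
    positivity
  refine (A1.union A2).mono_set fun θ hθ => ?_
  rcases le_total θ (1 / T) with h | h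
  · exact Or.inl ⟨hθ.1, h⟩
  · exact Or.inr ⟨h, hθ.2⟩

theorem cos_Rf_int {μ : Measure ℝ} [IsProbabilityMeasure μ] {T₀ : ℝ} (S : Setup μ T₀) {a : ℝ}
    (ha : 0 < a) (x b : ℝ) :
    IntegrableOn (fun θ => tri a θ * Real.cos (θ * x) * Rf μ θ) (Ioc 0 b) := by
  refine Integrable.mono' (Rf_int S b) ?_ ?_
  · exact (((tri_cont a).measurable.mul (by fun_prop)).mul (Rf_meas μ)).aestronglyMeasurable
  · filter_upwards [ae_restrict_mem measurableSet_Ioc] with θ hθ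
    rw [Real.norm_eq_abs, abs_mul, abs_mul, abs_of_nonneg (tri_nonneg _ _),
      abs_of_nonneg (Rf_nonneg _ _)]
    have := tri_le_one ha hθ.1.le
    have h2 := Real.abs_cos_le_one (θ * x)
    have h3 := tri_nonneg a θ
    exact mul_le_of_le_one_left (Rf_nonneg _ _) (by nlinarith [abs_nonneg (Real.cos (θ * x))])

/-! ### The cosine part -/

theorem Mf_nonneg (μ : Measure ℝ) (x : ℝ) : 0 ≤ Mf μ x :=
  integral_nonneg fun t => div_nonneg (Hf_nonneg μ t) (sq_nonneg _)

/-- Below `1/x` the integrand `tri·cos·Re 1/(1-φ)` is `Q/N²` up to a relative error of order `η` and an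
error `4η(x/A)c`, where `c` bounds the ratio `A(x)/A(1/θ)`. -/
theorem L1_low {a x θ η N n Q A c : ℝ} (ha : 0 < a) (hx : 0 < x) (hθ : 0 < θ) (hθx : θ * x ≤ 1)
    (hη : 0 < η) (hη2 : η ≤ 1 / 2) (hN : 0 < N) (hQ0 : 0 ≤ Q) (hQ : Q ≤ η * N)
    (hn : |n - N| ≤ η * N) (hA : 0 < A) (hθa : θ / a ≤ η) (hc : θ * A ≤ c * N) :
    |tri a θ * Real.cos (θ * x) * (Q / n ^ 2) - Q / N ^ 2|
      ≤ 12 * η * (Q / N ^ 2) + 4 * η * (x / A * c) := by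
  rw [abs_le] at hn
  have hn0 : 0 < n := by nlinarith
  have hnN : N / 2 ≤ n := by nlinarith
  set ρ := N ^ 2 / n ^ 2 with hρ
  have hρ0 : 0 < ρ := by positivity
  have hρ4 : ρ ≤ 4 := by
    rw [hρ, div_le_iff₀ (by positivity)]; nlinarith
  have hρ1 : |ρ - 1| ≤ 8 * η := by
    have : ρ - 1 = (N - n) * (N + n) / n ^ 2 := by rw [hρ]; field_simp; ring
    rw [this, abs_div, abs_of_pos (by positivity : 0 < n ^ 2), div_le_iff₀ (by positivity),
      abs_mul, abs_of_pos (by positivity : 0 < N + n)]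
    have h1 : |N - n| ≤ η * N := abs_le.2 ⟨by linarith, by linarith⟩
    have h2 : N + n ≤ 3 * n := by linarith
    calc |N - n| * (N + n) ≤ (η * (2 * n)) * (3 * n) := by
          gcongr; exact h1.trans (by gcongr; linarith)
      _ ≤ 8 * η * n ^ 2 := by nlinarith [sq_nonneg n]
  have ht1 : 1 - tri a θ ≤ η := by
    have : 1 - θ / a ≤ tri a θ := le_max_left _ _
    linarith
  have ht2 := tri_le_one ha hθ.le
  have ht3 := tri_nonneg a θ
  have hc1 : 1 - Real.cos (θ * x) ≤ θ * x := by
    have := one_sub_cos_le (θ * x)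
    have : 0 < θ * x := by positivity
    nlinarith
  have hc2 := Real.cos_le_one (θ * x)
  have hw : |tri a θ * Real.cos (θ * x) * ρ - 1| ≤ 12 * η + 4 * (θ * x) := by
    have h1 : |tri a θ * Real.cos (θ * x) - 1| ≤ η + θ * x := by
      have e : tri a θ * Real.cos (θ * x) - 1 =
        -((1 - tri a θ) + tri a θ * (1 - Real.cos (θ * x))) := by ring
      rw [e, abs_neg, abs_of_nonneg (by nlinarith)]
      nlinarith
    calc |tri a θ * Real.cos (θ * x) * ρ - 1|
        = |(tri a θ * Real.cos (θ * x) - 1) * ρ + (ρ - 1)| := by congr 1; ring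
      _ ≤ |tri a θ * Real.cos (θ * x) - 1| * ρ + |ρ - 1| := by
          refine (abs_add_le _ _).trans ?_
          rw [abs_mul, abs_of_pos hρ0]
      _ ≤ (η + θ * x) * 4 + 8 * η := by gcongr
      _ = _ := by ring
  have e : tri a θ * Real.cos (θ * x) * (Q / n ^ 2) - Q / N ^ 2
      = Q / N ^ 2 * (tri a θ * Real.cos (θ * x) * ρ - 1) := by
    rw [hρ]; field_simp
  rw [e, abs_mul, abs_of_nonneg (by positivity)]
  have h2 : Q / N ^ 2 * (θ * x) ≤ η * (x / A * c) := by
    calc Q / N ^ 2 * (θ * x) ≤ (η * N) / N ^ 2 * (θ * x) := by gcongr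
      _ = η * x * (θ / N) := by field_simp
      _ ≤ η * x * (c / A) := by
          refine mul_le_mul_of_nonneg_left ?_ (by positivity)
          rw [div_le_div_iff₀ hN hA]; linarith
      _ = _ := by ring
  calc _ ≤ Q / N ^ 2 * (12 * η + 4 * (θ * x)) := by gcongr
    _ = 12 * η * (Q / N ^ 2) + 4 * (Q / N ^ 2 * (θ * x)) := by ring
    _ ≤ _ := by linarith

set_option maxHeartbeats 800000 in
/-- The cosine part of the frequencies below `B/x` is `~ κ M(x)`. The range `[1/x, B/x]` is negligible because
`Re (1 - φ) = o(|1 - φ|)` there and `1/A ≤ M`. -/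
theorem L1 {μ : Measure ℝ} [IsProbabilityMeasure μ] {T₀ : ℝ} (S : Setup μ T₀) {a : ℝ}
    (ha : 0 < a) {B : ℝ} (hB : 1 ≤ B) {ε : ℝ} (hε : 0 < ε) :
    ∃ T : ℝ, T₀ ≤ T ∧ ∀ x ≥ T,
      |(∫ θ in Ioc 0 (B / x), tri a θ * Real.cos (θ * x) * Rf μ θ) - kap * Mf μ x|
        ≤ ε * Mf μ x := by
  have hk := kap_pos
  obtain ⟨T₁, hT₁, h1⟩ := Q_integral S.ha S.top S.pot S.int S.inv_le
    (ε := min (ε / 2) 1) (by positivity)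
  set D := 12 * (kap + 1) + 5 + 4 * B ^ 2 with hD
  have hD0 : 0 < D := by positivity
  set η := min (1 / 2) (ε / 2 / D) with hηd
  have hη : 0 < η := by positivity
  have hη2 : η ≤ 1 / 2 := min_le_left _ _
  have hηD : η * D ≤ ε / 2 := by rw [← le_div_iff₀ hD0]; exact min_le_right _ _
  obtain ⟨T₂, hT₂, h2⟩ := near_zero S.ha S.top hη
  have hT₀ := S.pot.1
  refine ⟨max T₁ (max (B * T₂) (max (1 / (a * η)) (B * T₀))), hT₁.trans (le_max_left _ _),
    fun x hx => ?_⟩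
  simp only [ge_iff_le, max_le_iff] at hx
  obtain ⟨hx1, hx2, hx3, hx4⟩ := hx
  have hxT : T₀ ≤ x := hT₁.trans hx1
  have hx0 : 0 < x := by linarith
  have hA := S.pot.pos hxT
  have hM := S.inv_le x hxT
  obtain ⟨g1, g2⟩ := h1 x hx1
  have hxB : 1 / x ≤ B / x := by gcongr
  have hT20 : 0 < T₂ := by linarith
  have hT00 : 0 < T₀ := by linarith
  have hBT2 : B / x ≤ 1 / T₂ := by rw [div_le_div_iff₀ hx0 hT20]; linarith
  have hBT0 : B / x ≤ 1 / T₀ := by rw [div_le_div_iff₀ hx0 hT00]; linarith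
  have hsp : ∫ θ in Ioc 0 (B / x), tri a θ * Real.cos (θ * x) * Rf μ θ
      = (∫ θ in Ioc 0 (1 / x), tri a θ * Real.cos (θ * x) * Rf μ θ)
        + ∫ θ in Ioc (1 / x) (B / x), tri a θ * Real.cos (θ * x) * Rf μ θ := by
    rw [← Ioc_union_Ioc_eq_Ioc (by positivity : 0 ≤ 1 / x) hxB]
    refine setIntegral_union (Ioc_disjoint_Ioc_of_le le_rfl) measurableSet_Ioc
      (cos_Rf_int S ha x _) ((cos_Rf_int S ha x (B / x)).mono_set
        (Ioc_subset_Ioc_left (by positivity)))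
  set V : ℝ → ℝ := fun θ => Qf μ θ / (θ * Af μ (1 / θ)) ^ 2 with hV
  change |(∫ θ in Ioc 0 (1 / x), V θ) - kap * Mf μ x| ≤ _ at g2
  obtain ⟨s1, s2⟩ := scaled_rpow_Ioc hx0 (by norm_num : (-1 : ℝ) < -(1 / 8))
  have p1 : |(∫ θ in Ioc 0 (1 / x), tri a θ * Real.cos (θ * x) * Rf μ θ)
      - ∫ θ in Ioc 0 (1 / x), V θ| ≤ 12 * η * (∫ θ in Ioc 0 (1 / x), V θ) + 5 * η * Mf μ x := by
    rw [← integral_sub (cos_Rf_int S ha x _) g1]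
    have q : ‖∫ θ in Ioc 0 (1 / x), (tri a θ * Real.cos (θ * x) * Rf μ θ - V θ)‖ ≤
        ∫ θ in Ioc 0 (1 / x), (12 * η * V θ + 4 * η * (x / Af μ x * (θ * x) ^ (-(1 / 8) : ℝ))) := by
      have i2 : IntegrableOn (fun θ => 4 * η * (x / Af μ x * (θ * x) ^ (-(1 / 8) : ℝ)))
        (Ioc 0 (1 / x)) := (s1.const_mul _).const_mul _
      refine norm_integral_le_of_norm_le ((g1.const_mul (12 * η)).add i2) ?_
      filter_upwards [ae_restrict_mem measurableSet_Ioc] with θ hθ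
      have hθ0 := hθ.1
      have hr : θ * x ≤ 1 := by have := hθ.2; rwa [le_div_iff₀ hx0] at this
      obtain ⟨k1, _, k3, _, k5⟩ := h2 θ hθ.1 (hθ.2.trans (hxB.trans hBT2))
      obtain ⟨r1, r2⟩ := S.pot.ratio hxT hθ.1 (hθ.2.trans (hxB.trans hBT0))
      have hu : 0 < θ * x := by positivity
      have em : (max (θ * x) (θ * x)⁻¹) ^ (1 / 8 : ℝ) = (θ * x) ^ (-(1 / 8) : ℝ) := by
        rw [max_eq_right (hr.trans ((one_le_inv₀ hu).2 hr)), Real.inv_rpow hu.le, Real.rpow_neg hu.le]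
      rw [em, div_le_iff₀ r1] at r2
      refine L1_low ha hx0 hθ.1 hr hη hη2 k1 (Qf_nonneg μ θ) k3 k5 hA ?_ ?_
      · rw [div_le_iff₀ ha]
        refine hθ.2.trans ?_
        rw [div_le_iff₀ hx0]
        rw [div_le_iff₀ (by positivity)] at hx3
        nlinarith
      · calc θ * Af μ x ≤ θ * ((θ * x) ^ (-(1 / 8) : ℝ) * Af μ (1 / θ)) := by gcongr
          _ = _ := by ring
    rw [Real.norm_eq_abs, integral_add (g1.const_mul _) ((s1.const_mul _).const_mul _),
      integral_const_mul, integral_const_mul, integral_const_mul, s2] at q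
    refine q.trans ?_
    have : 4 * η * (x / Af μ x * (1 / (-(1 / 8) + 1) / x)) = 32 / 7 * η * (1 / Af μ x) := by
      field_simp; norm_num
    rw [this]
    have : 32 / 7 * η * (1 / Af μ x) ≤ 5 * η * Mf μ x := by
      have : 0 < 1 / Af μ x := by positivity
      gcongr; norm_num
    linarith
  have p2 : |∫ θ in Ioc (1 / x) (B / x), tri a θ * Real.cos (θ * x) * Rf μ θ|
      ≤ 4 * B ^ 2 * η * Mf μ x := by
    have q : ‖∫ θ in Ioc (1 / x) (B / x), tri a θ * Real.cos (θ * x) * Rf μ θ‖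
        ≤ (4 * η * (x * B / Af μ x)) * volume.real (Ioc (1 / x) (B / x)) := by
      refine norm_setIntegral_le_of_norm_le_const (by simp) fun θ hθ => ?_
      have hθ0 : 0 < θ := lt_of_le_of_lt (by positivity) hθ.1
      obtain ⟨k1, _, k3, _, k5⟩ := h2 θ hθ0 (hθ.2.trans hBT2)
      obtain ⟨r1, r2⟩ := S.pot.ratio hxT hθ0 (hθ.2.trans hBT0)
      have hu : 1 ≤ θ * x := by have := hθ.1.le; rwa [div_le_iff₀ hx0] at this
      have huB : θ * x ≤ B := by have := hθ.2; rwa [le_div_iff₀ hx0] at this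
      have em : (max (θ * x) (θ * x)⁻¹) ^ (1 / 8 : ℝ) ≤ B := by
        rw [max_eq_left ((inv_le_one_of_one_le₀ hu).trans hu)]
        calc (θ * x) ^ (1 / 8 : ℝ) ≤ (θ * x) ^ (1 : ℝ) :=
              Real.rpow_le_rpow_of_exponent_le hu (by norm_num)
          _ ≤ B := by rwa [Real.rpow_one]
      have r3 := r2.trans em
      rw [div_le_iff₀ r1] at r3
      set N := θ * Af μ (1 / θ) with hN
      rw [abs_le] at k5
      have hn : N / 2 ≤ ‖1 - charFun μ θ‖ := by nlinarith
      have hR : Rf μ θ ≤ 4 * η * (x * B / Af μ x) := by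
        calc Rf μ θ = Qf μ θ / ‖1 - charFun μ θ‖ ^ 2 := rfl
          _ ≤ η * N / (N / 2) ^ 2 := by gcongr
          _ = 4 * η * (1 / N) := by field_simp; norm_num
          _ ≤ 4 * η * (x * B / Af μ x) := by
              gcongr 4 * η * ?_
              rw [div_le_div_iff₀ k1 hA]
              calc 1 * Af μ x ≤ 1 * (B * Af μ (1 / θ)) := by linarith
                _ ≤ (θ * x) * (B * Af μ (1 / θ)) := by gcongr
                _ = x * B * N := by rw [hN]; ring
      rw [Real.norm_eq_abs, abs_mul, abs_mul, abs_of_nonneg (tri_nonneg _ _),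
        abs_of_nonneg (Rf_nonneg _ _)]
      refine le_trans (mul_le_of_le_one_left (Rf_nonneg _ _) ?_) hR
      have := tri_le_one ha hθ0.le
      have t2 := Real.abs_cos_le_one (θ * x)
      have t3 := tri_nonneg a θ
      nlinarith [abs_nonneg (Real.cos (θ * x))]
    rw [Real.volume_real_Ioc_of_le hxB, Real.norm_eq_abs] at q
    refine q.trans ?_
    calc 4 * η * (x * B / Af μ x) * (B / x - 1 / x) ≤ 4 * η * (x * B / Af μ x) * (B / x) := by
          have : 0 < 1 / x := by positivity
          gcongr; linarith
      _ = 4 * B ^ 2 * η * (1 / Af μ x) := by field_simp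
      _ ≤ _ := by gcongr
  have hM0 := Mf_nonneg μ x
  have g3 : |(∫ θ in Ioc 0 (1 / x), V θ) - kap * Mf μ x| ≤ ε / 2 * Mf μ x :=
    g2.trans (by gcongr; exact min_le_left _ _)
  have g4 : (∫ θ in Ioc 0 (1 / x), V θ) ≤ (kap + 1) * Mf μ x := by
    have := (le_abs_self _).trans g2
    have : min (ε / 2) 1 * Mf μ x ≤ 1 * Mf μ x := by gcongr; exact min_le_right _ _
    linarith
  have g5 : 12 * η * (∫ θ in Ioc 0 (1 / x), V θ) ≤ 12 * η * ((kap + 1) * Mf μ x) := by gcongr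
  have g6 : η * D * Mf μ x ≤ ε / 2 * Mf μ x := by gcongr
  rw [hsp]
  rw [abs_le] at p1 p2 g3 ⊢
  rw [hD] at g6
  constructor <;> nlinarith

/-! ### The sine part and the inversion integral -/

theorem PotterAt.mono {μ : Measure ℝ} {T₀ T₁ : ℝ} (h : PotterAt μ T₀) (hT : T₀ ≤ T₁) :
    PotterAt μ T₁ :=
  ⟨h.1.trans hT, fun y u h1 h2 h3 => h.2 y u (hT.trans h1) h2 (hT.trans h3)⟩

theorem exists_setup {μ : Measure ℝ} [IsProbabilityMeasure μ]
    (hmean : ∫⁻ x, ENNReal.ofReal |x| ∂μ = ⊤) (harith : ¬ IsArith μ) (hHa : HaCond μ)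
    (hHb : HbCond μ) :
    ∃ T₀, Setup μ T₀ ∧ ∀ x ≥ T₀, rPlus μ x = (Mf μ x + 1 / Af μ x) / 2 := by
  obtain ⟨hA, T, hT, _, h2, h3⟩ := Af_facts hmean hHb
  obtain ⟨T', h'⟩ := exists_potterAt hHa
  refine ⟨max T T', ⟨harith, hHa, hA, h'.mono (le_max_right _ _), h2.mono_set
    (Ioi_subset_Ioi (le_max_left _ _)), fun x hx => (h3 x ((le_max_left _ _).trans hx)).2⟩,
    fun x hx => (h3 x ((le_max_left _ _).trans hx)).1⟩

/-- The imaginary part of `1/(1 - φ)` is asymptotic to `1/(θA(1/θ))`. -/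
theorem JN_lim {μ : Measure ℝ} [IsProbabilityMeasure μ] (hHa : HaCond μ)
    (hA : Tendsto (Af μ) atTop atTop) :
    Tendsto (fun θ => Jf μ θ * (θ * Af μ (1 / θ))) (𝓝[>] 0) (𝓝 1) := by
  have key : ∀ f : ℝ → ℝ, (∀ η : ℝ, 0 < η → ∃ T : ℝ, 1 ≤ T ∧ ∀ θ : ℝ, 0 < θ → θ ≤ 1 / T →
      0 < θ * Af μ (1 / θ) ∧ |f θ - θ * Af μ (1 / θ)| ≤ η * (θ * Af μ (1 / θ))) →
      Tendsto (fun θ => f θ / (θ * Af μ (1 / θ))) (𝓝[>] 0) (𝓝 1) := by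
    intro f hf
    rw [Metric.tendsto_nhds]
    intro ε hε
    obtain ⟨T, hT, h⟩ := hf (ε / 2) (by positivity)
    have hT0 : 0 < 1 / T := by positivity
    filter_upwards [Ioc_mem_nhdsGT hT0] with θ hθ
    obtain ⟨h1, h2⟩ := h θ hθ.1 hθ.2
    have e : f θ / (θ * Af μ (1 / θ)) - 1
        = (f θ - θ * Af μ (1 / θ)) / (θ * Af μ (1 / θ)) := by
      rw [sub_div, div_self h1.ne']
    rw [Real.dist_eq, e, abs_div, abs_of_pos h1]
    exact lt_of_le_of_lt ((div_le_iff₀ h1).2 h2) (by linarith)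
  have k1 := key (fun θ => (charFun μ θ).im) fun η hη => by
    obtain ⟨T, hT, h⟩ := near_zero hHa hA hη
    exact ⟨T, hT, fun θ h1 h2 => ⟨(h θ h1 h2).1, (h θ h1 h2).2.2.2.1⟩⟩
  have k2 := key (fun θ => ‖1 - charFun μ θ‖) fun η hη => by
    obtain ⟨T, hT, h⟩ := near_zero hHa hA hη
    exact ⟨T, hT, fun θ h1 h2 => ⟨(h θ h1 h2).1, (h θ h1 h2).2.2.2.2⟩⟩
  have := k1.div (k2.pow 2) (by norm_num)
  rw [one_pow, div_one] at this
  refine this.congr' ?_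
  obtain ⟨T, hT, h⟩ := near_zero hHa hA (η := 1 / 2) (by norm_num)
  have hT0 : 0 < 1 / T := by positivity
  filter_upwards [Ioc_mem_nhdsGT hT0] with θ hθ
  obtain ⟨h1, _, _, _, h5⟩ := h θ hθ.1 hθ.2
  rw [abs_le] at h5
  have : 0 < ‖1 - charFun μ θ‖ := by linarith
  simp only [Jf, Pi.div_apply]
  set N := θ * Af μ (1 / θ)
  field_simp

/-- The sine part of the frequencies below `B/x`, by the substitution `θ = u/x` and dominated convergence. -/
theorem L2 {μ : Measure ℝ} [IsProbabilityMeasure μ] {T₀ : ℝ} (S : Setup μ T₀) {a : ℝ}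
    (ha : 0 < a) {B : ℝ} (hB : 1 ≤ B) :
    Tendsto (fun x => Af μ x * ∫ θ in Ioc 0 (B / x), tri a θ * Real.sin (θ * x) * Jf μ θ)
      atTop (𝓝 (∫ u in Ioc 0 B, Real.sin u / u)) := by
  obtain ⟨T₂, hT₂, h2⟩ := near_zero S.ha S.top (η := 1 / 2) (by norm_num)
  have hT₀ := S.pot.1
  set F : ℝ → ℝ → ℝ := fun x u => Af μ x / x * (tri a (u / x) * Real.sin u * Jf μ (u / x)) with hF
  have heq : ∀ᶠ x in atTop, ∫ u in Ioc 0 B, F x u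
      = Af μ x * ∫ θ in Ioc 0 (B / x), tri a θ * Real.sin (θ * x) * Jf μ θ := by
    filter_upwards [eventually_gt_atTop 0] with x hx
    have := intervalIntegral.integral_comp_div (a := 0) (b := B)
      (fun θ => tri a θ * Real.sin (θ * x) * Jf μ θ) hx.ne'
    rw [zero_div, intervalIntegral.integral_of_le (by linarith),
      intervalIntegral.integral_of_le (by positivity)] at this
    have e : ∀ u, u / x * x = u := fun u => by field_simp
    simp only [e] at this
    rw [hF, integral_const_mul, this, smul_eq_mul]
    field_simp
  refine Tendsto.congr' heq ?_
  -- the integrand in a form where each factor has a limit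
  have hform : ∀ x u : ℝ, 0 < u → 0 < x → Af μ (x * u⁻¹) ≠ 0 →
      F x u = tri a (u / x) * (Real.sin u / u) * (Jf μ (u / x) * (u / x * Af μ (1 / (u / x))))
        * (Af μ x / Af μ (x * u⁻¹)) := by
    intro x u hu hx hne
    have e : 1 / (u / x) = x * u⁻¹ := by field_simp
    rw [e, hF]
    set z := Af μ (x * u⁻¹)
    field_simp
  have hbi : IntegrableOn (fun u : ℝ => 2 * (u ^ (-(1 / 8) : ℝ) + B)) (Ioc 0 B) := by
    have h1 : IntegrableOn (fun u : ℝ => u ^ (-(1 / 8) : ℝ)) (Ioc 0 B) :=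
      (intervalIntegral.intervalIntegrable_rpow' (by norm_num)).1
    have h3 : IntegrableOn (fun _ : ℝ => B) (Ioc 0 B) := integrable_const _
    exact (h1.add h3).const_mul 2
  refine tendsto_integral_filter_of_dominated_convergence _ ?_ ?_ hbi ?_
  · refine Eventually.of_forall fun x => Measurable.aestronglyMeasurable ?_
    have m1 : Measurable fun u : ℝ => tri a (u / x) := (tri_cont a).measurable.comp (by fun_prop)
    have m2 : Measurable fun u : ℝ => Jf μ (u / x) := (Jf_meas μ).comp (by fun_prop)
    exact ((m1.mul Real.measurable_sin).mul m2).const_mul _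
  · filter_upwards [eventually_ge_atTop T₀, eventually_ge_atTop (B * T₀),
      eventually_ge_atTop (B * T₂)] with x x1 x2 x3
    filter_upwards [ae_restrict_mem measurableSet_Ioc] with u hu
    have hx : 0 < x := by linarith
    have hu0 := hu.1
    have hT20 : 0 < T₂ := by linarith
    have hT00 : 0 < T₀ := by linarith
    have b2 : u / x ≤ 1 / T₂ := by
      rw [div_le_div_iff₀ hx hT20]; nlinarith [hu.2]
    have b0 : u / x ≤ 1 / T₀ := by
      rw [div_le_div_iff₀ hx hT00]; nlinarith [hu.2]
    have hθ : 0 < u / x := by positivity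
    obtain ⟨k1, _, _, _, k5⟩ := h2 _ hθ b2
    obtain ⟨r1, r2⟩ := S.pot.ratio x1 hθ b0
    have e : 1 / (u / x) = x * u⁻¹ := by field_simp
    have e2 : u / x * x = u := by field_simp
    rw [e, e2] at r2
    rw [e] at r1
    have hAx := S.pot.pos x1
    rw [hform x u hu.1 hx r1.ne']
    rw [abs_le] at k5
    set N := u / x * Af μ (1 / (u / x))
    have hJ : |Jf μ (u / x) * N| ≤ 2 := by
      rw [abs_mul, abs_of_pos k1]
      have hn : N / 2 ≤ ‖1 - charFun μ (u / x)‖ := by linarith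
      calc _ ≤ 1 / ‖1 - charFun μ (u / x)‖ * N := by gcongr; exact Jf_le _ _
        _ ≤ 1 / (N / 2) * N := by gcongr
        _ = 2 := by field_simp
    have hs : |Real.sin u / u| ≤ 1 := by
      rw [abs_div, div_le_one (by positivity)]; exact Real.abs_sin_le_abs
    have hr : (max u u⁻¹) ^ (1 / 8 : ℝ) ≤ u ^ (-(1 / 8) : ℝ) + B := by
      rcases le_total 1 u with h | h
      · rw [max_eq_left ((inv_le_one_of_one_le₀ h).trans h)]
        have : u ^ (1 / 8 : ℝ) ≤ B := by
          calc u ^ (1 / 8 : ℝ) ≤ u ^ (1 : ℝ) := Real.rpow_le_rpow_of_exponent_le h (by norm_num)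
            _ ≤ B := by rw [Real.rpow_one]; exact hu.2
        have : 0 ≤ u ^ (-(1 / 8) : ℝ) := by positivity
        linarith
      · rw [max_eq_right (h.trans ((one_le_inv₀ hu0).2 h)), Real.inv_rpow hu0.le,
          ← Real.rpow_neg hu0.le]
        linarith
    rw [Real.norm_eq_abs, abs_mul, abs_mul, abs_mul, abs_of_nonneg (tri_nonneg _ _),
      abs_of_pos (div_pos hAx r1)]
    calc _ ≤ 1 * 1 * 2 * (u ^ (-(1 / 8) : ℝ) + B) := by
          refine mul_le_mul (mul_le_mul (mul_le_mul (tri_le_one ha hθ.le) hs (abs_nonneg _)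
            zero_le_one) hJ (abs_nonneg _) (by norm_num)) (r2.trans hr) (by positivity) (by norm_num)
      _ = _ := by ring
  · filter_upwards [ae_restrict_mem measurableSet_Ioc] with u hu
    have hu0 := hu.1
    have t0 : Tendsto (fun x : ℝ => u / x) atTop (𝓝 0) := tendsto_const_nhds.div_atTop tendsto_id
    have t0' : Tendsto (fun x : ℝ => u / x) atTop (𝓝[>] 0) := by
      refine tendsto_nhdsWithin_iff.2 ⟨t0, ?_⟩
      filter_upwards [eventually_gt_atTop 0] with x hx
      exact div_pos hu0 hx
    have t1 : Tendsto (fun x : ℝ => tri a (u / x)) atTop (𝓝 1) := by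
      have := ((tri_cont a).tendsto 0).comp t0
      have e : tri a 0 = 1 := by simp [tri]
      rwa [e] at this
    have t2 := (JN_lim S.ha S.top).comp t0'
    have t3 := slow S.ha (inv_pos.2 hu0)
    have := ((t1.mul_const (Real.sin u / u)).mul t2).mul t3
    rw [one_mul, mul_one, mul_one] at this
    refine this.congr' ?_
    filter_upwards [eventually_gt_atTop 0, eventually_ge_atTop (T₀ * u)] with x hx hx2
    have : Af μ (x * u⁻¹) ≠ 0 := (S.pot.pos (by
      rw [← div_eq_mul_inv, le_div_iff₀ hu0]; exact hx2)).ne'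
    rw [hform x u hu0 hx this]
    rfl

/-- The Dirichlet integral equals `κ`, through integration by parts with primitive `1 - cos`. -/
theorem sinc_lim : Tendsto (fun B => ∫ u in Ioc 0 B, Real.sin u / u) atTop (𝓝 kap) := by
  have hi1 : ∀ B : ℝ, IntegrableOn (fun u : ℝ => Real.sin u / u) (Ioc 0 B) := fun B => by
    refine Integrable.mono' (g := fun _ => (1 : ℝ)) (integrable_const _)
      (by fun_prop : Measurable _).aestronglyMeasurable ?_
    filter_upwards [ae_restrict_mem measurableSet_Ioc] with u hu
    have := hu.1
    rw [Real.norm_eq_abs, abs_div, div_le_one (by positivity)]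
    exact Real.abs_sin_le_abs
  have hi2 : ∀ B : ℝ, IntegrableOn (fun u : ℝ => (1 - Real.cos u) / u ^ 2) (Ioc 0 B) := fun B =>
    kap_int.mono_set fun u hu => hu.1
  have key : ∀ B : ℝ, 0 < B → (∫ u in (0 : ℝ)..B, (1 - Real.cos u) / u ^ 2) + (1 - Real.cos B) / B
      = ∫ u in Ioc 0 B, Real.sin u / u := by
    intro B hB
    have := intervalIntegral.integral_eq_sub_of_hasDerivAt_of_le hB.le
      (f := fun u => (1 - Real.cos u) / u) (f' := fun u => Real.sin u / u - (1 - Real.cos u) / u ^ 2)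
      ?_ ?_ ?_
    · rw [intervalIntegral.integral_of_le hB.le, integral_sub (hi1 B) (hi2 B)] at this
      rw [intervalIntegral.integral_of_le hB.le]
      simp at this ⊢
      linarith
    · intro u hu
      rcases hu.1.eq_or_lt with h | h
      · subst h
        refine ContinuousAt.continuousWithinAt ?_
        rw [ContinuousAt, div_zero]
        have t : Tendsto (fun u : ℝ => |u| / 2) (𝓝 0) (𝓝 0) := by
          have : Continuous fun u : ℝ => |u| / 2 := by fun_prop
          simpa using this.tendsto 0
        refine squeeze_zero_norm (fun u => ?_) t
        rw [Real.norm_eq_abs, abs_div, abs_of_nonneg (one_sub_cos_nonneg u)]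
        rcases (abs_nonneg u).eq_or_lt with h0 | h0
        · rw [← h0]; simp
        · rw [div_le_iff₀ h0]
          have := one_sub_cos_le u
          nlinarith [sq_abs u]
      · refine ContinuousAt.continuousWithinAt (ContinuousAt.div (by fun_prop) (by fun_prop) h.ne')
    · intro u hu
      have h1 : HasDerivAt (fun u : ℝ => 1 - Real.cos u) (Real.sin u) u := by
        simpa using (Real.hasDerivAt_cos u).const_sub 1
      have h2 := h1.div (hasDerivAt_id u) hu.1.ne'
      refine h2.congr_deriv ?_
      have := hu.1.ne'
      simp only [id]
      field_simp
    · rw [intervalIntegrable_iff_integrableOn_Ioc_of_le hB.le]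
      exact (hi1 B).sub (hi2 B)
  have t1 := intervalIntegral_tendsto_integral_Ioi 0 kap_int tendsto_id
  have t2 : Tendsto (fun B : ℝ => (1 - Real.cos B) / B) atTop (𝓝 0) := by
    refine squeeze_zero' ?_ ?_ (tendsto_const_nhds.div_atTop tendsto_id : Tendsto (fun B : ℝ => 2 / B)
      atTop (𝓝 0))
    · filter_upwards [eventually_gt_atTop 0] with B hB
      exact div_nonneg (one_sub_cos_nonneg B) hB.le
    · filter_upwards [eventually_gt_atTop 0] with B hB
      gcongr; exact one_sub_cos_le_two B
  have := t1.add t2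
  rw [add_zero] at this
  refine this.congr' ?_
  filter_upwards [eventually_gt_atTop 0] with B hB using key B hB

/-- The main asymptotic evaluation of the inversion integral. -/
theorem W_lim {μ : Measure ℝ} [IsProbabilityMeasure μ] {T₀ : ℝ} (S : Setup μ T₀)
    (hr : ∀ x ≥ T₀, rPlus μ x = (Mf μ x + 1 / Af μ x) / 2) {a : ℝ} (ha : 0 < a) :
    Tendsto (fun x => (∫ θ in Ioc 0 a, (gf μ a x θ).re) / rPlus μ x) atTop (𝓝 (2 * kap)) := by
  obtain ⟨C, hC, hhf⟩ := high_freq S.arith S.ha S.top ha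
  rw [Metric.tendsto_nhds]
  intro ε hε
  set η := ε / 16 with hη
  have hη0 : 0 < η := by positivity
  have tB : Tendsto (fun B : ℝ => C * B ^ (-(1 / 4) : ℝ)) atTop (𝓝 0) := by
    simpa using (tendsto_rpow_neg_atTop (by norm_num : (0 : ℝ) < 1 / 4)).const_mul C
  -- `B` makes both the high-frequency remainder and the tail of the Dirichlet integral at most `η`
  obtain ⟨B, ⟨hB1, hB2⟩, hB3⟩ := (((eventually_ge_atTop (1 : ℝ)).and
    (tB.eventually (gt_mem_nhds hη0))).and
      (sinc_lim.eventually (Metric.closedBall_mem_nhds kap hη0))).exists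
  obtain ⟨T₁, hT₁, h1⟩ := L1 S ha hB1 hη0
  obtain ⟨T₂, hT₂, h2⟩ := hhf B hB1
  filter_upwards [(L2 S ha hB1).eventually (Metric.closedBall_mem_nhds _ hη0),
    eventually_ge_atTop T₁, eventually_ge_atTop T₂, eventually_ge_atTop (B / a)] with x g1 x1 x2 x3
  have hx0 : 0 < x := by linarith
  have hBa : B / x ≤ a := by rw [div_le_iff₀ hx0]; rwa [div_le_iff₀ ha, mul_comm] at x3
  have hxT : T₀ ≤ x := hT₁.trans x1
  have hBx : 0 < B / x := by positivity
  have hA := S.pot.pos hxT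
  have hM := S.inv_le x hxT
  have g2 := h1 x x1
  obtain ⟨_, g3⟩ := h2 x x2
  rw [Real.dist_eq] at g1 hB3
  have i1 : ∀ b, IntegrableOn (fun θ => (gf μ a x θ).re) (Ioc 0 b) := fun b => by
    simp only [gf_re]
    exact (cos_Rf_int S ha x b).add (sin_Jf_int S.arith S.ha S.top ha x b)
  set I1 := ∫ θ in Ioc 0 (B / x), tri a θ * Real.cos (θ * x) * Rf μ θ
  set I2 := ∫ θ in Ioc 0 (B / x), tri a θ * Real.sin (θ * x) * Jf μ θ
  have hsp : ∫ θ in Ioc 0 a, (gf μ a x θ).re = I1 + I2 + (∫ θ in (B / x)..a, gf μ a x θ).re := by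
    rw [← Ioc_union_Ioc_eq_Ioc hBx.le hBa,
      setIntegral_union (Ioc_disjoint_Ioc_of_le le_rfl) measurableSet_Ioc (i1 _)
        ((i1 a).mono_set (Ioc_subset_Ioc_left hBx.le))]
    congr 1
    · simp only [gf_re]
      exact integral_add (cos_Rf_int S ha x _) (sin_Jf_int S.arith S.ha S.top ha x _)
    · rw [intervalIntegral.integral_of_le hBa]
      have hii := gf_ii S.arith a x hBx ha (μ := μ)
      rw [intervalIntegrable_iff_integrableOn_Ioc_of_le hBa] at hii
      exact integral_re hii
  set G := ∫ θ in (B / x)..a, gf μ a x θ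
  have g4 : |G.re| ≤ η * (1 / Af μ x) := by
    refine (Complex.abs_re_le_norm _).trans (g3.trans ?_)
    rw [mul_one_div]; gcongr
  have g5 : |I2 - kap * (1 / Af μ x)| ≤ 2 * η * (1 / Af μ x) := by
    have e : I2 - kap * (1 / Af μ x) = (Af μ x * I2 - kap) * (1 / Af μ x) := by field_simp
    rw [e, abs_mul, abs_of_pos (by positivity : 0 < 1 / Af μ x)]
    gcongr
    rw [abs_le] at *
    constructor <;> linarith
  have hMp : 0 < 1 / Af μ x := by positivity
  have hrp : 0 < rPlus μ x := by rw [hr x hxT]; linarith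
  have hrM : Mf μ x ≤ 2 * rPlus μ x := by rw [hr x hxT]; linarith
  have e : (∫ θ in Ioc 0 a, (gf μ a x θ).re) / rPlus μ x - 2 * kap
      = ((∫ θ in Ioc 0 a, (gf μ a x θ).re) - kap * (Mf μ x + 1 / Af μ x)) / rPlus μ x := by
    rw [sub_div]; congr 1
    rw [eq_div_iff hrp.ne', hr x hxT]; ring
  rw [Real.dist_eq, e, abs_div, abs_of_pos hrp, div_lt_iff₀ hrp, hsp]
  have : |I1 + I2 + G.re - kap * (Mf μ x + 1 / Af μ x)| ≤ 4 * η * Mf μ x := by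
    have q : η * (1 / Af μ x) ≤ η * Mf μ x := by gcongr
    rw [abs_le] at *
    constructor <;> linarith
  have : 4 * η * Mf μ x ≤ 4 * η * (2 * rPlus μ x) := by gcongr
  have : 4 * η * (2 * rPlus μ x) = ε / 2 * rPlus μ x := by rw [hη]; ring
  nlinarith

/-! ### The kernel -/

/-- The Fejér-type kernel `∫₀^a (1 - θ/a) cos(θy) dθ = (1 - cos ay)/(ay²)`. -/
noncomputable def kf (a y : ℝ) : ℝ := ∫ θ in Ioc 0 a, tri a θ * Real.cos (θ * y)

theorem kf_eq {a y : ℝ} (ha : 0 < a) (hy : y ≠ 0) :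
    kf a y = (1 - Real.cos (a * y)) / (a * y ^ 2) := by
  have h1 : kf a y = ∫ θ in (0 : ℝ)..a, (1 - θ / a) * Real.cos (θ * y) := by
    rw [kf, intervalIntegral.integral_of_le ha.le]
    refine setIntegral_congr_fun measurableSet_Ioc fun θ hθ => ?_
    have : θ / a ≤ 1 := by rw [div_le_one ha]; exact hθ.2
    have e : tri a θ = 1 - θ / a := max_eq_left (by linarith)
    simp only [e]
  have hd : ∀ θ ∈ uIcc 0 a, HasDerivAt
      (fun θ => (1 - θ / a) * (Real.sin (θ * y) / y) - Real.cos (θ * y) / (a * y ^ 2))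
      ((1 - θ / a) * Real.cos (θ * y)) θ := by
    intro θ _
    have d0 : HasDerivAt (fun θ : ℝ => θ * y) y θ := by simpa using (hasDerivAt_id θ).mul_const y
    have d1 : HasDerivAt (fun θ : ℝ => 1 - θ / a) (-(1 / a)) θ := by
      simpa using ((hasDerivAt_id θ).div_const a).const_sub 1
    have d2 := (d0.sin.div_const y)
    have d3 := d0.cos.div_const (a * y ^ 2)
    refine ((d1.mul d2).sub d3).congr_deriv ?_
    field_simp
    ring
  rw [h1, intervalIntegral.integral_eq_sub_of_hasDerivAt hd (by
    apply Continuous.intervalIntegrable; fun_prop)]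
  rw [div_self ha.ne']
  simp
  ring

theorem kf_nonneg {a : ℝ} (ha : 0 < a) (y : ℝ) : 0 ≤ kf a y := by
  by_cases hy : y = 0
  · subst hy
    refine integral_nonneg fun θ => ?_
    simpa using tri_nonneg a θ
  · rw [kf_eq ha hy]
    exact div_nonneg (one_sub_cos_nonneg _) (by positivity)

theorem kf_meas {a : ℝ} (ha : 0 < a) : Measurable (kf a) := by
  have : kf a = fun y => if y = 0 then kf a 0 else (1 - Real.cos (a * y)) / (a * y ^ 2) := by
    funext y
    split_ifs with h
    · rw [h]
    · exact kf_eq ha h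
  rw [this]
  exact Measurable.ite (measurableSet_singleton 0) measurable_const (by fun_prop)

theorem kf_abs_le {a : ℝ} (ha : 0 < a) (y : ℝ) : |kf a y| ≤ a := by
  have := norm_setIntegral_le_of_norm_le_const (μ := volume) (s := Ioc 0 a) (C := 1)
    (f := fun θ => tri a θ * Real.cos (θ * y)) (by simp) (fun θ hθ => by
      rw [Real.norm_eq_abs, abs_mul, abs_of_nonneg (tri_nonneg _ _)]
      have := tri_le_one ha hθ.1.le
      have h2 := Real.abs_cos_le_one (θ * y)
      have h3 := tri_nonneg a θ
      nlinarith [abs_nonneg (Real.cos (θ * y))])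
  rw [Real.volume_real_Ioc_of_le ha.le] at this
  rw [kf]
  simpa using this

theorem kf_integral {a : ℝ} (ha : 0 < a) :
    Integrable (kf a) ∧ ∫ y, kf a y = 2 * kap := by
  have hae : ∀ᵐ y : ℝ, kf a y = a * ((fun u => (1 - Real.cos u) / u ^ 2) (a * y)) := by
    have : ∀ᵐ y : ℝ, y ≠ 0 := by simp [ae_iff]
    filter_upwards [this] with y hy
    rw [kf_eq ha hy]; field_simp
  have hI : Integrable (fun u : ℝ => (1 - Real.cos u) / u ^ 2) := by
    have h1 := kap_int
    have h2 : IntegrableOn (fun u : ℝ => (1 - Real.cos u) / u ^ 2) (Iio 0) := by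
      have := (Measure.measurePreserving_neg (volume : Measure ℝ)).integrableOn_comp_preimage
        (Homeomorph.neg ℝ).measurableEmbedding (s := Ioi 0)
        (f := fun u : ℝ => (1 - Real.cos u) / u ^ 2)
      have h3 := this.2 h1
      have e : (Neg.neg ⁻¹' Ioi (0 : ℝ)) = Iio 0 := by ext; simp
      rw [e] at h3
      refine h3.congr_fun (fun u _ => ?_) measurableSet_Iio
      simp [Function.comp]
    have := ((integrableOn_Iic_iff_integrableOn_Iio).2 h2).union h1
    rwa [Iic_union_Ioi, integrableOn_univ] at this
  have hval : ∫ u : ℝ, (1 - Real.cos u) / u ^ 2 = 2 * kap := by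
    have := integral_comp_abs (f := fun u : ℝ => (1 - Real.cos u) / u ^ 2)
    rw [kap, ← this]
    refine integral_congr_ae (ae_of_all _ fun u => ?_)
    simp only [Real.cos_abs, sq_abs]
  constructor
  · have := (hI.comp_mul_left' ha.ne').const_mul a
    exact this.congr (hae.mono fun y hy => hy.symm)
  · rw [integral_congr_ae hae, integral_const_mul,
      Measure.integral_comp_mul_left (fun u : ℝ => (1 - Real.cos u) / u ^ 2) a, hval, abs_inv,
      abs_of_pos ha, smul_eq_mul]
    field_simp

instance convPow_prob (μ : Measure ℝ) [IsProbabilityMeasure μ] (n : ℕ) :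
    IsProbabilityMeasure (convPow μ n) := by
  induction n with
  | zero => rw [convPow]; infer_instance
  | succ n ih =>
    rw [convPow]
    exact Measure.isProbabilityMeasure_map (by fun_prop)

theorem charFun_convPow (μ : Measure ℝ) [IsProbabilityMeasure μ] (n : ℕ) (θ : ℝ) :
    charFun (convPow μ n) θ = charFun μ θ ^ n := by
  induction n with
  | zero => rw [convPow]; simp
  | succ n ih =>
    rw [convPow, pow_succ, ← ih]
    exact charFun_conv (μ := convPow μ n) (ν := μ) θ

/-- Fourier inversion for the kernel against a probability measure. -/
theorem kf_expect {a : ℝ} (ha : 0 < a) (ν : Measure ℝ) [IsProbabilityMeasure ν] (x : ℝ) :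
    ∫ y, kf a (y - x) ∂ν = ∫ θ in Ioc 0 a, tri a θ *
      (Complex.exp (-(θ * x : ℝ) * Complex.I) * charFun ν θ).re := by
  have hin : ∀ θ : ℝ, (Complex.exp (-(θ * x : ℝ) * Complex.I) * charFun ν θ).re
      = ∫ y, Real.cos (θ * (y - x)) ∂ν := by
    intro θ
    rw [charFun_apply_real, ← integral_const_mul]
    have e : ∀ y : ℝ, Complex.exp (-(θ * x : ℝ) * Complex.I) * Complex.exp (θ * y * Complex.I)
        = Complex.exp ((θ * (y - x) : ℝ) * Complex.I) := fun y => by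
      rw [← Complex.exp_add]; congr 1; push_cast; ring
    simp only [e]
    have hi : Integrable (fun y : ℝ => Complex.exp ((θ * (y - x) : ℝ) * Complex.I)) ν := by
      refine Integrable.mono' (g := fun _ => (1 : ℝ)) (integrable_const _)
        (by fun_prop : Continuous _).aestronglyMeasurable (ae_of_all _ fun y => ?_)
      rw [Complex.norm_exp_ofReal_mul_I]
    have := integral_re hi
    refine Eq.trans this.symm ?_
    refine integral_congr_ae (ae_of_all _ fun y => ?_)
    simp only
    exact Complex.exp_ofReal_mul_I_re _
  simp only [hin, kf, ← integral_const_mul]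
  rw [integral_integral_swap]
  refine Integrable.mono' (g := fun _ => (1 : ℝ)) (integrable_const _) ?_ ?_
  · have : Continuous (Function.uncurry fun y θ : ℝ => tri a θ * Real.cos (θ * (y - x))) := by
      have := tri_cont a
      simp only [Function.uncurry_def]
      fun_prop
    exact this.aestronglyMeasurable
  · have : ∀ᵐ p : ℝ × ℝ ∂(ν.prod (volume.restrict (Ioc 0 a))), p.2 ∈ Ioc 0 a :=
      Measure.ae_prod_mem_iff_ae_ae_mem
        (measurable_snd measurableSet_Ioc) |>.2
        (ae_of_all _ fun y => ae_restrict_mem measurableSet_Ioc)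
    filter_upwards [this] with p hp
    rw [Function.uncurry_def, Real.norm_eq_abs, abs_mul, abs_of_nonneg (tri_nonneg _ _)]
    have := tri_le_one ha hp.1.le
    have h2 := Real.abs_cos_le_one (p.2 * (p.1 - x))
    have h3 := tri_nonneg a p.2
    nlinarith [abs_nonneg (Real.cos (p.2 * (p.1 - x)))]

/-! ### Fourier inversion by Abel summation -/

/-- The mass of the Lorentzian over the whole half-line is `π/(2k)`, whatever `s`. -/
theorem lorentz_integral {s k a : ℝ} (hs : 0 < s) (hk : 0 < k) (ha : 0 < a) :
    ∫ θ in Ioc 0 a, s / (s ^ 2 + k ^ 2 * θ ^ 2) ≤ Real.pi / (2 * k) := by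
  have hd : ∀ θ ∈ uIcc 0 a, HasDerivAt (fun θ => Real.arctan (k / s * θ) / k)
      (s / (s ^ 2 + k ^ 2 * θ ^ 2)) θ := by
    intro θ _
    have d0 : HasDerivAt (fun θ : ℝ => k / s * θ) (k / s) θ := by
      simpa using (hasDerivAt_id θ).const_mul (k / s)
    refine (d0.arctan.div_const k).congr_deriv ?_
    field_simp
  rw [← intervalIntegral.integral_of_le ha.le, intervalIntegral.integral_eq_sub_of_hasDerivAt hd
    (by
      apply Continuous.intervalIntegrable
      refine Continuous.div (by fun_prop) (by fun_prop) fun θ => ?_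
      positivity)]
  rw [mul_zero, Real.arctan_zero, zero_div, sub_zero, div_le_div_iff₀ hk (by positivity)]
  have := (Real.arctan_lt_pi_div_two (k / s * a)).le
  nlinarith

theorem charFun_norm_le (μ : Measure ℝ) [IsProbabilityMeasure μ] (θ : ℝ) : ‖charFun μ θ‖ ≤ 1 := by
  simpa using norm_charFun_le_one (μ := μ) θ

/-- `|1 - rφ|²`. -/
noncomputable def Df (μ : Measure ℝ) (r θ : ℝ) : ℝ := Complex.normSq (1 - r * charFun μ θ)

/-- The cross term `2r(1 - r) Re (1 - φ)` in `|(1 - r) + r(1 - φ)|²` is nonnegative. -/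
theorem Df_ge (μ : Measure ℝ) [IsProbabilityMeasure μ] {r : ℝ} (hr : 0 ≤ r) (hr1 : r ≤ 1) (θ : ℝ) :
    (1 - r) ^ 2 + r ^ 2 * ‖1 - charFun μ θ‖ ^ 2 ≤ Df μ r θ := by
  have hQ := Qf_nonneg μ θ
  rw [Qf_eq] at hQ
  rw [Df, ← Complex.normSq_eq_norm_sq, Complex.normSq_apply, Complex.normSq_apply]
  simp only [Complex.sub_re, Complex.sub_im, Complex.mul_re, Complex.mul_im, Complex.ofReal_re,
    Complex.ofReal_im, Complex.one_re, Complex.one_im] at *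
  nlinarith [mul_nonneg (mul_nonneg hr (sub_nonneg.2 hr1)) hQ]

/-- The Abel-regularised inversion integrand. -/
noncomputable def grf (μ : Measure ℝ) (a x r θ : ℝ) : ℝ :=
  tri a θ * (Complex.exp (-(θ * x : ℝ) * Complex.I) * (1 - r * charFun μ θ)⁻¹).re

/-- Fourier inversion for the Abel-regularised Green measure. -/
theorem abel_sum {μ : Measure ℝ} [IsProbabilityMeasure μ] {a : ℝ} (ha : 0 < a) (x : ℝ) {r : ℝ}
    (hr : 0 ≤ r) (hr1 : r < 1) :
    HasSum (fun n : ℕ => r ^ n * ∫ y, kf a (y - x) ∂(convPow μ n))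
      (∫ θ in Ioc 0 a, grf μ a x r θ) := by
  have e : ∀ n : ℕ, r ^ n * ∫ y, kf a (y - x) ∂(convPow μ n) = ∫ θ in Ioc 0 a, r ^ n * (tri a θ *
      (Complex.exp (-(θ * x : ℝ) * Complex.I) * charFun μ θ ^ n).re) := fun n => by
    rw [kf_expect ha, integral_const_mul]
    simp only [charFun_convPow]
  simp only [e]
  refine hasSum_integral_of_dominated_convergence (fun n _ => r ^ n) ?_ ?_ ?_ ?_ ?_
  · intro n
    have h1 := tri_cont a
    have h2 := charFun_cont μ
    have : Continuous fun θ : ℝ => r ^ n * (tri a θ *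
      (Complex.exp (-(θ * x : ℝ) * Complex.I) * charFun μ θ ^ n).re) := by fun_prop
    exact this.aestronglyMeasurable
  · intro n
    filter_upwards [ae_restrict_mem measurableSet_Ioc] with θ hθ
    rw [Real.norm_eq_abs, abs_mul, abs_mul, abs_of_nonneg (tri_nonneg _ _),
      abs_of_nonneg (pow_nonneg hr n)]
    refine mul_le_of_le_one_right (by positivity) ?_
    have h1 := tri_le_one ha hθ.1.le
    have h2 : |(Complex.exp (-(θ * x : ℝ) * Complex.I) * charFun μ θ ^ n).re| ≤ 1 := by
      refine (Complex.abs_re_le_norm _).trans ?_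
      rw [norm_mul, norm_exp_neg, one_mul, norm_pow]
      exact pow_le_one₀ (norm_nonneg _) (charFun_norm_le μ θ)
    exact mul_le_one₀ h1 (abs_nonneg _) h2
  · exact ae_of_all _ fun θ => summable_geometric_of_lt_one hr hr1
  · exact integrable_const _
  · refine ae_of_all _ fun θ => ?_
    have h1 : ‖(r : ℂ) * charFun μ θ‖ < 1 := by
      rw [norm_mul, Complex.norm_real, Real.norm_of_nonneg hr]
      nlinarith [charFun_norm_le μ θ, norm_nonneg (charFun μ θ)]
    have h2 := (hasSum_geometric_of_norm_lt_one h1).mul_left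
      (Complex.exp (-(θ * x : ℝ) * Complex.I))
    have h3 := (Complex.hasSum_re h2).mul_left (tri a θ)
    refine h3.congr_fun fun n => ?_
    rw [mul_pow, ← Complex.ofReal_pow, mul_left_comm (Complex.exp _), Complex.re_ofReal_mul]
    ring

theorem grf_eq (μ : Measure ℝ) [IsProbabilityMeasure μ] (a x r θ : ℝ) :
    grf μ a x r θ = tri a θ * (Real.cos (θ * x) * (r * Qf μ θ)
      + Real.sin (θ * x) * (r * (charFun μ θ).im)) / Df μ r θ
      + tri a θ * Real.cos (θ * x) * ((1 - r) / Df μ r θ) := by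
  have e1 : Complex.exp (-(θ * x : ℝ) * Complex.I) = (Real.cos (θ * x) : ℂ)
      - (Real.sin (θ * x) : ℂ) * Complex.I := by
    rw [← Complex.ofReal_neg, Complex.exp_mul_I, ← Complex.ofReal_cos, ← Complex.ofReal_sin,
      Real.cos_neg, Real.sin_neg]; push_cast; ring
  rw [grf, e1, Complex.inv_def, Qf_eq, ← Df]
  simp only [Complex.mul_re, Complex.mul_im, Complex.sub_re, Complex.sub_im, Complex.ofReal_re,
    Complex.ofReal_im, Complex.I_re, Complex.I_im, Complex.conj_re, Complex.conj_im,
    Complex.one_re, Complex.one_im]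
  ring

theorem Df_cont (μ : Measure ℝ) [IsProbabilityMeasure μ] :
    Continuous fun p : ℝ × ℝ => Df μ p.1 p.2 := by
  have := charFun_cont μ
  unfold Df
  exact Complex.continuous_normSq.comp (by fun_prop)

/-- No atom at zero in the limit `r ↑ 1`. Since `A → ∞`, for each `k` one has `|1 - φ(θ)| ≥ 2kθ` near zero, so the
Poisson-type density `(1 - r)/|1 - rφ|²` has mass of order `1/k` there. -/
theorem q_lim {μ : Measure ℝ} [IsProbabilityMeasure μ] {T₀ : ℝ} (S : Setup μ T₀) {a : ℝ}
    (ha : 0 < a) (x : ℝ) :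
    Tendsto (fun r => ∫ θ in Ioc 0 a, tri a θ * Real.cos (θ * x) * ((1 - r) / Df μ r θ))
      (𝓝[<] 1) (𝓝 0) := by
  obtain ⟨C, hC, hCn⟩ := theta_le S.arith S.ha S.top a
  rw [Metric.tendsto_nhds]
  intro ε hε
  set k := Real.pi / ε with hk
  have hk0 : 0 < k := div_pos Real.pi_pos hε
  obtain ⟨T₁, hT₁, h1⟩ := near_zero S.ha S.top (η := 1 / 2) (by norm_num)
  obtain ⟨T₂, hT₂⟩ := (tendsto_atTop.1 S.top (4 * k)).exists_forall_of_atTop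
  set T := max T₁ T₂
  have hT0 : 0 < T := lt_of_lt_of_le (by linarith) (le_max_left _ _)
  have hT10 : 0 < T₁ := by linarith
  have hsmall : ∀ θ, 0 < θ → θ ≤ 1 / T → 2 * k * θ ≤ ‖1 - charFun μ θ‖ := by
    intro θ h0 hθ
    obtain ⟨_, _, _, _, h5⟩ := h1 θ h0 (hθ.trans (by gcongr; exact le_max_left _ _))
    have hT : T ≤ 1 / θ := by rw [le_div_iff₀ h0]; rwa [le_div_iff₀ hT0, mul_comm] at hθ
    have := hT₂ (1 / θ) ((le_max_right _ _).trans hT)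
    rw [abs_le] at h5
    nlinarith
  set D := 4 * C ^ 2 * T ^ 2 with hD
  have t1 : Tendsto (fun r : ℝ => (1 - r) * D * a) (𝓝[<] 1) (𝓝 0) := by
    have : Continuous fun r : ℝ => (1 - r) * D * a := by fun_prop
    have := this.tendsto 1
    simp only [sub_self, zero_mul] at this
    exact this.mono_left nhdsWithin_le_nhds
  filter_upwards [t1.eventually (gt_mem_nhds (half_pos hε)), Ioo_mem_nhdsLT (by norm_num :
    (1 / 2 : ℝ) < 1)] with r hr1 hr
  set s := 1 - r with hs
  have hs0 : 0 < s := by rw [hs]; linarith [hr.2]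
  have i1 : IntegrableOn (fun θ : ℝ => s / (s ^ 2 + k ^ 2 * θ ^ 2)) (Ioc 0 a) := by
    refine (Continuous.integrableOn_Icc ?_).mono_set Ioc_subset_Icc_self
    refine Continuous.div (by fun_prop) (by fun_prop) fun θ => ?_
    positivity
  have i2 : IntegrableOn (fun _ : ℝ => s * D) (Ioc 0 a) := integrable_const _
  have hb : ‖∫ θ in Ioc 0 a, tri a θ * Real.cos (θ * x) * (s / Df μ r θ)‖
      ≤ ∫ θ in Ioc 0 a, (s / (s ^ 2 + k ^ 2 * θ ^ 2) + s * D) := by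
    refine norm_integral_le_of_norm_le (i1.add i2) ?_
    filter_upwards [ae_restrict_mem measurableSet_Ioc] with θ hθ
    have hθ0 := hθ.1
    have hD1 : s ^ 2 + ‖1 - charFun μ θ‖ ^ 2 / 4 ≤ Df μ r θ := by
      refine le_trans ?_ (Df_ge μ (by linarith [hr.1]) hr.2.le θ)
      have : 1 / 4 ≤ r ^ 2 := by nlinarith [hr.1]
      nlinarith [sq_nonneg ‖1 - charFun μ θ‖]
    have hD0 : 0 < Df μ r θ := lt_of_lt_of_le (by positivity) hD1
    have h2 : |tri a θ * Real.cos (θ * x)| ≤ 1 := by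
      rw [abs_mul, abs_of_nonneg (tri_nonneg _ _)]
      exact mul_le_one₀ (tri_le_one ha hθ.1.le) (abs_nonneg _) (Real.abs_cos_le_one _)
    rw [Real.norm_eq_abs, abs_mul, abs_of_pos (div_pos hs0 hD0)]
    refine (mul_le_of_le_one_left (div_pos hs0 hD0).le h2).trans ?_
    rcases le_total θ (1 / T) with h | h
    · have h3 := hsmall θ hθ.1 h
      have h4 : k ^ 2 * θ ^ 2 ≤ ‖1 - charFun μ θ‖ ^ 2 / 4 := by
        have : (2 * k * θ) ^ 2 ≤ ‖1 - charFun μ θ‖ ^ 2 := by gcongr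
        nlinarith
      have h5 : s / Df μ r θ ≤ s / (s ^ 2 + k ^ 2 * θ ^ 2) := by
        gcongr; linarith
      have : 0 ≤ s * D := by positivity
      linarith
    · have h3 := hCn θ hθ.1 hθ.2
      have h4 : 1 / D ≤ Df μ r θ := by
        have h5 : 1 / T ≤ C * ‖1 - charFun μ θ‖ := h.trans h3
        have h6 : (1 / T) ^ 2 ≤ (C * ‖1 - charFun μ θ‖) ^ 2 := by gcongr
        have h7 : 1 / D ≤ ‖1 - charFun μ θ‖ ^ 2 / 4 := by
          rw [hD, div_le_iff₀ (by positivity)]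
          rw [div_pow, one_pow, div_le_iff₀ (by positivity)] at h6
          nlinarith
        nlinarith [sq_nonneg s]
      have h5 : s / Df μ r θ ≤ s * D := by
        have hDp : 0 < D := by positivity
        rw [div_le_iff₀ hD0]
        rw [div_le_iff₀ hDp] at h4
        nlinarith
      have : 0 ≤ s / (s ^ 2 + k ^ 2 * θ ^ 2) := by positivity
      linarith
  rw [integral_add i1 i2] at hb
  have hl := lorentz_integral hs0 hk0 ha
  have e1 : Real.pi / (2 * k) = ε / 2 := by rw [hk]; have := Real.pi_pos; field_simp
  have e2 : ∫ _ in Ioc 0 a, s * D = s * D * a := by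
    rw [setIntegral_const, Real.volume_real_Ioc_of_le ha.le]; simp; ring
  rw [dist_zero_right]
  linarith

/-- Passage to the limit `r ↑ 1`: the part without the factor `1 - r` is dominated, up to a constant, by
`Re 1/(1 - φ)` plus a constant, and the rest vanishes by `q_lim`. -/
theorem grf_lim {μ : Measure ℝ} [IsProbabilityMeasure μ] {T₀ : ℝ} (S : Setup μ T₀) {a : ℝ}
    (ha : 0 < a) (x : ℝ) :
    Tendsto (fun r => ∫ θ in Ioc 0 a, grf μ a x r θ) (𝓝[<] 1)
      (𝓝 (∫ θ in Ioc 0 a, (gf μ a x θ).re)) := by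
  obtain ⟨C, hC, hCn⟩ := theta_le S.arith S.ha S.top a
  set p : ℝ → ℝ → ℝ := fun r θ => tri a θ * (Real.cos (θ * x) * (r * Qf μ θ)
      + Real.sin (θ * x) * (r * (charFun μ θ).im)) / Df μ r θ with hp
  have hDm : ∀ r, Continuous (fun θ => Df μ r θ) := fun r =>
    (Df_cont μ).comp (by fun_prop : Continuous fun θ : ℝ => (r, θ))
  have hpm : ∀ r, Measurable (p r) := fun r => by
    have h1 := tri_cont a
    have h2 := charFun_cont μ
    have h3 := Qf_cont μ
    have h4 : Continuous fun θ => tri a θ * (Real.cos (θ * x) * (r * Qf μ θ)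
      + Real.sin (θ * x) * (r * (charFun μ θ).im)) := by fun_prop
    exact h4.measurable.div (hDm r).measurable
  have hpos : ∀ θ ∈ Ioc 0 a, 0 < ‖1 - charFun μ θ‖ := fun θ hθ =>
    norm_pos_iff.2 (sub_ne_zero.2 (nonarith_ne_one S.arith hθ.1).symm)
  have hi : IntegrableOn (fun θ => 4 * Rf μ θ + 4 * C * |x|) (Ioc 0 a) := by
    have h1 : IntegrableOn (fun _ : ℝ => 4 * C * |x|) (Ioc 0 a) := integrable_const _
    exact ((Rf_int S a).const_mul 4).add h1
  have hb : ∀ r ∈ Ioo (1 / 2 : ℝ) 1, ∀ᵐ θ ∂(volume.restrict (Ioc 0 a)),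
      ‖p r θ‖ ≤ 4 * Rf μ θ + 4 * C * |x| := by
    intro r hr
    filter_upwards [ae_restrict_mem measurableSet_Ioc] with θ hθ
    have hn := hpos θ hθ
    have hθ0 := hθ.1
    set n := ‖1 - charFun μ θ‖ with hnd
    have hD1 : n ^ 2 / 4 ≤ Df μ r θ := by
      refine le_trans ?_ (Df_ge μ (by linarith [hr.1]) hr.2.le θ)
      have : 1 / 4 ≤ r ^ 2 := by nlinarith [hr.1]
      nlinarith [sq_nonneg n, sq_nonneg (1 - r)]
    have hIm : |(charFun μ θ).im| ≤ n := by
      have := Complex.abs_im_le_norm (1 - charFun μ θ)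
      simpa using this
    have hr0 : 0 ≤ r := by linarith [hr.1]
    have hnum : |tri a θ * (Real.cos (θ * x) * (r * Qf μ θ)
        + Real.sin (θ * x) * (r * (charFun μ θ).im))| ≤ Qf μ θ + θ * |x| * n := by
      rw [abs_mul, abs_of_nonneg (tri_nonneg _ _)]
      refine (mul_le_of_le_one_left (abs_nonneg _) (tri_le_one ha hθ.1.le)).trans ?_
      refine (abs_add_le _ _).trans (add_le_add ?_ ?_)
      · rw [abs_mul, abs_mul, abs_of_nonneg (Qf_nonneg μ θ), abs_of_nonneg hr0]
        refine (mul_le_of_le_one_left (mul_nonneg hr0 (Qf_nonneg _ _)) (Real.abs_cos_le_one _)).trans ?_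
        exact mul_le_of_le_one_left (Qf_nonneg _ _) hr.2.le
      · rw [abs_mul, abs_mul, abs_of_nonneg hr0]
        refine mul_le_mul ?_ ?_ (by positivity) (by positivity)
        · refine Real.abs_sin_le_abs.trans ?_
          rw [abs_mul, abs_of_pos hθ0]
        · exact (mul_le_of_le_one_left (abs_nonneg _) hr.2.le).trans hIm
    have hDn : 0 ≤ Df μ r θ := Complex.normSq_nonneg _
    rw [hp, Real.norm_eq_abs, abs_div, abs_of_nonneg hDn]
    calc _ ≤ (Qf μ θ + θ * |x| * n) / (n ^ 2 / 4) := by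
          gcongr
          exact (abs_nonneg _).trans hnum
      _ = 4 * (Qf μ θ / n ^ 2) + 4 * (θ / n) * |x| := by field_simp
      _ ≤ 4 * Rf μ θ + 4 * C * |x| := by
          have : θ / n ≤ C := by rw [div_le_iff₀ hn]; exact hCn θ hθ.1 hθ.2
          rw [Rf]; gcongr
  have hnear : Ioo (1 / 2 : ℝ) 1 ∈ 𝓝[<] (1 : ℝ) := Ioo_mem_nhdsLT (by norm_num)
  have hplim : Tendsto (fun r => ∫ θ in Ioc 0 a, p r θ) (𝓝[<] 1)
      (𝓝 (∫ θ in Ioc 0 a, (gf μ a x θ).re)) := by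
    refine tendsto_integral_filter_of_dominated_convergence _
      (Eventually.of_forall fun r => (hpm r).aestronglyMeasurable) ?_ hi ?_
    · filter_upwards [hnear] with r hr using hb r hr
    · filter_upwards [ae_restrict_mem measurableSet_Ioc] with θ hθ
      have hn := hpos θ hθ
      have hD1 : Df μ 1 θ = ‖1 - charFun μ θ‖ ^ 2 := by
        rw [Df, ← Complex.normSq_eq_norm_sq]; simp
      have hc : ContinuousAt (fun r => p r θ) 1 := by
        refine ContinuousAt.div (by fun_prop) ?_ (by rw [hD1]; positivity)
        exact ((Df_cont μ).comp (by fun_prop : Continuous fun r : ℝ => (r, θ))).continuousAt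
      have e : p 1 θ = (gf μ a x θ).re := by
        rw [gf_re, hp, Rf, Jf]
        simp only [hD1]
        ring
      rw [← e]
      exact hc.tendsto.mono_left nhdsWithin_le_nhds
  have := hplim.add (q_lim S ha x)
  rw [add_zero] at this
  refine this.congr' ?_
  filter_upwards [hnear] with r hr
  have hip : IntegrableOn (p r) (Ioc 0 a) := hi.mono' (hpm r).aestronglyMeasurable (hb r hr)
  have hiq : IntegrableOn (fun θ => tri a θ * Real.cos (θ * x) * ((1 - r) / Df μ r θ))
      (Ioc 0 a) := by
    have h1r : 0 < 1 - r := by linarith [hr.2]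
    have hD0 : ∀ θ, (1 - r) ^ 2 ≤ Df μ r θ := fun θ => by
      refine le_trans ?_ (Df_ge μ (by linarith [hr.1]) hr.2.le θ)
      have : 0 ≤ r ^ 2 * ‖1 - charFun μ θ‖ ^ 2 := by positivity
      linarith
    refine (Continuous.integrableOn_Icc ?_).mono_set Ioc_subset_Icc_self
    have := tri_cont a
    refine (by fun_prop : Continuous fun θ => tri a θ * Real.cos (θ * x)).mul
      (continuous_const.div (hDm r) fun θ => ?_)
    have : 0 < (1 - r) ^ 2 := by positivity
    exact (this.trans_le (hD0 θ)).ne'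
  rw [← integral_add hip hiq]
  simp only [grf_eq, hp]

/-- The inversion formula for the Green measure against the kernel. -/
theorem green_kf {μ : Measure ℝ} [IsProbabilityMeasure μ] {T₀ : ℝ} (S : Setup μ T₀) {a : ℝ}
    (ha : 0 < a) (x : ℝ) :
    HasSum (fun n : ℕ => ∫ y, kf a (y - x) ∂(convPow μ n)) (∫ θ in Ioc 0 a, (gf μ a x θ).re) := by
  set E : ℕ → ℝ := fun n => ∫ y, kf a (y - x) ∂(convPow μ n) with hE
  have hE0 : ∀ n, 0 ≤ E n := fun n => integral_nonneg fun y => kf_nonneg ha _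
  set L := ∫ θ in Ioc 0 a, (gf μ a x θ).re
  have hlim := grf_lim S ha x
  have hnear : Ioo (0 : ℝ) 1 ∈ 𝓝[<] (1 : ℝ) := Ioo_mem_nhdsLT (by norm_num)
  have hpart : ∀ N : ℕ, ∑ n ∈ Finset.range N, E n ≤ L := by
    intro N
    have t1 : Tendsto (fun r : ℝ => ∑ n ∈ Finset.range N, r ^ n * E n) (𝓝[<] 1)
        (𝓝 (∑ n ∈ Finset.range N, E n)) := by
      have : Continuous fun r : ℝ => ∑ n ∈ Finset.range N, r ^ n * E n := by fun_prop
      have := this.tendsto 1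
      simp only [one_pow, one_mul] at this
      exact this.mono_left nhdsWithin_le_nhds
    refine le_of_tendsto_of_tendsto t1 hlim ?_
    filter_upwards [hnear] with r hr
    have hs := abel_sum (μ := μ) ha x hr.1.le hr.2
    exact sum_le_hasSum _ (fun n _ => mul_nonneg (pow_nonneg hr.1.le n) (hE0 n)) hs
  have hsum : Summable E := summable_of_sum_range_le hE0 hpart
  have hle : ∑' n, E n ≤ L := Real.tsum_le_of_sum_range_le hE0 hpart
  have hge : L ≤ ∑' n, E n := by
    refine le_of_tendsto hlim ?_
    filter_upwards [hnear] with r hr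
    have hs := abel_sum (μ := μ) ha x hr.1.le hr.2
    rw [← hs.tsum_eq]
    refine hs.summable.tsum_le_tsum (fun n => ?_) hsum
    exact mul_le_of_le_one_left (hE0 n) (pow_le_one₀ hr.1.le hr.2.le)
  rw [← le_antisymm hle hge]
  exact hsum.hasSum

/-! ### Smoothing -/

/-- The Green measure as a genuine measure. -/
noncomputable def Um (μ : Measure ℝ) : Measure ℝ := Measure.sum (convPow μ)

theorem Um_apply (μ : Measure ℝ) {s : Set ℝ} (hs : MeasurableSet s) : Um μ s = renewal μ s :=
  Measure.sum_apply _ hs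

instance Um_sfinite (μ : Measure ℝ) [IsProbabilityMeasure μ] : SFinite (Um μ) := by
  unfold Um; infer_instance

/-- The inversion integral `W_a(x) = ∫₀^a Re g`. -/
noncomputable def Wf (μ : Measure ℝ) (a x : ℝ) : ℝ := ∫ θ in Ioc 0 a, (gf μ a x θ).re

/-- The inversion formula, as an integral against the Green measure. -/
theorem lintegral_Um_kf {μ : Measure ℝ} [IsProbabilityMeasure μ] {T₀ : ℝ} (S : Setup μ T₀)
    {a : ℝ} (ha : 0 < a) (x : ℝ) :
    ∫⁻ y, ENNReal.ofReal (kf a (y - x)) ∂(Um μ) = ENNReal.ofReal (Wf μ a x) := by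
  have hs := green_kf S ha x
  rw [Um, lintegral_sum_measure, Wf, ← hs.tsum_eq,
    ENNReal.ofReal_tsum_of_nonneg (fun n => integral_nonneg fun y => kf_nonneg ha _) hs.summable]
  congr 1
  funext n
  have hm : Measurable fun y => kf a (y - x) := (kf_meas ha).comp (by fun_prop)
  refine (ofReal_integral_eq_lintegral_ofReal ?_ (ae_of_all _ fun y => kf_nonneg ha _)).symm
  exact Integrable.mono' (g := fun _ => a) (integrable_const _) hm.aestronglyMeasurable
    (ae_of_all _ fun y => kf_abs_le ha _)

theorem kf_scale {a y : ℝ} (ha : 0 < a) (hy : y ≠ 0) : kf a y = a * kf 1 (a * y) := by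
  rw [kf_eq ha hy, kf_eq one_pos (mul_ne_zero ha.ne' hy)]
  field_simp

/-- The mass of the kernel concentrates in `(-δ, δ)` as `a → ∞`. -/
theorem kf_core {δ : ℝ} (hδ : 0 < δ) :
    Tendsto (fun a => ∫ v in (-δ)..δ, kf a v) atTop (𝓝 (2 * kap)) := by
  obtain ⟨h1, h2⟩ := kf_integral one_pos
  have t1 : Tendsto (fun a : ℝ => a * (-δ)) atTop atBot :=
    tendsto_id.atTop_mul_const_of_neg (by linarith)
  have t2 : Tendsto (fun a : ℝ => a * δ) atTop atTop := tendsto_id.atTop_mul_const hδ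
  have := intervalIntegral_tendsto_integral h1 t1 t2
  rw [h2] at this
  refine this.congr' ?_
  filter_upwards [eventually_gt_atTop 0] with a ha
  have e := intervalIntegral.mul_integral_comp_mul_left (a := -δ) (b := δ) (f := kf 1) (c := a)
  rw [← e, ← intervalIntegral.integral_const_mul]
  refine intervalIntegral.integral_congr_ae ?_
  have : ∀ᵐ y : ℝ, y ≠ 0 := by simp [ae_iff]
  filter_upwards [this] with y hy _
  exact (kf_scale ha hy).symm

theorem lintegral_kf_sub {a : ℝ} (ha : 0 < a) (z : ℝ) :
    ∫⁻ s, ENNReal.ofReal (kf a (z - s)) = ENNReal.ofReal (2 * kap) := by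
  rw [lintegral_sub_left_eq_self (fun v => ENNReal.ofReal (kf a v)) z,
    ← (kf_integral ha).2,
    ofReal_integral_eq_lintegral_ofReal (kf_integral ha).1 (ae_of_all _ fun y => kf_nonneg ha y)]

theorem kf_le_inv_sq {a y : ℝ} (ha : 0 < a) (hy : y ≠ 0) : kf a y ≤ 2 / (a * y ^ 2) := by
  rw [kf_eq ha hy]; gcongr; exact one_sub_cos_le_two _

theorem kf_one_ge (z : ℝ) : (1 - Real.cos z) / (1 + z ^ 2) ≤ kf 1 z := by
  by_cases hz : z = 0
  · subst hz; simpa using kf_nonneg one_pos 0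
  · rw [kf_eq one_pos hz, one_mul, one_mul]
    exact div_le_div_of_nonneg_left (one_sub_cos_nonneg _) (by positivity) (by linarith)

/-- Two shifted kernels together dominate the Cauchy weight; a single one vanishes on a lattice. -/
theorem cauchy_le : ∃ C : ℝ, 0 < C ∧ ∀ z : ℝ, 1 / (1 + z ^ 2) ≤ C * (kf 1 z + kf 1 (z - 1)) := by
  set c := 2 - 2 * Real.cos (1 / 2) with hc
  have hc0 : 0 < c := by
    have := Real.cos_lt_cos_of_nonneg_of_le_pi (x := 0) (y := 1 / 2) le_rfl
      (by linarith [Real.pi_gt_three]) (by norm_num)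
    rw [Real.cos_zero] at this
    linarith
  refine ⟨3 / c, by positivity, fun z => ?_⟩
  have h1 := kf_one_ge z
  have h2 := kf_one_ge (z - 1)
  have h3 : (1 - Real.cos z) / (3 * (1 + z ^ 2)) ≤ (1 - Real.cos z) / (1 + z ^ 2) :=
    div_le_div_of_nonneg_left (one_sub_cos_nonneg _) (by positivity) (by nlinarith)
  have h4 : (1 - Real.cos (z - 1)) / (3 * (1 + z ^ 2)) ≤ (1 - Real.cos (z - 1)) / (1 + (z - 1) ^ 2) :=
    div_le_div_of_nonneg_left (one_sub_cos_nonneg _) (by positivity) (by nlinarith [sq_nonneg (z + 1)])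
  have h5 : c ≤ (1 - Real.cos z) + (1 - Real.cos (z - 1)) := by
    have e1 : Real.cos z + Real.cos (z - 1) = 2 * Real.cos (z - 1 / 2) * Real.cos (1 / 2) := by
      rw [Real.cos_add_cos]
      congr 2 <;> ring_nf
    have e2 : 0 ≤ Real.cos (1 / 2) := Real.cos_nonneg_of_mem_Icc
      ⟨by linarith [Real.pi_gt_three], by linarith [Real.pi_gt_three]⟩
    have e3 := Real.cos_le_one (z - 1 / 2)
    nlinarith
  have h6 : c / (3 * (1 + z ^ 2)) ≤ kf 1 z + kf 1 (z - 1) := by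
    calc c / (3 * (1 + z ^ 2)) ≤ ((1 - Real.cos z) + (1 - Real.cos (z - 1))) / (3 * (1 + z ^ 2)) := by
          gcongr
      _ = (1 - Real.cos z) / (3 * (1 + z ^ 2)) + (1 - Real.cos (z - 1)) / (3 * (1 + z ^ 2)) :=
          add_div _ _ _
      _ ≤ _ := by linarith
  calc 1 / (1 + z ^ 2) = 3 / c * (c / (3 * (1 + z ^ 2))) := by field_simp
    _ ≤ _ := by gcongr

/-- Majorant of the smoothed kernel by an indicator plus an `O(1/a)` error. -/
theorem smooth_le {δ h : ℝ} (hδ : 0 < δ) (hh : 0 < h) : ∃ C : ℝ, 0 < C ∧ ∀ a : ℝ, 0 < a → ∀ z : ℝ,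
    ∫⁻ s in Ioo 0 h, ENNReal.ofReal (kf a (z - s)) ≤
      (Ioc (-δ) (h + δ)).indicator (fun _ => ENNReal.ofReal (2 * kap)) z +
        ENNReal.ofReal (C / a) * (ENNReal.ofReal (kf 1 z) + ENNReal.ofReal (kf 1 (z - 1))) := by
  obtain ⟨C₀, hC₀, hC⟩ := cauchy_le
  set C₁ := (1 + 2 * h ^ 2) / δ ^ 2 + 2 with hC₁
  have hC₁0 : 0 < C₁ := by positivity
  refine ⟨2 * C₁ * C₀ * h, by positivity, fun a ha z => ?_⟩
  by_cases hz : z ∈ Ioc (-δ) (h + δ)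
  · rw [indicator_of_mem hz]
    refine le_add_right ?_
    rw [← lintegral_kf_sub ha z]
    exact setLIntegral_le_lintegral _ _
  · rw [indicator_of_notMem hz, zero_add,
      ← ENNReal.ofReal_add (kf_nonneg one_pos _) (kf_nonneg one_pos _),
      ← ENNReal.ofReal_mul (by positivity)]
    have hpt : ∀ s ∈ Ioo 0 h, kf a (z - s) ≤ 2 * C₁ * C₀ / a * (kf 1 z + kf 1 (z - 1)) := by
      intro s hs
      have hd : δ ^ 2 ≤ (z - s) ^ 2 := by
        rw [mem_Ioc, not_and_or, not_lt, not_le] at hz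
        rcases hz with hz | hz
        · nlinarith [hs.1]
        · nlinarith [hs.2]
      have hne : z - s ≠ 0 := by
        intro h0; rw [h0] at hd; nlinarith
      refine (kf_le_inv_sq ha hne).trans ?_
      have h1 : 1 + z ^ 2 ≤ C₁ * (z - s) ^ 2 := by
        have e : (1 + 2 * h ^ 2) ≤ (1 + 2 * h ^ 2) / δ ^ 2 * (z - s) ^ 2 := by
          rw [div_mul_eq_mul_div, le_div_iff₀ (by positivity)]; gcongr
        have e2 : s ^ 2 ≤ h ^ 2 := by have := hs.1; have := hs.2; nlinarith
        have e3 : z ^ 2 ≤ 2 * (z - s) ^ 2 + 2 * s ^ 2 := by nlinarith [sq_nonneg (z - 2 * s)]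
        rw [hC₁, add_mul]; linarith
      have hp : 0 < (z - s) ^ 2 := by positivity
      have h2 : 1 / (z - s) ^ 2 ≤ C₁ * (1 / (1 + z ^ 2)) := by
        rw [mul_one_div, div_le_div_iff₀ hp (by positivity)]; linarith
      calc 2 / (a * (z - s) ^ 2) = 2 / a * (1 / (z - s) ^ 2) := by field_simp
        _ ≤ 2 / a * (C₁ * (C₀ * (kf 1 z + kf 1 (z - 1)))) := by
            gcongr; exact h2.trans (by gcongr; exact hC z)
        _ = _ := by ring
    calc ∫⁻ s in Ioo 0 h, ENNReal.ofReal (kf a (z - s))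
        ≤ ∫⁻ s in Ioo 0 h, ENNReal.ofReal (2 * C₁ * C₀ / a * (kf 1 z + kf 1 (z - 1))) :=
          setLIntegral_mono' measurableSet_Ioo fun s hs => ENNReal.ofReal_le_ofReal (hpt s hs)
      _ = _ := by
          rw [setLIntegral_const, Real.volume_Ioo, sub_zero, ← ENNReal.ofReal_mul' hh.le]
          congr 1; ring

/-- Minorant: the kernel smoothed over a slightly larger window covers the interval. -/
theorem le_smooth {δ h a z : ℝ} (hδ : 0 < δ) (ha : 0 < a) (hz : z ∈ Ioc 0 h) :
    ENNReal.ofReal (∫ v in (-δ)..δ, kf a v) ≤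
      ∫⁻ s in Ioo (-δ) (h + δ), ENNReal.ofReal (kf a (z - s)) := by
  have h1 : ENNReal.ofReal (∫ v in (-δ)..δ, kf a v) = ∫⁻ v in Ioc (-δ) δ, ENNReal.ofReal (kf a v) := by
    rw [intervalIntegral.integral_of_le (by linarith)]
    exact ofReal_integral_eq_lintegral_ofReal (kf_integral ha).1.integrableOn
      (ae_of_all _ fun y => kf_nonneg ha y)
  rw [h1, ← setLIntegral_congr Ioo_ae_eq_Ioc, ← lintegral_indicator measurableSet_Ioo,
    ← lintegral_indicator measurableSet_Ioo,
    ← lintegral_sub_left_eq_self ((Ioo (-δ) δ).indicator fun v => ENNReal.ofReal (kf a v)) z]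
  refine lintegral_mono fun s => ?_
  by_cases hs : z - s ∈ Ioo (-δ) δ
  · rw [indicator_of_mem hs, indicator_of_mem]
    exact ⟨by linarith [hs.2, hz.1], by linarith [hs.1, hz.2]⟩
  · rw [indicator_of_notMem hs]; exact bot_le

/-- Integral of the kernel smoothed over a window against the Green measure. -/
theorem Um_fubini {μ : Measure ℝ} [IsProbabilityMeasure μ] {T₀ : ℝ} (S : Setup μ T₀)
    {a : ℝ} (ha : 0 < a) (x u v : ℝ) :
    ∫⁻ y, (∫⁻ s in Ioo u v, ENNReal.ofReal (kf a (y - x - s))) ∂(Um μ)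
      = ∫⁻ s in Ioo u v, ENNReal.ofReal (Wf μ a (x + s)) := by
  rw [lintegral_lintegral_swap]
  · refine lintegral_congr fun s => ?_
    rw [← lintegral_Um_kf S ha]
    simp only [sub_sub]
  · have := kf_meas ha
    have : Measurable (Function.uncurry fun y s => ENNReal.ofReal (kf a (y - x - s))) :=
      ((kf_meas ha).comp (by fun_prop : Measurable fun p : ℝ × ℝ => p.1 - x - p.2)).ennreal_ofReal
    exact this.aemeasurable

/-! ### From the kernel to intervals -/

/-- Translation regularity: `r₊` is eventually almost constant on windows of bounded length. -/
theorem rPlus_shift {μ : Measure ℝ} [IsProbabilityMeasure μ] {T₀ : ℝ} (S : Setup μ T₀)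
    (hr : ∀ x ≥ T₀, rPlus μ x = (Mf μ x + 1 / Af μ x) / 2) (s : ℝ) {ε : ℝ} (hε : 0 < ε) :
    ∃ T, ∀ x ≥ T, ∀ y ∈ Icc x (x + s), 0 < rPlus μ x ∧ rPlus μ y ≤ rPlus μ x ∧
      (1 - ε) * rPlus μ x ≤ rPlus μ y := by
  obtain ⟨T₁, hT₁, h1⟩ := Ha_bound S.ha one_pos
  refine ⟨max (max T₀ T₁) (2 * |s| / ε), fun x hx y hy => ?_⟩
  have hx0 : T₀ ≤ x := (le_max_left _ _).trans ((le_max_left _ _).trans hx)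
  have hx1 : T₁ ≤ x := (le_max_right _ _).trans ((le_max_left _ _).trans hx)
  have hx2 : 2 * |s| / ε ≤ x := (le_max_right _ _).trans hx
  have hxp : 0 < x := by linarith
  have hApos := S.pot.pos hx0
  have hM := Mf_nonneg μ x
  have hrx : 0 < rPlus μ x := by rw [hr x hx0]; positivity
  have hrM : Mf μ x ≤ 2 * rPlus μ x := by
    have : 0 < 1 / Af μ x := by positivity
    rw [hr x hx0]; linarith
  have hHi : IntegrableOn (fun t => Hf μ t / (Af μ t) ^ 2) (Ioi x) :=
    S.int.mono_set (Ioi_subset_Ioi hx0)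
  have htm : Measurable fun t => tailF μ t / (Af μ t) ^ 2 :=
    (tail_anti μ).measurable.div ((Af_cont μ).measurable.pow_const 2)
  have htH : ∀ t, x < t → tailF μ t / (Af μ t) ^ 2 ≤ Hf μ t / (Af μ t) ^ 2 := by
    intro t ht
    have : tailF μ t ≤ Hf μ t := by
      rw [Hf_eq μ (by linarith), tailF]; linarith [ENNReal.toReal_nonneg (a := μ (Iio (-t)))]
    gcongr
  have ht0 : ∀ t, 0 ≤ tailF μ t / (Af μ t) ^ 2 := fun t =>
    div_nonneg ENNReal.toReal_nonneg (sq_nonneg _)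
  have hti : IntegrableOn (fun t => tailF μ t / (Af μ t) ^ 2) (Ioi x) := by
    refine Integrable.mono' hHi htm.aestronglyMeasurable ?_
    filter_upwards [ae_restrict_mem measurableSet_Ioi] with t ht
    rw [Real.norm_eq_abs, abs_of_nonneg (ht0 t)]
    exact htH t ht
  have hsplit : rPlus μ x = (∫ t in Ioc x y, tailF μ t / (Af μ t) ^ 2) + rPlus μ y := by
    rw [rPlus, rPlus, ← Ioc_union_Ioi_eq_Ioi hy.1, setIntegral_union
      (Ioc_disjoint_Ioi le_rfl) measurableSet_Ioi (hti.mono_set Ioc_subset_Ioi_self)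
      (hti.mono_set (Ioi_subset_Ioi hy.1))]
  have hI0 : 0 ≤ ∫ t in Ioc x y, tailF μ t / (Af μ t) ^ 2 := integral_nonneg fun t => ht0 t
  have hI1 : (∫ t in Ioc x y, tailF μ t / (Af μ t) ^ 2) ≤ (y - x) * (Mf μ x / x) := by
    calc (∫ t in Ioc x y, tailF μ t / (Af μ t) ^ 2) ≤ ∫ t in Ioc x y, Mf μ x / x := by
          refine setIntegral_mono_on (hti.mono_set Ioc_subset_Ioi_self)
            (integrableOn_const (by simp)) measurableSet_Ioc fun t ht => ?_
          refine (htH t ht.1).trans ?_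
          obtain ⟨a1, -, a3⟩ := h1 t (by linarith [ht.1])
          have htp : 0 < t := hxp.trans ht.1
          have b1 : Hf μ t / (Af μ t) ^ 2 ≤ 1 / Af μ t / t := by
            rw [div_div, div_le_div_iff₀ (by positivity) (by positivity)]
            nlinarith
          have b2 : 1 / Af μ t ≤ Mf μ x := by
            refine (S.inv_le t (hx0.trans ht.1.le)).trans ?_
            exact setIntegral_mono_set hHi
              (ae_of_all _ fun u => div_nonneg (Hf_nonneg μ u) (sq_nonneg _))
              (Ioi_subset_Ioi ht.1.le).eventuallyLE
          refine b1.trans ?_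
          gcongr
          exact ht.1.le
      _ = (y - x) * (Mf μ x / x) := by
          rw [setIntegral_const, smul_eq_mul, Real.volume_real_Ioc_of_le hy.1]
  have hI2 : (y - x) * (Mf μ x / x) ≤ ε * rPlus μ x := by
    have c1 : y - x ≤ |s| := by linarith [hy.2, le_abs_self s]
    have c2 : 2 * |s| ≤ x * ε := by rwa [div_le_iff₀ hε] at hx2
    calc (y - x) * (Mf μ x / x) ≤ |s| * (2 * rPlus μ x / x) := by gcongr
      _ = 2 * |s| / x * rPlus μ x := by ring
      _ ≤ ε * rPlus μ x := by
          gcongr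
          rw [div_le_iff₀ hxp]; linarith
  exact ⟨hrx, by linarith, by linarith⟩

/-- `W_lim` as two-sided bounds. -/
theorem Wf_bounds {μ : Measure ℝ} [IsProbabilityMeasure μ] {T₀ : ℝ} (S : Setup μ T₀)
    (hr : ∀ x ≥ T₀, rPlus μ x = (Mf μ x + 1 / Af μ x) / 2) {a ε : ℝ} (ha : 0 < a) (hε : 0 < ε) :
    ∃ T, ∀ x ≥ T, 2 * kap * (1 - ε) * rPlus μ x ≤ Wf μ a x ∧
      Wf μ a x ≤ 2 * kap * (1 + ε) * rPlus μ x := by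
  have hk := kap_pos
  have h := W_lim S hr ha
  have h1 := (tendsto_order.1 h).1 (2 * kap * (1 - ε)) (by nlinarith)
  have h2 := (tendsto_order.1 h).2 (2 * kap * (1 + ε)) (by nlinarith)
  obtain ⟨T₁, h3⟩ := rPlus_shift S hr 0 one_pos
  obtain ⟨T, hT⟩ := ((h1.and h2).and (eventually_ge_atTop T₁)).exists_forall_of_atTop
  refine ⟨T, fun x hx => ?_⟩
  obtain ⟨⟨e1, e2⟩, e3⟩ := hT x hx
  have hp := (h3 x e3 x ⟨le_rfl, by simp⟩).1
  exact ⟨((lt_div_iff₀ hp).1 e1).le, ((div_lt_iff₀ hp).1 e2).le⟩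

/-- Upper bound for the renewal mass of an interval, and its finiteness. -/
theorem renewal_upper {μ : Measure ℝ} [IsProbabilityMeasure μ] {T₀ : ℝ} (S : Setup μ T₀)
    (hr : ∀ x ≥ T₀, rPlus μ x = (Mf μ x + 1 / Af μ x) / 2) {h ε : ℝ} (hh : 0 < h) (hε : 0 < ε)
    (hε1 : ε < 1) :
    ∀ᶠ x in atTop, renewal μ (Ioc x (x + h)) ≠ ⊤ ∧
      (1 - ε) ^ 2 * (renewal μ (Ioc x (x + h))).toReal ≤ (h + 2 * ε) * (1 + ε) * rPlus μ x := by
  have hk := kap_pos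
  obtain ⟨a, hI, ha⟩ := (((tendsto_order.1 (kf_core hε)).1 (2 * kap * (1 - ε)) (by nlinarith)).and
    (eventually_gt_atTop 0)).exists
  obtain ⟨T₁, h1⟩ := rPlus_shift S hr (h + 2 * ε) hε
  obtain ⟨T₂, h2⟩ := Wf_bounds S hr ha hε
  filter_upwards [eventually_ge_atTop (T₁ + ε), eventually_ge_atTop (T₂ + ε)] with x hx1 hx2
  set R := rPlus μ (x - ε) with hR
  have key : ENNReal.ofReal (∫ v in (-ε)..ε, kf a v) * renewal μ (Ioc x (x + h)) ≤
      ENNReal.ofReal (2 * kap * (1 + ε) * R * (h + 2 * ε)) := by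
    calc ENNReal.ofReal (∫ v in (-ε)..ε, kf a v) * renewal μ (Ioc x (x + h))
        = ∫⁻ y in Ioc x (x + h), ENNReal.ofReal (∫ v in (-ε)..ε, kf a v) ∂(Um μ) := by
          rw [setLIntegral_const, Um_apply μ measurableSet_Ioc]
      _ ≤ ∫⁻ y in Ioc x (x + h),
            (∫⁻ s in Ioo (-ε) (h + ε), ENNReal.ofReal (kf a (y - x - s))) ∂(Um μ) :=
          setLIntegral_mono' measurableSet_Ioc fun y hy =>
            le_smooth hε ha ⟨by linarith [hy.1], by linarith [hy.2]⟩
      _ ≤ ∫⁻ y, (∫⁻ s in Ioo (-ε) (h + ε), ENNReal.ofReal (kf a (y - x - s))) ∂(Um μ) :=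
          setLIntegral_le_lintegral _ _
      _ = ∫⁻ s in Ioo (-ε) (h + ε), ENNReal.ofReal (Wf μ a (x + s)) := Um_fubini S ha x _ _
      _ ≤ ∫⁻ s in Ioo (-ε) (h + ε), ENNReal.ofReal (2 * kap * (1 + ε) * R) := by
          refine setLIntegral_mono' measurableSet_Ioo fun s hs => ENNReal.ofReal_le_ofReal ?_
          refine (h2 (x + s) (by linarith [hs.1])).2.trans ?_
          gcongr
          exact (h1 (x - ε) (by linarith) (x + s) ⟨by linarith [hs.1], by linarith [hs.2]⟩).2.1
      _ = _ := by
          rw [setLIntegral_const, Real.volume_Ioo, ← ENNReal.ofReal_mul' (by linarith)]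
          congr 1; ring
  have hIp : 0 < ∫ v in (-ε)..ε, kf a v := by nlinarith
  have hfin : renewal μ (Ioc x (x + h)) ≠ ⊤ := by
    intro htop
    rw [htop, ENNReal.mul_top (by simpa using hIp)] at key
    exact absurd key (by simp)
  refine ⟨hfin, ?_⟩
  obtain ⟨r1, -, r3⟩ := h1 (x - ε) (by linarith) x ⟨by linarith, by linarith⟩
  have key2 := ENNReal.toReal_mono ENNReal.ofReal_ne_top key
  rw [ENNReal.toReal_mul, ENNReal.toReal_ofReal hIp.le, ENNReal.toReal_ofReal (by positivity)] at key2
  set U := (renewal μ (Ioc x (x + h))).toReal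
  have hU : 0 ≤ U := ENNReal.toReal_nonneg
  have k3 : 2 * kap * ((1 - ε) * U) ≤ 2 * kap * ((1 + ε) * R * (h + 2 * ε)) := by nlinarith
  have k4 := le_of_mul_le_mul_left k3 (by positivity)
  calc (1 - ε) ^ 2 * U = (1 - ε) * ((1 - ε) * U) := by ring
    _ ≤ (1 - ε) * ((1 + ε) * R * (h + 2 * ε)) :=
        mul_le_mul_of_nonneg_left k4 (by linarith)
    _ = (h + 2 * ε) * (1 + ε) * ((1 - ε) * R) := by ring
    _ ≤ _ := by gcongr

/-- Lower bound: the smoothed kernel is at most the indicator of a slightly larger interval plus tails of order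
`1/a`, and the tails have small mass because kernels with `a = 1` dominate them. -/
theorem renewal_lower_aux {μ : Measure ℝ} [IsProbabilityMeasure μ] {T₀ : ℝ} (S : Setup μ T₀)
    (hr : ∀ x ≥ T₀, rPlus μ x = (Mf μ x + 1 / Af μ x) / 2) {h ε : ℝ} (hh : 0 < h) (hε : 0 < ε)
    (hε1 : ε < 1) :
    ∃ T, ∀ x ≥ T, ENNReal.ofReal (h * ((1 - ε) ^ 2 - ε) * rPlus μ x) ≤
      renewal μ (Ioc (x - ε) (x + h + ε)) := by
  have hk := kap_pos
  obtain ⟨C, hC, hsm⟩ := smooth_le hε hh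
  -- `a` is chosen so that the two correction terms, each at most `4κ r(x) C/a`, stay below `2κεh r(x)`
  set a := 4 * C / (ε * h) with ha_def
  have ha : 0 < a := by positivity
  obtain ⟨T₁, h1⟩ := rPlus_shift S hr (h + 1) hε
  obtain ⟨T₂, h2⟩ := Wf_bounds S hr ha hε
  obtain ⟨T₃, h3⟩ := Wf_bounds S hr one_pos hε
  refine ⟨max T₁ (max T₂ T₃), fun x hx => ?_⟩
  have hx1 : T₁ ≤ x := (le_max_left _ _).trans hx
  have hx2 : T₂ ≤ x := (le_max_left _ _).trans ((le_max_right _ _).trans hx)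
  have hx3 : T₃ ≤ x := (le_max_right _ _).trans ((le_max_right _ _).trans hx)
  set R := rPlus μ x with hR
  have hR0 : 0 < R := (h1 x hx1 x ⟨le_rfl, by linarith⟩).1
  have low : ENNReal.ofReal (2 * kap * (1 - ε) * ((1 - ε) * R) * h) ≤
      ∫⁻ y, (∫⁻ s in Ioo 0 h, ENNReal.ofReal (kf a (y - x - s))) ∂(Um μ) := by
    rw [Um_fubini S ha]
    calc ENNReal.ofReal (2 * kap * (1 - ε) * ((1 - ε) * R) * h)
        = ∫⁻ s in Ioo 0 h, ENNReal.ofReal (2 * kap * (1 - ε) * ((1 - ε) * R)) := by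
          rw [setLIntegral_const, Real.volume_Ioo, sub_zero, ← ENNReal.ofReal_mul' hh.le]
      _ ≤ _ := by
          refine setLIntegral_mono' measurableSet_Ioo fun s hs => ENNReal.ofReal_le_ofReal ?_
          refine le_trans ?_ (h2 (x + s) (by linarith [hs.1])).1
          have : 0 ≤ 2 * kap * (1 - ε) := mul_nonneg (by positivity) (by linarith)
          exact mul_le_mul_of_nonneg_left
            (h1 x hx1 (x + s) ⟨by linarith [hs.1], by linarith [hs.2]⟩).2.2 this
  have hm : ∀ c : ℝ, Measurable fun y => ENNReal.ofReal (kf 1 (y - c)) := fun c =>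
    ((kf_meas one_pos).comp (by fun_prop : Measurable fun y : ℝ => y - c)).ennreal_ofReal
  have hm2 : Measurable fun y => ENNReal.ofReal (kf 1 (y - x)) +
      ENNReal.ofReal (kf 1 (y - (x + 1))) := (hm x).add (hm (x + 1))
  have up : ∫⁻ y, (∫⁻ s in Ioo 0 h, ENNReal.ofReal (kf a (y - x - s))) ∂(Um μ) ≤
      ENNReal.ofReal (2 * kap) * renewal μ (Ioc (x - ε) (x + h + ε)) +
        ENNReal.ofReal (2 * kap * ε * h * R) := by
    have e0 : ∀ y, (Ioc (-ε) (h + ε)).indicator (fun _ => ENNReal.ofReal (2 * kap)) (y - x) =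
        (Ioc (x - ε) (x + h + ε)).indicator (fun _ => ENNReal.ofReal (2 * kap)) y := by
      intro y
      by_cases hy : y ∈ Ioc (x - ε) (x + h + ε)
      · rw [indicator_of_mem hy, indicator_of_mem]
        exact ⟨by linarith [hy.1], by linarith [hy.2]⟩
      · rw [indicator_of_notMem hy, indicator_of_notMem]
        exact fun hc => hy ⟨by linarith [hc.1], by linarith [hc.2]⟩
    calc ∫⁻ y, (∫⁻ s in Ioo 0 h, ENNReal.ofReal (kf a (y - x - s))) ∂(Um μ)
        ≤ ∫⁻ y, ((Ioc (x - ε) (x + h + ε)).indicator (fun _ => ENNReal.ofReal (2 * kap)) y +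
          ENNReal.ofReal (C / a) * (ENNReal.ofReal (kf 1 (y - x)) +
            ENNReal.ofReal (kf 1 (y - (x + 1))))) ∂(Um μ) := by
          refine lintegral_mono fun y => ?_
          rw [← e0, ← sub_sub]
          exact hsm a ha (y - x)
      _ = ENNReal.ofReal (2 * kap) * renewal μ (Ioc (x - ε) (x + h + ε)) +
          ENNReal.ofReal (C / a) * (ENNReal.ofReal (Wf μ 1 x) + ENNReal.ofReal (Wf μ 1 (x + 1))) := by
          rw [lintegral_add_left (measurable_const.indicator measurableSet_Ioc),
            lintegral_indicator_const measurableSet_Ioc, Um_apply μ measurableSet_Ioc,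
            lintegral_const_mul _ hm2, lintegral_add_left (hm _),
            lintegral_Um_kf S one_pos, lintegral_Um_kf S one_pos]
      _ ≤ _ := by
          gcongr
          have w1 : Wf μ 1 x ≤ 4 * kap * R := by
            refine (h3 x hx3).2.trans ?_
            have : 2 * kap * (1 + ε) ≤ 4 * kap := by nlinarith
            gcongr
          have w2 : Wf μ 1 (x + 1) ≤ 4 * kap * R := by
            refine (h3 (x + 1) (by linarith)).2.trans ?_
            have q1 : 2 * kap * (1 + ε) ≤ 4 * kap := by nlinarith
            have q2 := (h1 x hx1 (x + 1) ⟨by linarith, by linarith⟩).2.1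
            calc 2 * kap * (1 + ε) * rPlus μ (x + 1) ≤ 2 * kap * (1 + ε) * R := by gcongr
              _ ≤ _ := by gcongr
          calc ENNReal.ofReal (C / a) * (ENNReal.ofReal (Wf μ 1 x) + ENNReal.ofReal (Wf μ 1 (x + 1)))
              ≤ ENNReal.ofReal (C / a) * (ENNReal.ofReal (4 * kap * R) +
                ENNReal.ofReal (4 * kap * R)) := by gcongr
            _ = ENNReal.ofReal (2 * kap * ε * h * R) := by
                rw [← ENNReal.ofReal_add (by positivity) (by positivity),
                  ← ENNReal.ofReal_mul (by positivity)]
                congr 1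
                rw [ha_def]; field_simp; ring
  by_cases htop : renewal μ (Ioc (x - ε) (x + h + ε)) = ⊤
  · rw [htop]; exact le_top
  rw [← ENNReal.ofReal_toReal htop] at up ⊢
  set U := (renewal μ (Ioc (x - ε) (x + h + ε))).toReal
  have hU : 0 ≤ U := ENNReal.toReal_nonneg
  have key := low.trans up
  rw [← ENNReal.ofReal_mul (by positivity), ← ENNReal.ofReal_add (by positivity) (by positivity),
    ENNReal.ofReal_le_ofReal_iff (by positivity)] at key
  refine ENNReal.ofReal_le_ofReal ?_
  refine le_of_mul_le_mul_left (a := 2 * kap) ?_ (by positivity)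
  nlinarith

/-- `renewal_lower_aux` recentred on `(x, x + h]`. -/
theorem renewal_lower {μ : Measure ℝ} [IsProbabilityMeasure μ] {T₀ : ℝ} (S : Setup μ T₀)
    (hr : ∀ x ≥ T₀, rPlus μ x = (Mf μ x + 1 / Af μ x) / 2) {h ε : ℝ} (hε : 0 < ε)
    (hε1 : ε < 1) (hεh : 2 * ε < h) (hε2 : ε ≤ (1 - ε) ^ 2) :
    ∀ᶠ x in atTop, ENNReal.ofReal ((h - 2 * ε) * ((1 - ε) ^ 2 - ε) * (1 - ε) * rPlus μ x) ≤
      renewal μ (Ioc x (x + h)) := by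
  obtain ⟨T₁, h1⟩ := renewal_lower_aux S hr (h := h - 2 * ε) (by linarith) hε hε1
  obtain ⟨T₂, h2⟩ := rPlus_shift S hr ε hε
  filter_upwards [eventually_ge_atTop T₁, eventually_ge_atTop T₂] with x hx1 hx2
  have e := h1 (x + ε) (by linarith)
  have e2 := (h2 x hx2 (x + ε) ⟨by linarith, le_rfl⟩).2.2
  rw [show x + ε - ε = x by ring, show x + ε + (h - 2 * ε) + ε = x + h by ring] at e
  refine le_trans (ENNReal.ofReal_le_ofReal ?_) e
  rw [mul_assoc _ (1 - ε)]
  exact mul_le_mul_of_nonneg_left e2 (mul_nonneg (by linarith) (by linarith))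

/-- Main theorem, positive direction: under (Ha) and (Hb), for non-arithmetic `F`,
`U(x, x+h]/h = r₊(x)(1+o(1))` as `x → +∞`, for each `h > 0`. -/
theorem stmt19 (μ : Measure ℝ) [IsProbabilityMeasure μ]
    (hmean : ∫⁻ x, ENNReal.ofReal |x| ∂μ = ⊤)
    (harith : ¬ IsArith μ)
    (hHa : HaCond μ) (hHb : HbCond μ) :
    ∀ h : ℝ, 0 < h →
      Tendsto (fun x => (renewal μ (Set.Ioc x (x + h))).toReal / (h * rPlus μ x))
        atTop (𝓝 1) := by
  intro h hh
  obtain ⟨T₀, S, hr⟩ := exists_setup hmean harith hHa hHb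
  obtain ⟨T₁, hpos⟩ := rPlus_shift S hr 0 one_pos
  have hsmall : ∀ᶠ ε : ℝ in 𝓝[>] 0, 0 < ε ∧ ε < 1 ∧ 2 * ε < h ∧ ε ≤ (1 - ε) ^ 2 := by
    have q : ∀ᶠ ε : ℝ in 𝓝[>] 0, ε < min (1 / 4) (h / 2) :=
      eventually_nhdsWithin_of_eventually_nhds (gt_mem_nhds (by positivity))
    filter_upwards [self_mem_nhdsWithin, q] with ε e1 e2
    have e3 := e2.trans_le (min_le_left _ _)
    have e4 := e2.trans_le (min_le_right _ _)
    exact ⟨e1, by linarith, by linarith, by nlinarith⟩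
  rw [tendsto_order]
  constructor
  · intro b hb
    have hlim : Tendsto (fun ε : ℝ => (h - 2 * ε) * ((1 - ε) ^ 2 - ε) * (1 - ε)) (𝓝[>] 0) (𝓝 h) := by
      have : Continuous fun ε : ℝ => (h - 2 * ε) * ((1 - ε) ^ 2 - ε) * (1 - ε) := by fun_prop
      have := this.tendsto 0
      norm_num at this
      exact this.mono_left nhdsWithin_le_nhds
    obtain ⟨ε, ⟨h0, h1, h2, h3⟩, h4⟩ :=
      (hsmall.and ((tendsto_order.1 hlim).1 (b * h) (by nlinarith))).exists
    filter_upwards [renewal_lower S hr h0 h1 h2 h3, renewal_upper S hr hh h0 h1,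
      eventually_ge_atTop T₁] with x e1 e2 e3
    have hp := (hpos x e3 x ⟨le_rfl, by simp⟩).1
    have e4 := (ENNReal.ofReal_le_iff_le_toReal e2.1).1 e1
    rw [lt_div_iff₀ (by positivity)]
    nlinarith
  · intro b hb
    have hlim : Tendsto (fun ε : ℝ => (h + 2 * ε) * (1 + ε) / (1 - ε) ^ 2) (𝓝[>] 0) (𝓝 h) := by
      have : ContinuousAt (fun ε : ℝ => (h + 2 * ε) * (1 + ε) / (1 - ε) ^ 2) 0 :=
        ContinuousAt.div (by fun_prop) (by fun_prop) (by norm_num)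
      have := this.tendsto
      norm_num at this
      exact this.mono_left nhdsWithin_le_nhds
    obtain ⟨ε, ⟨h0, h1, -, -⟩, h4⟩ :=
      (hsmall.and ((tendsto_order.1 hlim).2 (b * h) (by nlinarith))).exists
    filter_upwards [renewal_upper S hr hh h0 h1, eventually_ge_atTop T₁] with x e2 e3
    have hp := (hpos x e3 x ⟨le_rfl, by simp⟩).1
    have hq : 0 < (1 - ε) ^ 2 := by have : 0 < 1 - ε := by linarith
                                    positivity
    rw [div_lt_iff₀ hq] at h4
    rw [div_lt_iff₀ (by positivity)]
    refine lt_of_mul_lt_mul_left (e2.2.trans_lt ?_) hq.le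
    nlinarith
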